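/- Let $1<\alpha,\beta<\infty$ and $0<p\leqslant q<\infty$ with $q\geqslant 2$ and $\beta p\leqslant\alpha q$. Then for all positive integers $m,n$ and every complex polynomial $P\in\mathbb{C}[z_1,\dots,z_n]$ of degree $m$, $\|P\|_{A_\beta^q(\mathbb{D}^n)}\leqslant\left(\sqrt{\tfrac{\alpha q}{\beta p}}\right)^m\|P\|_{A_\alpha^p(\mathbb{D}^n)}$. -/

import Mathlib

open MeasureTheory Metric

/-- The weighted Bergman measure `dA_α(z) = (α-1)(1-|z|²)^(α-2) dA(z)` on the unit disk,
where `dA = dx dy / π` is the normalized area measure. -/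
noncomputable def bergmanMeasure (α : ℝ) : Measure ℂ :=
  ((volume : Measure ℂ).restrict (ball (0 : ℂ) 1)).withDensity
    fun z => ENNReal.ofReal ((α - 1) * (1 - ‖z‖ ^ 2) ^ (α - 2) / Real.pi)

/-- The product Bergman measure `dA_α(z₁) ⋯ dA_α(zₙ)` on the polydisc. -/
noncomputable def bergmanMeasurePi (n : ℕ) (α : ℝ) : Measure (Fin n → ℂ) :=
  Measure.pi fun _ => bergmanMeasure α

section

open Set

/-- Recovery of a compactly supported function from its radial derivative. -/
theorem integral_fderiv_radial_zero {φ : ℂ → ℝ} (hφ : ContDiff ℝ 1 φ) (hc : HasCompactSupport φ) :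
    ∫ w, fderiv ℝ φ w w / ‖w‖ ^ 2 = -(2 * Real.pi) * φ 0 := by
  obtain ⟨R, hR⟩ := hc.isCompact.isBounded.subset_closedBall 0
  let e : ℝ → ℂ := fun θ => (Real.cos θ + Real.sin θ * Complex.I : ℂ)
  have he : ∀ θ, ‖e θ‖ = 1 := fun θ => by
    simp only [e, Complex.ofReal_cos, Complex.ofReal_sin]
    rw [← Complex.exp_mul_I, Complex.norm_exp_ofReal_mul_I]
  have hec : Continuous e := by fun_prop
  have hderiv : ∀ θ r : ℝ, HasDerivAt (fun r : ℝ => φ (r * e θ)) (fderiv ℝ φ (r * e θ) (e θ)) r := by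
    intro θ r
    have h1 : HasDerivAt (fun r : ℝ => (r : ℂ) * e θ) (e θ) r := by
      simpa using (Complex.ofRealCLM.hasDerivAt (x := r)).mul_const (e θ)
    exact ((hφ.differentiable one_ne_zero) _).hasFDerivAt.comp_hasDerivAt r h1
  have hzero : ∀ θ r : ℝ, R < r → fderiv ℝ φ (r * e θ) = 0 := by
    intro θ r hr
    by_contra hne
    have h1 : (r * e θ : ℂ) ∈ tsupport φ := by
      by_contra hcon
      exact hne (by
        have := support_fderiv_subset ℝ (f := φ)
        by_contra h2
        exact hcon (this h2))
    have := hR h1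
    rw [mem_closedBall_zero_iff, norm_mul, he, mul_one, Complex.norm_real] at this
    linarith [le_abs_self r, Real.norm_eq_abs r]
  have hcont : Continuous fun p : ℝ × ℝ => fderiv ℝ φ (p.1 * e p.2) (e p.2) := by
    have h1 : Continuous (fderiv ℝ φ) := hφ.continuous_fderiv one_ne_zero
    exact (h1.comp (by fun_prop)).clm_apply (by fun_prop)
  rw [← Complex.integral_comp_polarCoord_symm, polarCoord_target]
  have hcongr : ∀ p ∈ Ioi (0 : ℝ) ×ˢ Ioo (-Real.pi) Real.pi,
      p.1 • (fderiv ℝ φ (Complex.polarCoord.symm p) (Complex.polarCoord.symm p) /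
        ‖Complex.polarCoord.symm p‖ ^ 2) = fderiv ℝ φ (p.1 * e p.2) (e p.2) := by
    rintro ⟨r, θ⟩ ⟨hr, -⟩
    simp only [mem_Ioi] at hr
    rw [Complex.polarCoord_symm_apply]
    change r • (fderiv ℝ φ (r * e θ) (r * e θ) / ‖(r : ℂ) * e θ‖ ^ 2) = _
    rw [norm_mul, he, Complex.norm_real, mul_one, Real.norm_eq_abs, sq_abs]
    have : fderiv ℝ φ (r * e θ) (r * e θ) = r * fderiv ℝ φ (r * e θ) (e θ) := by
      have := (fderiv ℝ φ (r * e θ)).map_smul r (e θ)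
      simpa [Complex.real_smul] using this
    rw [this, smul_eq_mul]
    field_simp
  rw [setIntegral_congr_fun (measurableSet_Ioi.prod measurableSet_Ioo) hcongr]
  have hintg : IntegrableOn (fun p : ℝ × ℝ => fderiv ℝ φ (p.1 * e p.2) (e p.2))
      (Ioi (0 : ℝ) ×ˢ Ioo (-Real.pi) Real.pi) (volume.prod volume) := by
    have h1 : IntegrableOn (fun p : ℝ × ℝ => fderiv ℝ φ (p.1 * e p.2) (e p.2))
        (Icc (0 : ℝ) R ×ˢ Icc (-Real.pi) Real.pi) (volume.prod volume) :=
      hcont.continuousOn.integrableOn_compact (isCompact_Icc.prod isCompact_Icc)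
    refine (h1.mono_set ?_).of_forall_sdiff_eq_zero
      (measurableSet_Ioi.prod measurableSet_Ioo) (s := Ioc (0 : ℝ) R ×ˢ Ioo (-Real.pi) Real.pi) ?_
    · exact prod_mono Ioc_subset_Icc_self Ioo_subset_Icc_self
    · rintro ⟨r, θ⟩ ⟨⟨hr, hθ⟩, hn⟩
      have : R < r := by
        by_contra hcon
        exact hn ⟨⟨hr, not_lt.1 hcon⟩, hθ⟩
      simp [hzero θ r this]
  rw [Measure.volume_eq_prod]
  rw [IntegrableOn, ← Measure.prod_restrict] at hintg
  rw [← Measure.prod_restrict, integral_prod_symm _ hintg]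
  have hinner : ∀ θ : ℝ, ∫ r in Ioi (0 : ℝ), fderiv ℝ φ (r * e θ) (e θ) = - φ 0 := by
    intro θ
    have := integral_Ioi_of_hasDerivAt_of_tendsto' (a := 0) (m := 0)
      (f := fun r : ℝ => φ (r * e θ)) (f' := fun r : ℝ => fderiv ℝ φ (r * e θ) (e θ))
      (fun r _ => hderiv θ r) ?_ ?_
    · simpa using this
    · have hc' : Continuous fun r : ℝ => fderiv ℝ φ (r * e θ) (e θ) :=
        hcont.comp (by fun_prop : Continuous fun r : ℝ => (r, θ))
      have h1 : IntegrableOn (fun r : ℝ => fderiv ℝ φ (r * e θ) (e θ)) (Ioc 0 R) :=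
        (hc'.continuousOn.integrableOn_compact isCompact_Icc).mono_set Ioc_subset_Icc_self
      refine h1.of_forall_sdiff_eq_zero measurableSet_Ioi ?_
      rintro r ⟨hr, hn⟩
      have : R < r := by
        by_contra hcon
        exact hn ⟨hr, not_lt.1 hcon⟩
      simp [hzero θ r this]
    · refine tendsto_const_nhds.congr' ?_
      filter_upwards [Filter.eventually_gt_atTop (max R 0)] with r hr
      symm
      have hr1 : R < r := lt_of_le_of_lt (le_max_left _ _) hr
      refine image_eq_zero_of_notMem_tsupport fun h1 => ?_
      have := hR h1
      rw [mem_closedBall_zero_iff, norm_mul, he, mul_one, Complex.norm_real] at this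
      linarith [le_abs_self r, Real.norm_eq_abs r]
  simp only [hinner]
  rw [setIntegral_const, Real.volume_real_Ioo_of_le (by linarith [Real.pi_pos]), smul_eq_mul]
  ring

theorem integral_fderiv_radial {φ : ℂ → ℝ} (hφ : ContDiff ℝ 1 φ) (hc : HasCompactSupport φ) (z : ℂ) :
    ∫ w, fderiv ℝ φ w (w - z) / ‖w - z‖ ^ 2 = -(2 * Real.pi) * φ z := by
  have h := integral_fderiv_radial_zero (φ := fun w => φ (w + z))
    (hφ.comp (contDiff_id.add contDiff_const)) (hc.comp_homeomorph (Homeomorph.addRight z))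
  rw [zero_add] at h
  rw [← h, ← integral_add_right_eq_self _ z]
  refine integral_congr_ae (Filter.Eventually.of_forall fun w => ?_)
  simp [fderiv_comp_add_right]

theorem hasDerivAt_half_log_div {x : ℝ} (h1 : -1 < x) (h2 : x < 1) :
    HasDerivAt (fun x => (Real.log (1 + x) - Real.log (1 - x)) / 2) (1 / (1 - x ^ 2)) x := by
  have ha := ((hasDerivAt_id x).const_add 1).log (by simp; linarith)
  have hb := ((hasDerivAt_id x).const_sub 1).log (by simp; linarith)
  refine ((ha.sub hb).div_const 2).congr_deriv ?_
  have : 1 - x ^ 2 ≠ 0 := by nlinarith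
  have h3 : 1 + x ≠ 0 := by linarith
  have h4 : 1 - x ≠ 0 := by linarith
  simp only [id]
  field_simp
  ring

/-- The radial part of the integral of `(Re (1/ζ) - c)₊`. -/
theorem integral_radial_part {x c : ℝ} (hx : 0 < x) (hc : x < c) :
    ∫ r in (0 : ℝ)..(x / c), (x - c * r) / (1 - r ^ 2) ^ 2 =
      x / 2 * ((Real.log (1 + x / c) - Real.log (1 - x / c)) / 2) := by
  have hc0 : 0 < c := hx.trans hc
  have hs : x / c < 1 := (div_lt_one hc0).2 hc
  have hs0 : 0 < x / c := div_pos hx hc0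
  have hne : ∀ r ∈ uIcc 0 (x / c), 1 - r ^ 2 ≠ 0 := fun r hr => by
    rw [uIcc_of_le hs0.le] at hr
    have := hr.1; have := hr.2
    nlinarith
  rw [intervalIntegral.integral_eq_sub_of_hasDerivAt (f := fun r =>
    x / 2 * (r / (1 - r ^ 2) + (Real.log (1 + r) - Real.log (1 - r)) / 2) -
      c / 2 * (1 / (1 - r ^ 2)))]
  · have : 1 - (x / c) ^ 2 ≠ 0 := hne _ right_mem_uIcc
    simp
    have h2 : c ^ 2 - x ^ 2 ≠ 0 := by nlinarith
    field_simp
    ring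
  · intro r hr
    have h0 := hne r hr
    rw [uIcc_of_le hs0.le] at hr
    have hd : HasDerivAt (fun r : ℝ => 1 - r ^ 2) (-(2 * r)) r := by
      simpa using (hasDerivAt_pow 2 r).const_sub 1
    have h3 := (((hasDerivAt_id r).div hd h0).add
      (hasDerivAt_half_log_div (by linarith [hr.1]) (by linarith [hr.2]))).const_mul (x / 2)
    refine (h3.sub (((hasDerivAt_const r (1 : ℝ)).div hd h0).const_mul (c / 2))).congr_deriv ?_
    simp only [id]
    field_simp
    ring
  · apply ContinuousOn.intervalIntegrable
    apply ContinuousOn.div (by fun_prop) (by fun_prop)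
    exact fun r hr => pow_ne_zero 2 (hne r hr)

theorem integral_cos_mul_artanh {c : ℝ} (hc : 1 < c) :
    ∫ θ in (-(Real.pi / 2))..(Real.pi / 2), Real.cos θ *
      ((Real.log (1 + Real.cos θ / c) - Real.log (1 - Real.cos θ / c)) / 2) =
      Real.pi * (c - √(c ^ 2 - 1)) := by
  set k := √(c ^ 2 - 1) with hk
  have hk2 : k ^ 2 = c ^ 2 - 1 := Real.sq_sqrt (by nlinarith)
  have hk0 : 0 < k := Real.sqrt_pos.2 (by nlinarith)
  have hc0 : 0 < c := by linarith
  have hlt : ∀ θ, Real.cos θ / c < 1 := fun θ =>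
    (div_lt_one hc0).2 ((Real.cos_le_one θ).trans_lt hc)
  have hgt : ∀ θ, -1 < Real.cos θ / c := fun θ => by
    rw [lt_div_iff₀ hc0]; linarith [Real.neg_one_le_cos θ]
  have hD : ∀ θ, 0 < k * Real.cos θ ^ 2 + c * Real.sin θ ^ 2 := fun θ => by
    have := Real.sin_sq_add_cos_sq θ
    rcases le_or_gt k c with h | h
    · nlinarith [sq_nonneg (Real.sin θ)]
    · nlinarith [sq_nonneg (Real.cos θ)]
  rw [intervalIntegral.integral_eq_sub_of_hasDerivAt (f := fun θ =>
    Real.sin θ * ((Real.log (1 + Real.cos θ / c) - Real.log (1 - Real.cos θ / c)) / 2) +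
    ((c - k) * θ - k * Real.arctan ((c - k) * (Real.sin θ * Real.cos θ) /
      (k * Real.cos θ ^ 2 + c * Real.sin θ ^ 2))))]
  · simp
    ring
  · intro θ _
    have h1 := (hasDerivAt_half_log_div (hgt θ) (hlt θ)).comp θ ((Real.hasDerivAt_cos θ).div_const c)
    have h2 := (Real.hasDerivAt_sin θ).mul h1
    have hn := ((Real.hasDerivAt_sin θ).mul (Real.hasDerivAt_cos θ)).const_mul (c - k)
    have hd := (((Real.hasDerivAt_cos θ).pow 2).const_mul k).add
      (((Real.hasDerivAt_sin θ).pow 2).const_mul c)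
    have h3 := (hn.div hd (hD θ).ne').arctan.const_mul k
    have h4 := h2.add (((hasDerivAt_id θ).const_mul (c - k)).sub h3)
    refine h4.congr_deriv ?_
    simp only [Function.comp, Pi.add_apply, Pi.mul_apply, Pi.pow_apply, Pi.div_apply]
    have hs := Real.sin_sq_add_cos_sq θ
    have hD' := hD θ
    set s := Real.sin θ
    set o := Real.cos θ
    have ho : o ^ 2 = 1 - s ^ 2 := by linarith
    have hE : (k * o ^ 2 + c * s ^ 2) ^ 2 + ((c - k) * (s * o)) ^ 2 = c ^ 2 - o ^ 2 := by
      have : ((c - k) * (s * o)) ^ 2 = (c - k) ^ 2 * s ^ 2 * o ^ 2 := by ring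
      rw [this, ho]
      linear_combination (1 - s ^ 2) * hk2
    have hE0 : 0 < c ^ 2 - o ^ 2 := by nlinarith [sq_nonneg s]
    have e1 : 1 / (1 - (o / c) ^ 2) = c ^ 2 / (c ^ 2 - o ^ 2) := by
      field_simp
    have e2 : 1 / (1 + ((c - k) * (s * o) / (k * o ^ 2 + c * s ^ 2)) ^ 2) =
        (k * o ^ 2 + c * s ^ 2) ^ 2 / (c ^ 2 - o ^ 2) := by
      rw [← hE]
      field_simp
    rw [e1, e2]
    have hX : (c - k) * (o * o + s * -s) * (k * o ^ 2 + c * s ^ 2) - (c - k) * (s * o) *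
        (k * (2 * o * -s) + c * (2 * s * o)) = c * k - (c ^ 2 - o ^ 2) := by
      have h5 : (c - k) * (o * o + s * -s) * (k * o ^ 2 + c * s ^ 2) - (c - k) * (s * o) *
        (k * (2 * o * -s) + c * (2 * s * o)) = (c - k) * (o ^ 2 - s ^ 2) * (k * o ^ 2 + c * s ^ 2)
          - 2 * (c - k) ^ 2 * s ^ 2 * o ^ 2 := by ring
      rw [h5, ho]
      linear_combination (s ^ 2 - 1) * hk2
    have hD0 := hD'.ne'
    have hE0' := hE0.ne'
    simp only [Nat.cast_ofNat, Nat.add_one_sub_one, pow_one]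
    rw [hX]
    generalize k * o ^ 2 + c * s ^ 2 = D at hD0
    have hcancel : ∀ X, D ^ 2 / (c ^ 2 - o ^ 2) * (X / D ^ 2) = X / (c ^ 2 - o ^ 2) := fun X => by
      field_simp
    rw [hcancel, add_assoc, add_eq_left]
    field_simp
    linear_combination -c * ho - c * hk2
  · apply Continuous.intervalIntegrable
    have a1 : ∀ θ, 1 + Real.cos θ / c ≠ 0 := fun θ => by linarith [hgt θ]
    have a2 : ∀ θ, 1 - Real.cos θ / c ≠ 0 := fun θ => by linarith [hlt θ]
    fun_prop (disch := assumption)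

/-- The Möbius-invariant measure `dx dy / (π (1-|z|²)²)` on the unit disk. -/
noncomputable def hypMeasure : Measure ℂ :=
  ((volume : Measure ℂ).restrict (ball (0 : ℂ) 1)).withDensity
    fun z => ENNReal.ofReal (((1 - ‖z‖ ^ 2) ^ 2)⁻¹ / Real.pi)

theorem lintegral_hypMeasure (g : ℂ → ENNReal) :
    ∫⁻ z, g z ∂hypMeasure =
      ∫⁻ z in ball (0 : ℂ) 1, ENNReal.ofReal (((1 - ‖z‖ ^ 2) ^ 2)⁻¹ / Real.pi) * g z := by
  rw [hypMeasure, lintegral_withDensity_eq_lintegral_mul_non_measurable₀ _ (by fun_prop)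
    (by simp)]
  rfl

theorem lintegral_hypMeasure_inv_le {c : ℝ} (hc : 1 < c) :
    ∫⁻ z, ENNReal.ofReal ((z⁻¹).re - c) ∂hypMeasure ≤ ENNReal.ofReal ((c - √(c ^ 2 - 1)) / 2) := by
  have hpi := Real.pi_pos
  have hc0 : 0 < c := by linarith
  rw [lintegral_hypMeasure, ← lintegral_indicator measurableSet_ball,
    ← Complex.lintegral_comp_polarCoord_symm, polarCoord_target]
  set K : ℝ × ℝ → ENNReal := fun p => ENNReal.ofReal
    (if p.1 < 1 then (Real.cos p.2 - c * p.1) / (1 - p.1 ^ 2) ^ 2 / Real.pi else 0) with hK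
  have hKm : Measurable K := by
    apply Measurable.ennreal_ofReal
    apply Measurable.ite (measurableSet_lt measurable_fst measurable_const) _ measurable_const
    fun_prop
  have h1 : ∀ p ∈ Ioi (0 : ℝ) ×ˢ Ioo (-Real.pi) Real.pi, ENNReal.ofReal p.1 •
      (ball (0 : ℂ) 1).indicator (fun z => ENNReal.ofReal (((1 - ‖z‖ ^ 2) ^ 2)⁻¹ / Real.pi) *
        ENNReal.ofReal ((z⁻¹).re - c)) (Complex.polarCoord.symm p) = K p := by
    rintro ⟨r, θ⟩ ⟨hr, -⟩
    simp only [mem_Ioi] at hr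
    have hn : ‖Complex.polarCoord.symm (r, θ)‖ = r := by
      rw [Complex.norm_polarCoord_symm, abs_of_pos hr]
    simp only [hK, indicator, mem_ball_zero_iff, hn]
    split_ifs with h
    · have hre : ((Complex.polarCoord.symm (r, θ))⁻¹).re = Real.cos θ / r := by
        rw [Complex.inv_re, Complex.normSq_eq_norm_sq, hn, Complex.polarCoord_symm_apply]
        simp only [Complex.mul_re, Complex.ofReal_re, Complex.ofReal_im, Complex.add_re,
          Complex.I_re, Complex.I_im, zero_mul, sub_zero, mul_zero, add_zero]
        field_simp
      have h2 : 0 ≤ ((1 - r ^ 2) ^ 2)⁻¹ / Real.pi := by positivity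
      rw [hre, smul_eq_mul, ← ENNReal.ofReal_mul h2, ← ENNReal.ofReal_mul hr.le]
      congr 1
      field_simp
    · simp
  rw [setLIntegral_congr_fun (measurableSet_Ioi.prod measurableSet_Ioo) h1,
    Measure.volume_eq_prod, ← Measure.prod_restrict, lintegral_prod_symm _ hKm.aemeasurable]
  set B : ℝ → ℝ := fun θ => Real.cos θ *
      ((Real.log (1 + Real.cos θ / c) - Real.log (1 - Real.cos θ / c)) / 2) with hB
  have hinner : ∀ θ ∈ Ioo (-Real.pi) Real.pi, ∫⁻ r in Ioi (0 : ℝ), K (r, θ) ≤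
      (Ioc (-(Real.pi / 2)) (Real.pi / 2)).indicator
        (fun θ => ENNReal.ofReal (B θ / 2 / Real.pi)) θ := by
    intro θ hθ
    by_cases hcos : 0 < Real.cos θ
    · have hmem : θ ∈ Ioc (-(Real.pi / 2)) (Real.pi / 2) := by
        constructor
        · by_contra hcon
          have := Real.cos_nonpos_of_pi_div_two_le_of_le (x := -θ) (by linarith)
            (by linarith [hθ.1])
          rw [Real.cos_neg] at this; linarith
        · by_contra hcon
          have := Real.cos_nonpos_of_pi_div_two_le_of_le (x := θ) (by linarith)
            (by linarith [hθ.2])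
          linarith
      rw [indicator_of_mem hmem]
      have hlt : Real.cos θ < c := (Real.cos_le_one θ).trans_lt hc
      have hs1 : Real.cos θ / c < 1 := (div_lt_one hc0).2 hlt
      have hs0 : 0 < Real.cos θ / c := div_pos hcos hc0
      have hle : ∫⁻ r in Ioi (0 : ℝ), K (r, θ) ≤ ∫⁻ r in Ioc (0 : ℝ) (Real.cos θ / c),
          ENNReal.ofReal ((Real.cos θ - c * r) / (1 - r ^ 2) ^ 2 / Real.pi) := by
        rw [← lintegral_indicator measurableSet_Ioi, ← lintegral_indicator measurableSet_Ioc]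
        refine lintegral_mono fun r => ?_
        simp only [indicator, mem_Ioi, mem_Ioc, hK]
        split_ifs with a b b d d
        · exact le_rfl
        · rw [ENNReal.ofReal_of_nonpos]
          have : Real.cos θ / c < r := by
            by_contra hcon; exact absurd (⟨a, not_lt.1 hcon⟩ : 0 < r ∧ r ≤ Real.cos θ / c) (by assumption)
          rw [div_lt_iff₀ hc0] at this
          apply div_nonpos_of_nonpos_of_nonneg _ hpi.le
          apply div_nonpos_of_nonpos_of_nonneg (by linarith) (by positivity)
        all_goals simp
      refine hle.trans ?_
      rw [← ofReal_integral_eq_lintegral_ofReal]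
      · apply ENNReal.ofReal_le_ofReal
        rw [integral_div, ← intervalIntegral.integral_of_le hs0.le,
          integral_radial_part hcos hlt, hB]
        apply le_of_eq; ring
      · apply Integrable.div_const
        have : ContinuousOn (fun r => (Real.cos θ - c * r) / (1 - r ^ 2) ^ 2)
            (Icc 0 (Real.cos θ / c)) := by
          apply ContinuousOn.div (by fun_prop) (by fun_prop)
          intro r hr
          have := hr.1; have := hr.2
          have : 0 < 1 - r ^ 2 := by nlinarith
          positivity
        exact (this.integrableOn_compact isCompact_Icc).mono_set Ioc_subset_Icc_self
      · refine (ae_restrict_iff' measurableSet_Ioc).2 (Filter.Eventually.of_forall fun r hr => ?_)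
        have := hr.2
        rw [le_div_iff₀ hc0] at this
        have h3 : 0 ≤ Real.cos θ - c * r := by linarith
        simp only [Pi.zero_apply]
        positivity
    · have : ∫⁻ r in Ioi (0 : ℝ), K (r, θ) = 0 := by
        rw [setLIntegral_congr_fun (g := fun _ => 0) measurableSet_Ioi]
        · simp
        · intro r hr
          simp only [mem_Ioi] at hr
          simp only [hK]
          apply ENNReal.ofReal_of_nonpos
          split_ifs
          · apply div_nonpos_of_nonpos_of_nonneg _ hpi.le
            apply div_nonpos_of_nonpos_of_nonneg _ (by positivity)
            nlinarith
          · exact le_rfl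
      rw [this]; exact bot_le
  refine (setLIntegral_mono' measurableSet_Ioo hinner).trans ?_
  refine (setLIntegral_le_lintegral _ _).trans ?_
  rw [lintegral_indicator measurableSet_Ioc]
  have a0 : ∀ θ, Real.cos θ / c < 1 := fun θ =>
    (div_lt_one hc0).2 ((Real.cos_le_one θ).trans_lt hc)
  have a1 : ∀ θ, 1 + Real.cos θ / c ≠ 0 := fun θ => by
    have : -1 < Real.cos θ / c := by rw [lt_div_iff₀ hc0]; linarith [Real.neg_one_le_cos θ]
    linarith
  have a2 : ∀ θ, 1 - Real.cos θ / c ≠ 0 := fun θ => by linarith [a0 θ]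
  have hBc : Continuous fun θ => B θ / 2 / Real.pi := by
    simp only [hB]; fun_prop (disch := assumption)
  rw [← ofReal_integral_eq_lintegral_ofReal]
  · apply ENNReal.ofReal_le_ofReal
    rw [integral_div, integral_div, ← intervalIntegral.integral_of_le (by linarith),
      integral_cos_mul_artanh hc]
    apply le_of_eq; field_simp
  · exact (hBc.continuousOn.integrableOn_compact isCompact_Icc).mono_set Ioc_subset_Icc_self
  · refine (ae_restrict_iff' measurableSet_Ioc).2 (Filter.Eventually.of_forall fun θ hθ => ?_)
    have h3 := Real.cos_nonneg_of_mem_Icc ⟨hθ.1.le, hθ.2⟩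
    have h4 : Real.log (1 - Real.cos θ / c) ≤ Real.log (1 + Real.cos θ / c) := by
      apply Real.log_le_log (by linarith [a0 θ])
      have : 0 ≤ Real.cos θ / c := by positivity
      linarith
    simp only [hB, Pi.zero_apply]
    have : 0 ≤ Real.log (1 + Real.cos θ / c) - Real.log (1 - Real.cos θ / c) := by linarith
    positivity

theorem Complex.det_smul_one (a : ℂ) : (a • (1 : ℂ →L[ℝ] ℂ)).det = ‖a‖ ^ 2 := by
  have h : ((a • (1 : ℂ →L[ℝ] ℂ) : ℂ →L[ℝ] ℂ) : ℂ →ₗ[ℝ] ℂ) =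
      ((LinearMap.lsmul ℂ ℂ a).restrictScalars ℝ) := by
    ext; simp
  rw [ContinuousLinearMap.det, h]
  erw [LinearMap.det_restrictScalars]
  rw [Algebra.norm_complex_apply, ← Complex.normSq_eq_norm_sq]
  congr 1
  rw [← LinearMap.det_toMatrix (Module.Basis.singleton Unit ℂ)]
  simp [Matrix.det_unique, LinearMap.toMatrix_apply]

theorem one_sub_conj_mul_ne_zero {w z : ℂ} (hw : ‖w‖ < 1) (hz : ‖z‖ < 1) :
    1 - starRingEnd ℂ w * z ≠ 0 := by
  intro h
  have h1 : starRingEnd ℂ w * z = 1 := (sub_eq_zero.1 h).symm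
  have h2 : ‖w‖ * ‖z‖ = 1 := by simpa using congrArg norm h1
  nlinarith [norm_nonneg w, norm_nonneg z]

theorem one_sub_normSq_moebius {w z u : ℂ} (hw : ‖w‖ < 1) (hz : ‖z‖ < 1) (hu : ‖u‖ = 1) :
    1 - ‖u * ((w - z) / (1 - starRingEnd ℂ w * z))‖ ^ 2 =
      (1 - ‖w‖ ^ 2) * (1 - ‖z‖ ^ 2) / ‖1 - starRingEnd ℂ w * z‖ ^ 2 := by
  have h := one_sub_conj_mul_ne_zero hw hz
  have h' : ‖1 - starRingEnd ℂ w * z‖ ^ 2 ≠ 0 := pow_ne_zero 2 (norm_ne_zero_iff.2 h)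
  rw [norm_mul, hu, one_mul, norm_div, div_pow, eq_div_iff h', sub_mul, div_mul_cancel₀ _ h']
  simp only [← Complex.normSq_eq_norm_sq, Complex.normSq_apply]
  simp
  ring

theorem lintegral_hypMeasure_moebius_le {w u : ℂ} (hw : ‖w‖ < 1) (hu : ‖u‖ = 1) (g : ℂ → ENNReal) :
    ∫⁻ z, g (u * ((w - z) / (1 - starRingEnd ℂ w * z))) ∂hypMeasure ≤ ∫⁻ z, g z ∂hypMeasure := by
  rw [lintegral_hypMeasure, lintegral_hypMeasure]
  set ζ : ℂ → ℂ := fun z => u * ((w - z) / (1 - starRingEnd ℂ w * z)) with hζ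
  set d : ℂ → ℂ := fun z => u * ((‖w‖ ^ 2 - 1 : ℝ) / (1 - starRingEnd ℂ w * z) ^ 2) with hd
  have hu0 : u ≠ 0 := by rintro rfl; simp at hu
  have hw1 : 0 < 1 - ‖w‖ ^ 2 := by nlinarith [norm_nonneg w]
  have hderiv : ∀ z ∈ ball (0 : ℂ) 1, HasDerivAt ζ (d z) z := by
    intro z hz
    have h := one_sub_conj_mul_ne_zero hw (mem_ball_zero_iff.1 hz)
    have h1 : HasDerivAt (fun z => w - z) (-1) z := by simpa using (hasDerivAt_id z).const_sub w
    have h2 : HasDerivAt (fun z => 1 - starRingEnd ℂ w * z) (-starRingEnd ℂ w) z := by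
      simpa using ((hasDerivAt_id z).const_mul (starRingEnd ℂ w)).const_sub 1
    refine ((h1.div h2 h).const_mul u).congr_deriv ?_
    simp only [hd]
    have : ((‖w‖ ^ 2 - 1 : ℝ) : ℂ) = starRingEnd ℂ w * w - 1 := by
      rw [Complex.conj_mul']; push_cast; ring
    rw [this]
    ring
  have hinj : InjOn ζ (ball 0 1) := by
    intro x hx y hy hxy
    have h1 := one_sub_conj_mul_ne_zero hw (mem_ball_zero_iff.1 hx)
    have h2 := one_sub_conj_mul_ne_zero hw (mem_ball_zero_iff.1 hy)
    have h3 := mul_left_cancel₀ hu0 hxy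
    rw [div_eq_div_iff h1 h2] at h3
    have h4 : (x - y) * (1 - starRingEnd ℂ w * w) = 0 := by linear_combination -h3
    rcases mul_eq_zero.1 h4 with h | h
    · exact sub_eq_zero.1 h
    · exact absurd h (one_sub_conj_mul_ne_zero hw hw)
  have himg : ζ '' ball 0 1 ⊆ ball 0 1 := by
    rintro _ ⟨z, hz, rfl⟩
    have hz' := mem_ball_zero_iff.1 hz
    have h := one_sub_conj_mul_ne_zero hw hz'
    have h0 := norm_pos_iff.2 h
    have h1 := one_sub_normSq_moebius hw hz' hu
    have hz1 : 0 < 1 - ‖z‖ ^ 2 := by nlinarith [norm_nonneg z]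
    have h2 : 0 < 1 - ‖ζ z‖ ^ 2 := by rw [hζ]; simp only; rw [h1]; positivity
    rw [mem_ball_zero_iff]
    nlinarith [norm_nonneg (ζ z)]
  refine le_trans (le_of_eq ?_) (lintegral_mono_set himg)
  rw [lintegral_image_eq_lintegral_abs_det_fderiv_mul volume measurableSet_ball
    (fun z hz => (hderiv z hz).complexToReal_fderiv.hasFDerivWithinAt) hinj]
  refine setLIntegral_congr_fun measurableSet_ball fun z hz => ?_
  have hz' := mem_ball_zero_iff.1 hz
  have h := one_sub_conj_mul_ne_zero hw hz'
  have h0 := norm_pos_iff.2 h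
  have hz1 : 0 < 1 - ‖z‖ ^ 2 := by nlinarith [norm_nonneg z]
  simp only [Complex.det_smul_one]
  rw [← mul_assoc, ← ENNReal.ofReal_mul (abs_nonneg _), abs_of_nonneg (by positivity)]
  congr 2
  have h1 := one_sub_normSq_moebius hw hz' hu
  simp only [hζ]
  rw [h1]
  have hdn : ‖d z‖ = (1 - ‖w‖ ^ 2) / ‖1 - starRingEnd ℂ w * z‖ ^ 2 := by
    simp only [hd]
    rw [norm_mul, hu, one_mul, norm_div, norm_pow, Complex.norm_real, Real.norm_eq_abs,
      abs_sub_comm, abs_of_pos hw1]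
  rw [hdn]
  field_simp

lemma lintegral_hypMeasure_kernel_le {w u : ℂ} (hw : ‖w‖ < 1) (hu : ‖u‖ = 1) {c : ℝ} (hc : 1 < c) :
    ∫⁻ z, ENNReal.ofReal ((u * ((1 - starRingEnd ℂ w * z) / (w - z))).re - c) ∂hypMeasure
      ≤ ENNReal.ofReal ((c - √(c ^ 2 - 1)) / 2) := by
  have h := lintegral_hypMeasure_moebius_le hw (u := u⁻¹) (by simp [hu])
    (fun ζ => ENNReal.ofReal ((ζ⁻¹).re - c))
  refine le_trans (le_of_eq ?_) (h.trans (lintegral_hypMeasure_inv_le hc))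
  simp only [mul_inv, inv_inv, inv_div]

lemma lintegral_enorm_hypMeasure_kernel_le {w : ℂ} (hw : ‖w‖ < 1) (E : Set ℂ) :
    ∫⁻ z in E, ‖(1 - starRingEnd ℂ w * z) / (w - z)‖ₑ ∂hypMeasure
      ≤ 4 * (ENNReal.ofReal 2 * hypMeasure E + ENNReal.ofReal 1) := by
  set k : ℂ → ℂ := fun z => (1 - starRingEnd ℂ w * z) / (w - z) with hk
  have hkm : Measurable k := by fun_prop
  have key : ∀ u : ℂ, ‖u‖ = 1 → ∫⁻ z in E, ENNReal.ofReal ((u * k z).re) ∂hypMeasure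
      ≤ ENNReal.ofReal 2 * hypMeasure E + ENNReal.ofReal 1 := by
    intro u hu
    calc ∫⁻ z in E, ENNReal.ofReal ((u * k z).re) ∂hypMeasure
        ≤ ∫⁻ z in E, (ENNReal.ofReal 2 + ENNReal.ofReal ((u * k z).re - 2)) ∂hypMeasure := by
          refine lintegral_mono fun z => ?_
          refine le_trans (ENNReal.ofReal_le_ofReal ?_) ENNReal.ofReal_add_le
          linarith
      _ = ENNReal.ofReal 2 * hypMeasure E + ∫⁻ z in E, ENNReal.ofReal ((u * k z).re - 2) ∂hypMeasure := by
          rw [lintegral_add_left measurable_const, setLIntegral_const]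
      _ ≤ _ := by
          gcongr
          refine (setLIntegral_le_lintegral _ _).trans
            ((lintegral_hypMeasure_kernel_le hw hu (c := 2) (by norm_num)).trans ?_)
          apply ENNReal.ofReal_le_ofReal
          have : ∀ x : ℝ, 0 ≤ x → (2 - x) / 2 ≤ 1 := fun x hx => by linarith
          exact this _ (Real.sqrt_nonneg _)
  have m1 : ∀ u : ℂ, Measurable fun z => ENNReal.ofReal ((u * k z).re) := fun u => by fun_prop
  calc ∫⁻ z in E, ‖k z‖ₑ ∂hypMeasure
      ≤ ∫⁻ z in E, (ENNReal.ofReal ((1 * k z).re) + ENNReal.ofReal ((-1 * k z).re)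
        + ENNReal.ofReal ((Complex.I * k z).re) + ENNReal.ofReal ((-Complex.I * k z).re)) ∂hypMeasure := by
        refine lintegral_mono fun z => ?_
        rw [← ofReal_norm]
        refine le_trans (ENNReal.ofReal_le_ofReal (Complex.norm_le_abs_re_add_abs_im _)) ?_
        have habs : ∀ x : ℝ, ENNReal.ofReal |x| ≤ ENNReal.ofReal x + ENNReal.ofReal (-x) := by
          intro x
          rcases abs_cases x with ⟨h, _⟩ | ⟨h, _⟩ <;> rw [h] <;> simp
        refine ENNReal.ofReal_add_le.trans ?_
        have h1 := habs (k z).re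
        have h2 := habs (k z).im
        simp only [one_mul, neg_mul, Complex.neg_re, Complex.mul_re, Complex.I_re, Complex.I_im, zero_mul,
          zero_sub, neg_neg]
        calc _ ≤ _ := add_le_add h1 h2
          _ = _ := by ring
    _ ≤ _ := by
        rw [lintegral_add_left (by fun_prop), lintegral_add_left (by fun_prop), lintegral_add_left (by fun_prop)]
        have a1 := key 1 (by simp)
        have a2 := key (-1) (by simp)
        have a3 := key Complex.I (by simp)
        have a4 := key (-Complex.I) (by simp)
        refine (add_le_add (add_le_add (add_le_add a1 a2) a3) a4).trans (le_of_eq ?_)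
        ring

lemma integrableOn_hypMeasure_kernel {w : ℂ} (hw : ‖w‖ < 1) {E : Set ℂ}
    (hE : hypMeasure E ≠ ⊤) :
    IntegrableOn (fun z => (1 - starRingEnd ℂ w * z) / (w - z)) E hypMeasure := by
  refine ⟨Measurable.aestronglyMeasurable (by fun_prop), ?_⟩
  refine lt_of_le_of_lt (lintegral_enorm_hypMeasure_kernel_le hw E) ?_
  refine ENNReal.mul_lt_top (by norm_num) ?_
  exact ENNReal.add_lt_top.2 ⟨ENNReal.mul_lt_top (by simp) hE.lt_top, by simp⟩

lemma norm_setIntegral_hypMeasure_kernel_le {w : ℂ} (hw : ‖w‖ < 1) {E : Set ℂ}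
    (hE : hypMeasure E ≠ ⊤) :
    ‖∫ z in E, (1 - starRingEnd ℂ w * z) / (w - z) ∂hypMeasure‖
      ≤ √((hypMeasure E).toReal * (1 + (hypMeasure E).toReal)) := by
  set k : ℂ → ℂ := fun z => (1 - starRingEnd ℂ w * z) / (w - z) with hk
  have hkm : Measurable k := by fun_prop
  set ν := (hypMeasure E).toReal with hν
  have hν0 : 0 ≤ ν := ENNReal.toReal_nonneg
  have hintg : Integrable k (hypMeasure.restrict E) := integrableOn_hypMeasure_kernel hw hE
  rcases hν0.eq_or_lt with h0 | hpos
  · have : hypMeasure E = 0 := by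
      rcases (ENNReal.toReal_eq_zero_iff _).1 h0.symm with h | h
      · exact h
      · exact absurd h hE
    rw [Measure.restrict_eq_zero.2 this]; simp
  set I := ∫ z in E, k z ∂hypMeasure with hI
  by_cases hI0 : I = 0
  · rw [hI0]; simp
  set u : ℂ := starRingEnd ℂ I / ‖I‖ with hu
  have hnI : (‖I‖ : ℝ) ≠ 0 := by simpa using hI0
  have hu1 : ‖u‖ = 1 := by simp [hu, hI0]
  have huI : (u * I).re = ‖I‖ := by
    have : u * I = (‖I‖ : ℂ) := by
      rw [hu, div_mul_eq_mul_div, mul_comm, Complex.mul_conj, Complex.normSq_eq_norm_sq]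
      have : (‖I‖ : ℂ) ≠ 0 := by exact_mod_cast hnI
      field_simp
      push_cast; ring
    rw [this, Complex.ofReal_re]
  have : IsFiniteMeasure (hypMeasure.restrict E) := ⟨by simpa using hE.lt_top⟩
  have gen : ∀ c : ℝ, 1 < c → ‖I‖ ≤ c * ν + (c - √(c^2-1))/2 := by
    intro c hc
    have hre : Integrable (fun z => (u * k z).re) (hypMeasure.restrict E) := (hintg.const_mul u).re
    have e1 : ‖I‖ = ∫ z in E, (u * k z).re ∂hypMeasure := by
      rw [← huI, hI, ← integral_const_mul]
      exact (integral_re (hintg.const_mul u)).symm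
    have hsub : Integrable (fun z => (u * k z).re - c) (hypMeasure.restrict E) := hre.sub (integrable_const c)
    have e2 : ‖I‖ = c * ν + ∫ z in E, ((u * k z).re - c) ∂hypMeasure := by
      rw [integral_sub hre (integrable_const c), ← e1]
      simp [Measure.real, hν, mul_comm]
    have e3 : ∫ z in E, ((u * k z).re - c) ∂hypMeasure ≤ (c - √(c^2-1))/2 := by
      have hnn : 0 ≤ (c - √(c^2-1))/2 := by
        have : √(c^2-1) ≤ c := Real.sqrt_le_iff.2 ⟨by linarith, by linarith⟩
        linarith
      rw [integral_eq_lintegral_pos_part_sub_lintegral_neg_part hsub]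
      refine (sub_le_self _ ENNReal.toReal_nonneg).trans ?_
      refine ENNReal.toReal_le_of_le_ofReal hnn ?_
      exact (setLIntegral_le_lintegral _ _).trans (lintegral_hypMeasure_kernel_le hw hu1 hc)
    linarith
  set s := √(ν * (1 + ν)) with hs
  have hs2 : s ^ 2 = ν * (1 + ν) := Real.sq_sqrt (by positivity)
  have hs0 : 0 < s := Real.sqrt_pos.2 (by positivity)
  have hc1 : 1 < (2 * ν + 1) / (2 * s) := by
    rw [lt_div_iff₀ (by positivity)]
    nlinarith
  have hsq : √(((2 * ν + 1) / (2 * s)) ^ 2 - 1) = 1 / (2 * s) := by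
    rw [Real.sqrt_eq_iff_mul_self_eq_of_pos (by positivity)]
    field_simp
    nlinarith
  refine (gen _ hc1).trans (le_of_eq ?_)
  rw [hsq]
  field_simp
  nlinarith

lemma tsupport_subset_of_isCompact {F : Type*} [Zero F] {g : ℂ → F} {K : Set ℂ} (hK : IsCompact K)
    (h0 : ∀ w ∉ K, g w = 0) : tsupport g ⊆ K :=
  closure_minimal (fun w hw => by_contra fun h => hw (h0 w h)) hK.isClosed

lemma integrable_of_continuousAt_of_isCompact {g : ℂ → ℝ} {K : Set ℂ} (hK : IsCompact K)
    (h0 : ∀ w ∉ K, g w = 0) (hc : ∀ w ∈ K, ContinuousAt g w) : Integrable g := by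
  have ht := tsupport_subset_of_isCompact hK h0
  exact (continuous_of_tsupport fun w hw => hc w (ht hw)).integrable_of_hasCompactSupport
    (hK.of_isClosed_subset (isClosed_tsupport g) ht)

lemma contDiff_of_contDiffAt_of_isCompact {F : Type*} [NormedAddCommGroup F] [NormedSpace ℝ F]
    {g : ℂ → F} {K : Set ℂ} (hK : IsCompact K)
    (h0 : ∀ w ∉ K, g w = 0) (hc : ∀ w ∈ K, ContDiffAt ℝ 1 g w) : ContDiff ℝ 1 g := by
  refine contDiff_iff_contDiffAt.2 fun w => ?_
  by_cases hw : w ∈ K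
  · exact hc w hw
  · have : g =ᶠ[nhds w] fun _ => 0 := by
      filter_upwards [hK.isClosed.isOpen_compl.mem_nhds hw] with v hv using h0 v hv
    exact contDiffAt_const.congr_of_eventuallyEq this

lemma one_sub_normSq_pos {w : ℂ} (hw : w ∈ ball (0 : ℂ) 1) : 0 < 1 - ‖w‖ ^ 2 := by
  have : ‖w‖ < 1 := by simpa using hw
  nlinarith [norm_nonneg w]

lemma integral_fderiv_self_div {φ : ℂ → ℝ} (hφ : ContDiff ℝ 1 φ) (hc : HasCompactSupport φ)
    (hs : tsupport φ ⊆ ball 0 1) :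
    ∫ w, fderiv ℝ φ w w / (1 - ‖w‖ ^ 2) = -2 * ∫ w, φ w * ((1 - ‖w‖ ^ 2) ^ 2)⁻¹ := by
  set K := tsupport φ with hKdef
  have hK : IsCompact K := hc
  have h0 : ∀ w ∉ K, φ w = 0 := fun w hw => image_eq_zero_of_notMem_tsupport hw
  have hD0 : ∀ w ∉ K, fderiv ℝ φ w = 0 := fun w hw =>
    image_eq_zero_of_notMem_tsupport fun h => hw (tsupport_fderiv_subset ℝ h)
  have hDc : Continuous (fderiv ℝ φ) := hφ.continuous_fderiv (by norm_num)
  have hne : ∀ w ∈ K, 1 - ‖w‖ ^ 2 ≠ 0 := fun w hw => (one_sub_normSq_pos (hs hw)).ne'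
  set Ψ : ℂ → ℝ := fun w => φ w * (‖w‖ ^ 2 / (1 - ‖w‖ ^ 2)) with hΨ
  have hns : ContDiff ℝ 1 fun w : ℂ => ‖w‖ ^ 2 := contDiff_norm_sq ℝ
  have hΨd : ContDiff ℝ 1 Ψ := by
    refine contDiff_of_contDiffAt_of_isCompact hK (fun w hw => by simp [hΨ, h0 w hw]) fun w hw => ?_
    exact hφ.contDiffAt.mul (hns.contDiffAt.div (contDiffAt_const.sub hns.contDiffAt) (hne w hw))
  have hΨc : HasCompactSupport Ψ := hc.mul_right
  have i1 : Integrable fun w => fderiv ℝ φ w w / (1 - ‖w‖ ^ 2) := by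
    refine integrable_of_continuousAt_of_isCompact hK (fun w hw => by simp [hD0 w hw]) fun w hw => ?_
    exact (hDc.clm_apply continuous_id).continuousAt.div (by fun_prop) (hne w hw)
  have i2 : Integrable fun w => φ w * ((1 - ‖w‖ ^ 2) ^ 2)⁻¹ := by
    refine integrable_of_continuousAt_of_isCompact hK (fun w hw => by simp [h0 w hw]) fun w hw => ?_
    exact hφ.continuous.continuousAt.mul (ContinuousAt.inv₀ (by fun_prop) (pow_ne_zero 2 (hne w hw)))
  have key := integral_fderiv_radial hΨd hΨc 0
  have hae : (fun w : ℂ => fderiv ℝ Ψ w (w - 0) / ‖w - 0‖ ^ 2) =ᵐ[volume]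
      fun w => fderiv ℝ φ w w / (1 - ‖w‖ ^ 2) + 2 * (φ w * ((1 - ‖w‖ ^ 2) ^ 2)⁻¹) := by
    filter_upwards [Measure.ae_ne volume (0 : ℂ)] with w hw0
    have hn0 : ‖w‖ ≠ 0 := by simpa using hw0
    by_cases hw : w ∈ K
    · have hN : HasFDerivAt (fun v : ℂ => ‖v‖ ^ 2) (2 • (innerSL ℝ w)) w :=
        (hasStrictFDerivAt_norm_sq w).hasFDerivAt
      have hl : HasDerivAt (fun t : ℝ => t / (1 - t)) (1 / (1 - ‖w‖ ^ 2) ^ 2) (‖w‖ ^ 2) := by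
        have := (hasDerivAt_id (‖w‖ ^ 2)).div ((hasDerivAt_id (‖w‖ ^ 2)).const_sub 1) (hne w hw)
        refine this.congr_deriv ?_
        simp
      have hq := hl.comp_hasFDerivAt w hN
      have hp := (hφ.differentiable (by norm_num) w).hasFDerivAt.mul hq
      have : fderiv ℝ Ψ w = _ := hp.fderiv
      rw [this]
      have hne' := hne w hw
      simp
      field_simp
      ring
    · have : Ψ =ᶠ[nhds w] fun _ => 0 := by
        filter_upwards [hK.isClosed.isOpen_compl.mem_nhds hw] with v hv
        simp [hΨ, h0 v hv]
      simp [this.fderiv_eq, hD0 w hw, h0 w hw]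
  rw [integral_congr_ae hae, integral_add i1 (i2.const_mul 2), integral_const_mul] at key
  simp [hΨ] at key
  simp only [neg_mul]
  linarith

lemma measure_le_integral_of_eq_one {φ : ℂ → ℝ} (hφ : Continuous φ) (hc : HasCompactSupport φ)
    (hs : tsupport φ ⊆ ball 0 1) (hnn : ∀ z, 0 ≤ φ z) {E : Set ℂ} (hE : MeasurableSet E)
    (h1 : ∀ z ∈ E, φ z = 1) :
    hypMeasure E ≤ ENNReal.ofReal ((∫ w, φ w * ((1 - ‖w‖ ^ 2) ^ 2)⁻¹) / Real.pi) := by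
  have h0 : ∀ w ∉ tsupport φ, φ w = 0 := fun w hw => image_eq_zero_of_notMem_tsupport hw
  have hne : ∀ w ∈ tsupport φ, 1 - ‖w‖ ^ 2 ≠ 0 := fun w hw => (one_sub_normSq_pos (hs hw)).ne'
  have i2 : Integrable fun w => φ w * ((1 - ‖w‖ ^ 2) ^ 2)⁻¹ := by
    refine integrable_of_continuousAt_of_isCompact hc (fun w hw => by simp [h0 w hw]) fun w hw => ?_
    exact hφ.continuousAt.mul (ContinuousAt.inv₀ (by fun_prop) (pow_ne_zero 2 (hne w hw)))
  have e1 : hypMeasure E = ∫⁻ z, E.indicator 1 z ∂hypMeasure := by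
    rw [lintegral_indicator_one hE]
  rw [e1, lintegral_hypMeasure, div_eq_mul_inv, ← integral_mul_const,
    ofReal_integral_eq_lintegral_ofReal (i2.mul_const _)
      (Filter.Eventually.of_forall fun w => by have := hnn w; positivity)]
  refine (setLIntegral_le_lintegral _ _).trans (lintegral_mono fun z => ?_)
  by_cases hz : z ∈ E
  · simp [hz, h1 z hz, div_eq_mul_inv]
  · simp [hz]

lemma fderiv_kernel_eq (L : ℂ →L[ℝ] ℝ) {w z : ℂ} (hw : ‖w‖ < 1) (hwz : w ≠ z) :
    L (starRingEnd ℂ ((1 - starRingEnd ℂ w * z) / (w - z))) / (1 - ‖w‖ ^ 2)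
      = L (w - z) / ‖w - z‖ ^ 2 + L w / (1 - ‖w‖ ^ 2) := by
  have hp : (1 - ‖w‖ ^ 2 : ℝ) ≠ 0 := (one_sub_normSq_pos (by simpa using hw)).ne'
  have hd : (w - z) ≠ 0 := sub_ne_zero.2 hwz
  have hdn : ‖w - z‖ ≠ 0 := by simpa using hd
  have e : starRingEnd ℂ ((1 - starRingEnd ℂ w * z) / (w - z))
      = ((1 - ‖w‖ ^ 2) / ‖w - z‖ ^ 2) • (w - z) + w := by
    have h1 : (1 - starRingEnd ℂ w * z) / (w - z)
        = ((1 - ‖w‖ ^ 2 : ℝ) : ℂ) / (w - z) + starRingEnd ℂ w := by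
      have : ((‖w‖ ^ 2 : ℝ) : ℂ) = starRingEnd ℂ w * w := by
        rw [mul_comm, Complex.mul_conj, Complex.normSq_eq_norm_sq]
      rw [Complex.ofReal_sub, this]
      field_simp
      push_cast
      ring
    rw [h1, map_add, map_div₀, Complex.conj_conj, Complex.conj_ofReal, Complex.real_smul]
    congr 1
    have h2 : ((‖w - z‖ ^ 2 : ℝ) : ℂ) = starRingEnd ℂ (w - z) * (w - z) := by
      rw [mul_comm, Complex.mul_conj, Complex.normSq_eq_norm_sq]
    have h3 : starRingEnd ℂ (w - z) ≠ 0 := (map_ne_zero _).2 hd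
    rw [Complex.ofReal_div, h2]
    field_simp
  rw [e, map_add, map_smul]
  simp only [smul_eq_mul]
  field_simp

/-- A functional form of the isoperimetric inequality in the hyperbolic disk. -/
lemma hyperbolic_isoperimetric {φ : ℂ → ℝ} (hφ : ContDiff ℝ 1 φ) (hc : HasCompactSupport φ)
    (hs : tsupport φ ⊆ ball 0 1) (hnn : ∀ z, 0 ≤ φ z) {E : Set ℂ} (hE : MeasurableSet E)
    (h1 : ∀ z ∈ E, φ z = 1) :
    2 * √((hypMeasure E).toReal * (1 + (hypMeasure E).toReal))
      ≤ (∫ w, ‖fderiv ℝ φ w‖ / (1 - ‖w‖ ^ 2)) / Real.pi := by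
  have hpi := Real.pi_pos
  set K := tsupport φ with hKdef
  have hK : IsCompact K := hc
  have hD0 : ∀ w ∉ K, fderiv ℝ φ w = 0 := fun w hw =>
    image_eq_zero_of_notMem_tsupport fun h => hw (tsupport_fderiv_subset ℝ h)
  have hDc : Continuous (fderiv ℝ φ) := hφ.continuous_fderiv (by norm_num)
  have hpos : ∀ w ∈ K, 0 < 1 - ‖w‖ ^ 2 := fun w hw => one_sub_normSq_pos (hs hw)
  have hlt : ∀ w ∈ K, ‖w‖ < 1 := fun w hw => by simpa using hs hw
  set D := fderiv ℝ φ with hD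
  set J := (∫ w, φ w * ((1 - ‖w‖ ^ 2) ^ 2)⁻¹) / Real.pi with hJ
  have hJ0 : 0 ≤ J := div_nonneg (integral_nonneg fun w => by have := hnn w; positivity) hpi.le
  have hEJ : hypMeasure E ≤ ENNReal.ofReal J :=
    measure_le_integral_of_eq_one hφ.continuous hc hs hnn hE h1
  have hEt : hypMeasure E ≠ ⊤ := ne_top_of_le_ne_top ENNReal.ofReal_ne_top hEJ
  set ν := (hypMeasure E).toReal with hν
  have hν0 : 0 ≤ ν := ENNReal.toReal_nonneg
  have hνJ : ν ≤ J := ENNReal.toReal_le_of_le_ofReal hJ0 hEJ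
  set k : ℂ → ℂ → ℂ := fun w z => (1 - starRingEnd ℂ w * z) / (w - z) with hk
  have iN : Integrable fun w => ‖D w‖ / (1 - ‖w‖ ^ 2) := by
    refine integrable_of_continuousAt_of_isCompact hK (fun w hw => by simp [hD0 w hw]) fun w hw => ?_
    exact hDc.norm.continuousAt.div (by fun_prop) (hpos w hw).ne'
  have i1 : Integrable fun w => D w w / (1 - ‖w‖ ^ 2) := by
    refine integrable_of_continuousAt_of_isCompact hK (fun w hw => by simp [hD0 w hw]) fun w hw => ?_
    exact (hDc.clm_apply continuous_id).continuousAt.div (by fun_prop) (hpos w hw).ne'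
  set F : ℂ → ℂ → ℝ := fun z w => D w (starRingEnd ℂ (k w z)) / (1 - ‖w‖ ^ 2) with hF
  have hFz : ∀ z ∈ E, ∫ w, F z w = -(2 * Real.pi) * (1 + J) := by
    intro z hz
    have hr := integral_fderiv_radial hφ hc z
    rw [h1 z hz, mul_one] at hr
    have hi : Integrable fun w => D w (w - z) / ‖w - z‖ ^ 2 :=
      Integrable.of_integral_ne_zero (by rw [hr]; simp [hpi.ne'])
    have hae : F z =ᵐ[volume] fun w => D w (w - z) / ‖w - z‖ ^ 2 + D w w / (1 - ‖w‖ ^ 2) := by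
      filter_upwards [Measure.ae_ne volume z] with w hwz
      by_cases hw : w ∈ K
      · exact fderiv_kernel_eq (D w) (hlt w hw) hwz
      · simp [hF, hD0 w hw]
    rw [integral_congr_ae hae, integral_add hi i1, hr, integral_fderiv_self_div hφ hc hs, hJ]
    field_simp
    ring
  have hFm : Measurable (Function.uncurry F) := by
    have hkm : Measurable fun p : ℂ × ℂ => starRingEnd ℂ (k p.2 p.1) := by
      have : Continuous (starRingEnd ℂ) := Complex.continuous_conj
      exact this.measurable.comp (by fun_prop)
    have := (isBoundedBilinearMap_apply (𝕜 := ℝ) (E := ℂ) (F := ℝ)).continuous.measurable.comp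
      ((hDc.measurable.comp measurable_snd).prodMk hkm)
    exact this.div (by fun_prop)
  have hFb : ∀ z w, ‖F z w‖ₑ ≤ ‖‖D w‖ / (1 - ‖w‖ ^ 2)‖ₑ * ‖k w z‖ₑ := by
    intro z w
    rw [← enorm_norm (k w z), ← enorm_mul, hF]
    simp only [enorm_le_iff_norm_le]
    rw [norm_div, norm_mul, norm_div, norm_norm, norm_norm, div_mul_eq_mul_div]
    gcongr
    refine ((D w).le_opNorm _).trans (le_of_eq ?_)
    rw [RCLike.norm_conj]
  have : SFinite hypMeasure := by unfold hypMeasure; infer_instance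
  have hFi : Integrable (Function.uncurry F) ((hypMeasure.restrict E).prod volume) := by
    refine ⟨hFm.aestronglyMeasurable, ?_⟩
    rw [HasFiniteIntegral, lintegral_prod_symm _ hFm.enorm.aemeasurable]
    set C := 4 * (ENNReal.ofReal 2 * hypMeasure E + ENNReal.ofReal 1) with hC
    have hCt : C < ⊤ := ENNReal.mul_lt_top (by norm_num)
      (ENNReal.add_lt_top.2 ⟨ENNReal.mul_lt_top (by simp) hEt.lt_top, by simp⟩)
    calc ∫⁻ w, ∫⁻ z in E, ‖F z w‖ₑ ∂hypMeasure
        ≤ ∫⁻ w, ‖‖D w‖ / (1 - ‖w‖ ^ 2)‖ₑ * C := by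
          refine lintegral_mono fun w => ?_
          by_cases hw : w ∈ K
          · refine (lintegral_mono fun z => hFb z w).trans ?_
            rw [lintegral_const_mul' _ _ enorm_ne_top]
            gcongr
            exact lintegral_enorm_hypMeasure_kernel_le (hlt w hw) E
          · simp [hF, hD0 w hw]
      _ = (∫⁻ w, ‖‖D w‖ / (1 - ‖w‖ ^ 2)‖ₑ) * C := lintegral_mul_const' _ _ hCt.ne
      _ < ⊤ := ENNReal.mul_lt_top iN.2 hCt
  have hswap := integral_integral_swap hFi
  set s := √(ν * (1 + ν)) with hsdef
  have hs0 : 0 ≤ s := Real.sqrt_nonneg _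
  have hs2 : s ^ 2 = ν * (1 + ν) := Real.sq_sqrt (by positivity)
  have hL : ∫ z in E, (∫ w, F z w) ∂hypMeasure = -(2 * Real.pi) * (1 + J) * ν := by
    rw [setIntegral_congr_fun hE (fun z hz => hFz z hz)]
    simp [Measure.real, hν, mul_comm]
  have hR : ∀ w, |∫ z in E, F z w ∂hypMeasure| ≤ s * (‖D w‖ / (1 - ‖w‖ ^ 2)) := by
    intro w
    by_cases hw : w ∈ K
    · have hp := hpos w hw
      have e : ∫ z in E, F z w ∂hypMeasure
          = D w (starRingEnd ℂ (∫ z in E, k w z ∂hypMeasure)) / (1 - ‖w‖ ^ 2) := by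
        rw [hF]
        simp only
        rw [integral_div]
        congr 1
        exact ContinuousLinearMap.integral_comp_comm ((D w).comp (Complex.conjCLE : ℂ →L[ℝ] ℂ))
          (integrableOn_hypMeasure_kernel (hlt w hw) hEt)
      rw [e, abs_div, abs_of_pos hp, mul_div_assoc']
      gcongr
      refine ((D w).le_opNorm _).trans ?_
      rw [RCLike.norm_conj, mul_comm]
      gcongr
      exact norm_setIntegral_hypMeasure_kernel_le (hlt w hw) hEt
    · simp [hF, hD0 w hw]
  have hfin : 2 * Real.pi * (1 + J) * ν ≤ s * ∫ w, ‖D w‖ / (1 - ‖w‖ ^ 2) := by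
    have h2 : |∫ w, ∫ z in E, F z w ∂hypMeasure| ≤ ∫ w, s * (‖D w‖ / (1 - ‖w‖ ^ 2)) := by
      rw [← Real.norm_eq_abs]
      exact norm_integral_le_of_norm_le (iN.const_mul s) (Filter.Eventually.of_forall hR)
    rw [← hswap, hL, integral_const_mul] at h2
    refine le_trans ?_ h2
    refine le_trans (le_of_eq ?_) (neg_le_abs _)
    ring
  rcases hs0.eq_or_lt with h | hspos
  · rw [← h, mul_zero]
    refine div_nonneg (integral_nonneg fun w => ?_) hpi.le
    by_cases hw : w ∈ K
    · exact div_nonneg (norm_nonneg _) (hpos w hw).le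
    · simp [hD0 w hw]
  · rw [le_div_iff₀ hpi]
    refine le_of_mul_le_mul_left ?_ hspos
    refine le_trans ?_ hfin
    have : s * (2 * s * Real.pi) = 2 * Real.pi * (1 + ν) * ν := by
      linear_combination 2 * Real.pi * hs2
    rw [this]
    gcongr

/-- The weighted modulus `|f|^κ (1-|z|²)`. -/
noncomputable def wmod (f : ℂ → ℂ) (κ : ℝ) (z : ℂ) : ℝ := ‖f z‖ ^ κ * (1 - ‖z‖ ^ 2)

/-- The gradient of `log |f|^κ (1-|z|²)`. -/
noncomputable def wgrad (f : ℂ → ℂ) (κ : ℝ) (z : ℂ) : ℂ :=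
  (κ : ℂ) * starRingEnd ℂ (deriv f z / f z) - (2 / (1 - ‖z‖ ^ 2) : ℝ) * z

section
variable {f : ℂ → ℂ} {κ : ℝ}

lemma continuous_wmod (hf : Differentiable ℂ f) (hκ : 0 < κ) : Continuous (wmod f κ) := by
  unfold wmod
  have := hf.continuous
  exact (this.norm.rpow_const fun z => Or.inr hκ.le).mul (by fun_prop)

lemma mem_ball_of_wmod_pos {z : ℂ} (h : 0 < wmod f κ z) : z ∈ ball (0 : ℂ) 1 := by
  have h1 : 0 ≤ ‖f z‖ ^ κ := by positivity
  have h2 : 0 < 1 - ‖z‖ ^ 2 := by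
    by_contra hn
    exact absurd h (not_lt.2 (mul_nonpos_of_nonneg_of_nonpos h1 (not_lt.1 hn)))
  have : ‖z‖ < 1 := by nlinarith [norm_nonneg z]
  simpa using this

lemma ne_zero_of_wmod_pos (hκ : 0 < κ) {z : ℂ} (h : 0 < wmod f κ z) : f z ≠ 0 := by
  intro h0
  simp [wmod, h0, Real.zero_rpow hκ.ne'] at h

lemma isCompact_wmod_ge (hf : Differentiable ℂ f) (hκ : 0 < κ) {t : ℝ} (ht : 0 < t) :
    IsCompact {z | t ≤ wmod f κ z} := by
  refine (isCompact_closedBall (0 : ℂ) 1).of_isClosed_subset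
    (isClosed_le continuous_const (continuous_wmod hf hκ)) fun z hz => ?_
  exact ball_subset_closedBall (mem_ball_of_wmod_pos (ht.trans_le hz))

lemma hasFDerivAt_wmod (hf : Differentiable ℂ f) (hκ : 0 < κ) {z : ℂ} (h : 0 < wmod f κ z) :
    HasFDerivAt (wmod f κ) (wmod f κ z • innerSL ℝ (wgrad f κ z)) z := by
  have hz := one_sub_normSq_pos (mem_ball_of_wmod_pos h)
  have hfz := ne_zero_of_wmod_pos hκ h
  have hn : 0 < ‖f z‖ := norm_pos_iff.2 hfz
  have hN : HasFDerivAt (fun v : ℂ => ‖v‖ ^ 2) (2 • (innerSL ℝ z)) z :=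
    (hasStrictFDerivAt_norm_sq z).hasFDerivAt
  have h1 : HasFDerivAt (fun v => ‖f v‖ ^ 2) _ z :=
    ((hf z).hasDerivAt.hasFDerivAt.restrictScalars ℝ).norm_sq
  have h2 := (Real.hasDerivAt_rpow_const (p := κ / 2) (Or.inl (pow_pos hn 2).ne')).comp_hasFDerivAt z h1
  have e0 : ∀ v, (‖f v‖ ^ 2) ^ (κ / 2) = ‖f v‖ ^ κ := by
    intro v
    rw [← Real.rpow_natCast, ← Real.rpow_mul (norm_nonneg _)]
    congr 1
    push_cast; ring
  have hfun : wmod f κ = fun v => (‖f v‖ ^ 2) ^ (κ / 2) * (1 - ‖v‖ ^ 2) := by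
    ext v
    rw [wmod, e0]
  have h3 := h2.mul (hN.const_sub 1)
  have e2 : (‖f z‖ ^ 2) ^ (κ / 2 - 1) = ‖f z‖ ^ κ / ‖f z‖ ^ 2 := by
    rw [Real.rpow_sub_one (pow_pos hn 2).ne', e0]
  rw [hfun]
  refine h3.congr_fderiv ?_
  refine ContinuousLinearMap.ext fun v => ?_
  have e3 : deriv f z / f z = ((‖f z‖ ^ 2)⁻¹ : ℝ) * (starRingEnd ℂ (f z) * deriv f z) := by
    rw [← Complex.normSq_eq_norm_sq, Complex.ofReal_inv, ← Complex.mul_conj]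
    have : starRingEnd ℂ (f z) ≠ 0 := (map_ne_zero _).2 hfz
    field_simp
  have e4 : inner ℝ (wgrad f κ z) v = κ * ((‖f z‖ ^ 2)⁻¹ * (inner ℝ (f z) (deriv f z * v)))
      - 2 / (1 - ‖z‖ ^ 2) * inner ℝ z v := by
    simp only [wgrad, e3, Complex.inner, map_sub, map_mul, Complex.conj_conj, Complex.conj_ofReal]
    rw [← Complex.re_ofReal_mul, ← Complex.re_ofReal_mul, ← Complex.re_ofReal_mul, ← Complex.sub_re]
    congr 1
    ring
  simp [e0, e2, e4]
  field_simp
  ring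
end

lemma integral_divergence_eq_zero {V : ℂ → ℂ} (hV : ContDiff ℝ 1 V) (hc : HasCompactSupport V) :
    ∫ z, ((fderiv ℝ V z 1).re + (fderiv ℝ V z Complex.I).im) = 0 := by
  have hDc : Continuous (fderiv ℝ V) := hV.continuous_fderiv (by norm_num)
  have hi : ∀ v, Integrable fun z => fderiv ℝ V z v := fun v =>
    (hDc.clm_apply continuous_const).integrable_of_hasCompactSupport
      (hc.fderiv_apply (𝕜 := ℝ) v)
  have hz : ∀ v, ∫ z, fderiv ℝ V z v = 0 := by
    intro v
    have := integral_mul_fderiv_eq_neg_fderiv_mul_of_integrable (μ := (volume : Measure ℂ))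
      (f := fun _ => (1 : ℂ)) (g := V) (v := v) (by simp) (by simpa using hi v)
      (by simpa using hV.continuous.integrable_of_hasCompactSupport hc)
      (fun x _ => differentiableAt_const _) (fun x _ => hV.differentiable (by norm_num) x)
    simpa using this
  have h1 : ∫ z, (fderiv ℝ V z 1).re = 0 := by
    have := integral_re (hi 1)
    rw [hz 1] at this
    simpa using this
  have h2 : ∫ z, (fderiv ℝ V z Complex.I).im = 0 := by
    have := integral_im (hi Complex.I)
    rw [hz Complex.I] at this
    simpa using this
  refine (integral_add (hi 1).re (hi Complex.I).im).trans ?_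
  exact (congrArg₂ (· + ·) h1 h2).trans (by simp)

section
variable {f : ℂ → ℂ} {κ : ℝ}

lemma contDiff_deriv_of_differentiable (hf : Differentiable ℂ f) : ContDiff ℂ 2 (deriv f) := by
  exact ((contDiff_succ_iff_deriv (n := 2)).1 hf.contDiff).2.2

lemma contDiffAt_wmod (hf : Differentiable ℂ f) (hκ : 0 < κ) {z : ℂ} (h : 0 < wmod f κ z) :
    ContDiffAt ℝ 1 (wmod f κ) z := by
  have hfz := ne_zero_of_wmod_pos hκ h
  have h1 : ContDiffAt ℝ 1 f z := (hf.contDiff (n := 1)).contDiffAt.restrict_scalars ℝ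
  have hns : ContDiff ℝ 1 fun w : ℂ => ‖w‖ ^ 2 := contDiff_norm_sq ℝ
  exact ((h1.norm ℝ hfz).rpow_const_of_ne (by simpa using hfz)).mul
    (contDiffAt_const.sub hns.contDiffAt)

lemma contDiffAt_wgrad (hf : Differentiable ℂ f) (hκ : 0 < κ) {z : ℂ} (h : 0 < wmod f κ z) :
    ContDiffAt ℝ 1 (wgrad f κ) z := by
  have hfz := ne_zero_of_wmod_pos hκ h
  have hz := one_sub_normSq_pos (mem_ball_of_wmod_pos h)
  have h1 : ContDiffAt ℂ 1 f z := (hf.contDiff (n := 1)).contDiffAt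
  have h2 : ContDiffAt ℂ 1 (deriv f) z :=
    ((contDiff_deriv_of_differentiable hf).of_le (by norm_num)).contDiffAt
  have hns : ContDiff ℝ 1 fun w : ℂ => ‖w‖ ^ 2 := contDiff_norm_sq ℝ
  have h3 : ContDiffAt ℝ 1 (fun z => deriv f z / f z) z := (h2.div h1 hfz).restrict_scalars ℝ
  have h4 : ContDiffAt ℝ 1 (fun z => starRingEnd ℂ (deriv f z / f z)) z :=
    Complex.conjCLE.contDiff.contDiffAt.comp z h3
  have h5 : ContDiffAt ℝ 1 (fun z : ℂ => (2 / (1 - ‖z‖ ^ 2) : ℝ)) z :=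
    contDiffAt_const.div (contDiffAt_const.sub hns.contDiffAt) hz.ne'
  have h6 : ContDiffAt ℝ 1 (fun z : ℂ => ((2 / (1 - ‖z‖ ^ 2) : ℝ) : ℂ)) z :=
    Complex.ofRealCLM.contDiff.contDiffAt.comp z h5
  exact (contDiffAt_const.mul h4).sub (h6.mul contDiffAt_id)

lemma divergence_wgrad (hf : Differentiable ℂ f) (hκ : 0 < κ) {z : ℂ} (h : 0 < wmod f κ z) :
    (fderiv ℝ (wgrad f κ) z 1).re + (fderiv ℝ (wgrad f κ) z Complex.I).im
      = -4 * ((1 - ‖z‖ ^ 2) ^ 2)⁻¹ := by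
  have hfz := ne_zero_of_wmod_pos hκ h
  have hz := one_sub_normSq_pos (mem_ball_of_wmod_pos h)
  have h1 : DifferentiableAt ℂ (fun z => deriv f z / f z) z :=
    ((contDiff_deriv_of_differentiable hf).differentiable (by norm_num) z).div (hf z) hfz
  have h2 := Complex.conjCLE.hasFDerivAt.comp z (h1.hasDerivAt.hasFDerivAt.restrictScalars ℝ)
  have h3 := h2.const_mul (κ : ℂ)
  have hN : HasFDerivAt (fun v : ℂ => ‖v‖ ^ 2) (2 • (innerSL ℝ z)) z :=
    (hasStrictFDerivAt_norm_sq z).hasFDerivAt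
  have hl : HasDerivAt (fun t : ℝ => 2 / (1 - t)) (2 / (1 - ‖z‖ ^ 2) ^ 2) (‖z‖ ^ 2) := by
    have := (hasDerivAt_const (‖z‖ ^ 2) (2 : ℝ)).div ((hasDerivAt_id (‖z‖ ^ 2)).const_sub 1) hz.ne'
    refine this.congr_deriv ?_
    simp
  have h4 := Complex.ofRealCLM.hasFDerivAt.comp z (hl.comp_hasFDerivAt z hN)
  have h5 := h3.sub (h4.mul (hasFDerivAt_id (𝕜 := ℝ) z))
  have h6 : fderiv ℝ (wgrad f κ) z = _ := HasFDerivAt.fderiv h5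
  rw [h6]
  simp [Complex.inner]
  have e : ‖z‖ ^ 2 = z.re * z.re + z.im * z.im := by
    rw [← Complex.normSq_eq_norm_sq, Complex.normSq_apply]
  have a1 : (2 / (1 - (‖z‖ : ℂ) ^ 2)) = ((2 / (1 - ‖z‖ ^ 2) : ℝ) : ℂ) := by push_cast; rfl
  have a2 : (2 / (1 - (‖z‖ : ℂ) ^ 2) ^ 2) = ((2 / (1 - ‖z‖ ^ 2) ^ 2 : ℝ) : ℂ) := by push_cast; rfl
  rw [a1, a2]
  simp only [Complex.ofReal_re, Complex.ofReal_im]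
  field_simp
  linear_combination 4 * e

lemma integral_wmod_identity (hf : Differentiable ℂ f) (hκ : 0 < κ) {t : ℝ} (ht : 0 < t)
    {χ ψ : ℝ → ℝ} (hχ : ∀ s, HasDerivAt χ (ψ s) s) (hψ : Continuous ψ)
    (hχ0 : ∀ s ≤ t, χ s = 0) (hψ0 : ∀ s ≤ t, ψ s = 0) :
    ∫ z, ψ (wmod f κ z) * wmod f κ z * ‖wgrad f κ z‖ ^ 2
      = 4 * ∫ z, χ (wmod f κ z) * ((1 - ‖z‖ ^ 2) ^ 2)⁻¹ := by
  set U := wmod f κ with hU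
  set G := wgrad f κ with hG
  set K := {z | t ≤ U z} with hKdef
  have hK : IsCompact K := isCompact_wmod_ge hf hκ ht
  have hpos : ∀ z ∈ K, 0 < U z := fun z hz => ht.trans_le hz
  have hχK : ∀ z ∉ K, χ (U z) = 0 := fun z hz => hχ0 _ (not_le.1 hz).le
  have hψK : ∀ z ∉ K, ψ (U z) = 0 := fun z hz => hψ0 _ (not_le.1 hz).le
  have hUc : Continuous U := continuous_wmod hf hκ
  have hχ1 : ContDiff ℝ 1 χ := by
    rw [contDiff_one_iff_deriv]
    refine ⟨fun s => (hχ s).differentiableAt, ?_⟩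
    rwa [show deriv χ = ψ from funext fun s => (hχ s).deriv]
  set V : ℂ → ℂ := fun z => χ (U z) • G z with hV
  have hV0 : ∀ z ∉ K, V z = 0 := fun z hz => by simp [hV, hχK z hz]
  have hV1 : ContDiff ℝ 1 V := by
    refine contDiff_of_contDiffAt_of_isCompact hK hV0 fun z hz => ?_
    exact (hχ1.contDiffAt.comp z (contDiffAt_wmod hf hκ (hpos z hz))).smul
      (contDiffAt_wgrad hf hκ (hpos z hz))
  have hVc : HasCompactSupport V :=
    hK.of_isClosed_subset (isClosed_tsupport V) (tsupport_subset_of_isCompact hK hV0)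
  have i1 : Integrable fun z => ψ (U z) * U z * ‖G z‖ ^ 2 := by
    refine integrable_of_continuousAt_of_isCompact hK (fun z hz => by simp [hψK z hz]) fun z hz => ?_
    have hGc : ContinuousAt G z := (contDiffAt_wgrad hf hκ (hpos z hz)).continuousAt
    exact ((hψ.comp hUc).continuousAt.mul hUc.continuousAt).mul (hGc.norm.pow 2)
  have i2 : Integrable fun z => χ (U z) * ((1 - ‖z‖ ^ 2) ^ 2)⁻¹ := by
    refine integrable_of_continuousAt_of_isCompact hK (fun z hz => by simp [hχK z hz]) fun z hz => ?_
    have hne := (one_sub_normSq_pos (mem_ball_of_wmod_pos (hpos z hz))).ne'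
    exact (hχ1.continuous.comp hUc).continuousAt.mul
      (ContinuousAt.inv₀ (by fun_prop) (pow_ne_zero 2 hne))
  have key := integral_divergence_eq_zero hV1 hVc
  have hpt : ∀ z, (fderiv ℝ V z 1).re + (fderiv ℝ V z Complex.I).im
      = ψ (U z) * U z * ‖G z‖ ^ 2 - 4 * (χ (U z) * ((1 - ‖z‖ ^ 2) ^ 2)⁻¹) := by
    intro z
    by_cases hz : z ∈ K
    · have hd := hpos z hz
      have h1 := (hχ (U z)).comp_hasFDerivAt z (hasFDerivAt_wmod hf hκ hd)
      have h2 := ((contDiffAt_wgrad hf hκ hd).differentiableAt (by norm_num)).hasFDerivAt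
      have h3 : fderiv ℝ V z = _ := (h1.smul h2).fderiv
      have h4 := divergence_wgrad hf hκ hd
      have e : ‖G z‖ ^ 2 = (G z).re * (G z).re + (G z).im * (G z).im := by
        rw [← Complex.normSq_eq_norm_sq, Complex.normSq_apply]
      rw [h3, e]
      simp [Complex.inner, ← hU, ← hG] at h4 ⊢
      linear_combination χ (U z) * h4
    · have h5 : V =ᶠ[nhds z] fun _ => 0 := by
        filter_upwards [hK.isClosed.isOpen_compl.mem_nhds hz] with v hv using hV0 v hv
      simp [h5.fderiv_eq, hψK z hz, hχK z hz]
  simp_rw [hpt] at key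
  rw [integral_sub i1 (i2.const_mul 4), integral_const_mul] at key
  linarith
end

lemma exists_cutoff {a b ε : ℝ} (hab : a < b) (hε : 0 < ε) :
    ∃ (ψ χ : ℝ → ℝ) (c : ℝ), Continuous ψ ∧ (∀ s, HasDerivAt χ (ψ s) s) ∧ (∀ s, 0 ≤ ψ s) ∧
      (∀ s, ψ s ≤ 1) ∧ (∀ s ≤ a, ψ s = 0) ∧ (∀ s, b ≤ s → ψ s = 0) ∧ (∀ s ≤ a, χ s = 0) ∧
      (∀ s, b ≤ s → χ s = c) ∧ (∀ s, 0 ≤ χ s) ∧ (∀ s, χ s ≤ c) ∧ b - a - ε ≤ c := by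
  set ψ : ℝ → ℝ := fun s => max 0 (min 1 (min (2 / ε * (s - a)) (2 / ε * (b - s)))) with hψ
  have hψc : Continuous ψ := by fun_prop
  have hn : 0 < 2 / ε := by positivity
  have h0 : ∀ s, 0 ≤ ψ s := fun s => le_max_left _ _
  have ha : ∀ s ≤ a, ψ s = 0 := fun s hs => max_eq_left <|
    (min_le_right _ _).trans <| (min_le_left _ _).trans <|
      mul_nonpos_of_nonneg_of_nonpos hn.le (by linarith)
  have hb : ∀ s, b ≤ s → ψ s = 0 := fun s hs => max_eq_left <|
    (min_le_right _ _).trans <| (min_le_right _ _).trans <|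
      mul_nonpos_of_nonneg_of_nonpos hn.le (by linarith)
  have hi : ∀ x y, IntervalIntegrable ψ volume x y := fun x y => hψc.intervalIntegrable x y
  set χ : ℝ → ℝ := fun s => ∫ x in a..s, ψ x with hχ
  have hχd : ∀ s, HasDerivAt χ (ψ s) s := fun s =>
    intervalIntegral.integral_hasDerivAt_right (hi _ _) (hψc.stronglyMeasurableAtFilter _ _)
      hψc.continuousAt
  have hmono : Monotone χ := monotone_of_hasDerivAt_nonneg hχd h0
  have hχa : ∀ s ≤ a, χ s = 0 := by
    intro s hs
    rw [hχ]
    simp only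
    rw [intervalIntegral.integral_symm, intervalIntegral.integral_congr (g := fun _ => 0)]
    · simp
    · intro x hx
      rw [uIcc_of_le hs] at hx
      exact ha x hx.2
  have hχb : ∀ s, b ≤ s → χ s = χ b := by
    intro s hs
    have := intervalIntegral.integral_add_adjacent_intervals (hi a b) (hi b s)
    have h2 : ∫ x in b..s, ψ x = 0 := by
      rw [intervalIntegral.integral_congr (g := fun _ => 0)]
      · simp
      · intro x hx
        rw [uIcc_of_le hs] at hx
        exact hb x hx.1
    rw [h2, add_zero] at this
    exact this.symm
  refine ⟨ψ, χ, χ b, hψc, hχd, h0, fun s => max_le zero_le_one (min_le_left _ _), ha, hb, hχa, hχb,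
    fun s => ?_, fun s => ?_, ?_⟩
  · rcases le_total s a with h | h
    · rw [hχa s h]
    · rw [← hχa a le_rfl]; exact hmono h
  · rcases le_total s b with h | h
    · exact hmono h
    · rw [hχb s h]
  · by_cases hbig : b - a ≤ ε
    · have := hmono hab.le
      rw [hχa a le_rfl] at this
      linarith
    · push Not at hbig
      have h1 : ∫ x in (a + ε / 2)..(b - ε / 2), ψ x ≤ χ b :=
        intervalIntegral.integral_mono_interval (by linarith) (by linarith) (by linarith)
          (Filter.Eventually.of_forall h0) (hi _ _)
      have h2 : ∫ x in (a + ε / 2)..(b - ε / 2), ψ x = ∫ x in (a + ε / 2)..(b - ε / 2), (1 : ℝ) := by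
        refine intervalIntegral.integral_congr fun x hx => ?_
        rw [uIcc_of_le (by linarith)] at hx
        have e1 : 1 ≤ 2 / ε * (x - a) := by
          rw [div_mul_eq_mul_div, le_div_iff₀ hε]; linarith [hx.1]
        have e2 : 1 ≤ 2 / ε * (b - x) := by
          rw [div_mul_eq_mul_div, le_div_iff₀ hε]; linarith [hx.2]
        simp only [hψ]
        rw [min_eq_left (le_min e1 e2)]
        simp
      rw [h2, intervalIntegral.integral_const, smul_eq_mul, mul_one] at h1
      linarith

lemma integral_le_mul_hypMeasure {g : ℂ → ℝ} {S : Set ℂ} {c : ℝ} (hS : MeasurableSet S)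
    (hSb : S ⊆ ball 0 1) (hSt : hypMeasure S ≠ ⊤) (hc : 0 ≤ c) (h0 : ∀ z, 0 ≤ g z)
    (h1 : ∀ z ∈ S, g z ≤ c) (h2 : ∀ z ∉ S, g z = 0)
    (hi : Integrable fun z => g z * ((1 - ‖z‖ ^ 2) ^ 2)⁻¹) :
    ∫ z, g z * ((1 - ‖z‖ ^ 2) ^ 2)⁻¹ ≤ Real.pi * (c * (hypMeasure S).toReal) := by
  have hpi := Real.pi_pos
  rw [← div_le_iff₀' hpi, div_eq_mul_inv, ← integral_mul_const]
  rw [← ENNReal.ofReal_le_ofReal_iff (by positivity), ENNReal.ofReal_mul hc, ENNReal.ofReal_toReal hSt,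
    ofReal_integral_eq_lintegral_ofReal (hi.mul_const _)
      (Filter.Eventually.of_forall fun w => by have := h0 w; positivity),
    ← lintegral_indicator_one hS, lintegral_hypMeasure, ← lintegral_const_mul' _ _ (by simp),
    ← lintegral_indicator measurableSet_ball]
  refine lintegral_mono fun z => ?_
  by_cases hz : z ∈ S
  · simp only [hSb hz, indicator_of_mem, hz, Pi.one_apply, mul_one]
    rw [← ENNReal.ofReal_mul hc]
    apply ENNReal.ofReal_le_ofReal
    rw [mul_assoc, div_eq_mul_inv]
    exact mul_le_mul_of_nonneg_right (h1 z hz) (by positivity)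
  · simp [h2 z hz]

lemma hypMeasure_lt_top_of_isCompact {K : Set ℂ} (hK : IsCompact K) (hKb : K ⊆ ball 0 1) :
    hypMeasure K < ⊤ := by
  have hc : ContinuousOn (fun z : ℂ => ((1 - ‖z‖ ^ 2) ^ 2)⁻¹ / Real.pi) K := by
    intro z hz
    have hne := (one_sub_normSq_pos (hKb hz)).ne'
    have hcz : ContinuousAt (fun z : ℂ => (1 - ‖z‖ ^ 2) ^ 2) z := by fun_prop
    exact ((hcz.inv₀ (pow_ne_zero 2 hne)).div_const _).continuousWithinAt
  have hi : IntegrableOn (fun z : ℂ => ((1 - ‖z‖ ^ 2) ^ 2)⁻¹ / Real.pi) K := hc.integrableOn_compact hK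
  refine lt_of_le_of_lt ?_ hi.lintegral_lt_top
  rw [← lintegral_indicator_one hK.measurableSet, lintegral_hypMeasure,
    ← lintegral_indicator hK.measurableSet]
  refine (setLIntegral_le_lintegral _ _).trans (lintegral_mono fun z => ?_)
  by_cases hz : z ∈ K <;> simp [hz]

/-- Distribution function of the weighted modulus with respect to the hyperbolic measure. -/
noncomputable def wdist (f : ℂ → ℂ) (κ t : ℝ) : ℝ := (hypMeasure {z | t < wmod f κ z}).toReal

section
variable {f : ℂ → ℂ} {κ : ℝ}

lemma hypMeasure_wmod_gt_ne_top (hf : Differentiable ℂ f) (hκ : 0 < κ) {t : ℝ} (ht : 0 < t) :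
    hypMeasure {z | t < wmod f κ z} ≠ ⊤ := by
  refine ((measure_mono fun z hz => ?_).trans_lt (hypMeasure_lt_top_of_isCompact
    (isCompact_wmod_ge hf hκ ht) fun z hz => ?_)).ne
  · exact (mem_ofPred.1 hz).le
  · exact mem_ball_of_wmod_pos (ht.trans_le hz)

lemma wdist_level_ineq (hf : Differentiable ℂ f) (hκ : 0 < κ) {t t' : ℝ} (ht : 0 < t) (htt : t < t') :
    (t' - t) * (wdist f κ t' * (1 + wdist f κ t'))
      ≤ t' * (wdist f κ t * (wdist f κ t - wdist f κ t')) := by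
  have hpi := Real.pi_pos
  have ht' : 0 < t' := ht.trans htt
  set U := wmod f κ with hU
  set G := wgrad f κ with hG
  set ν := wdist f κ t with hν
  set ν' := wdist f κ t' with hν'
  have hUc : Continuous U := continuous_wmod hf hκ
  have hEt : ∀ {s : ℝ}, 0 < s → hypMeasure {z | s < U z} ≠ ⊤ := fun hs =>
    hypMeasure_wmod_gt_ne_top hf hκ hs
  have hEm : ∀ s : ℝ, MeasurableSet {z | s < U z} := fun s => measurableSet_lt measurable_const hUc.measurable
  have hν0 : 0 ≤ ν := ENNReal.toReal_nonneg
  have hν0' : 0 ≤ ν' := ENNReal.toReal_nonneg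
  have hsub : {z | t' < U z} ⊆ {z | t < U z} := fun z hz => htt.trans hz
  have hdiff : (hypMeasure ({z | t < U z} \ {z | t' < U z})).toReal = ν - ν' := by
    rw [measure_sdiff hsub (hEm t').nullMeasurableSet (hEt ht'),
      ENNReal.toReal_sub_of_le (measure_mono hsub) (hEt ht)]
    rfl
  have hdiff0 : 0 ≤ ν - ν' := by rw [← hdiff]; exact ENNReal.toReal_nonneg
  -- the inequality holds with `c` in place of `t' - t` for cut-offs of total increment `c`
  suffices hε : ∀ ε > 0, (t' - t - ε) * (ν' * (1 + ν')) ≤ t' * (ν * (ν - ν')) by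
    have hlim : Filter.Tendsto (fun ε => (t' - t - ε) * (ν' * (1 + ν'))) (nhdsWithin 0 (Ioi 0))
        (nhds ((t' - t - 0) * (ν' * (1 + ν')))) :=
      (Continuous.tendsto (by fun_prop) 0).mono_left nhdsWithin_le_nhds
    rw [sub_zero] at hlim
    exact le_of_tendsto hlim (by filter_upwards [self_mem_nhdsWithin] with ε hε' using hε ε hε')
  intro ε hε
  obtain ⟨ψ, χ, c, hψc, hχ, hψ0, hψ1, hψa, hψb, hχa, hχb, hχ0, hχc, hcε⟩ := exists_cutoff htt hε
  have hc0 : 0 ≤ c := (hχ0 t).trans (hχc t)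
  suffices h : c * (ν' * (1 + ν')) ≤ t' * (ν * (ν - ν')) by
    refine le_trans ?_ h
    gcongr
  rcases hc0.eq_or_lt with hc | hc
  · rw [← hc, zero_mul]; positivity
  set K := {z | t ≤ U z} with hKdef
  have hK : IsCompact K := isCompact_wmod_ge hf hκ ht
  have hpos : ∀ z ∈ K, 0 < U z := fun z hz => ht.trans_le hz
  have hKb : K ⊆ ball 0 1 := fun z hz => mem_ball_of_wmod_pos (hpos z hz)
  have hp1 : ∀ z ∈ K, 0 < 1 - ‖z‖ ^ 2 := fun z hz => one_sub_normSq_pos (hKb hz)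
  have hKlt : ∀ z, t < U z → z ∈ K := fun z hz => hz.le
  have hχK : ∀ z ∉ K, χ (U z) = 0 := fun z hz => hχa _ (not_le.1 hz).le
  have hψK : ∀ z ∉ K, ψ (U z) = 0 := fun z hz => hψa _ (not_le.1 hz).le
  have hχ1 : ContDiff ℝ 1 χ := by
    rw [contDiff_one_iff_deriv]
    refine ⟨fun s => (hχ s).differentiableAt, ?_⟩
    rwa [show deriv χ = ψ from funext fun s => (hχ s).deriv]
  have hGc : ∀ z ∈ K, ContinuousAt G z := fun z hz =>
    (contDiffAt_wgrad hf hκ (hpos z hz)).continuousAt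
  have hwc : ∀ z ∈ K, ContinuousAt (fun z : ℂ => (1 - ‖z‖ ^ 2)⁻¹) z := fun z hz =>
    ContinuousAt.inv₀ (by fun_prop) (hp1 z hz).ne'
  have hψU : ∀ z, ContinuousAt (fun z => ψ (U z) * U z) z := fun z =>
    ((hψc.comp hUc).mul hUc).continuousAt
  have hwc2 : ∀ z ∈ K, ContinuousAt (fun z : ℂ => ((1 - ‖z‖ ^ 2) ^ 2)⁻¹) z := fun z hz =>
    ContinuousAt.inv₀ (by fun_prop) (pow_ne_zero 2 (hp1 z hz).ne')
  have iA : Integrable fun z => ψ (U z) * U z * ‖G z‖ ^ 2 :=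
    integrable_of_continuousAt_of_isCompact hK (fun z hz => by simp [hψK z hz]) fun z hz =>
      (hψU z).mul ((hGc z hz).norm.pow 2)
  have iB : Integrable fun z => ψ (U z) * U z * ((1 - ‖z‖ ^ 2) ^ 2)⁻¹ :=
    integrable_of_continuousAt_of_isCompact hK (fun z hz => by simp [hψK z hz]) fun z hz =>
      (hψU z).mul (hwc2 z hz)
  have iR : Integrable fun z => ψ (U z) * U z * (‖G z‖ * (1 - ‖z‖ ^ 2)⁻¹) :=
    integrable_of_continuousAt_of_isCompact hK (fun z hz => by simp [hψK z hz]) fun z hz =>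
      (hψU z).mul ((hGc z hz).norm.mul (hwc z hz))
  have iX : Integrable fun z => χ (U z) * ((1 - ‖z‖ ^ 2) ^ 2)⁻¹ :=
    integrable_of_continuousAt_of_isCompact hK (fun z hz => by simp [hχK z hz]) fun z hz =>
      (hχ1.continuous.comp hUc).continuousAt.mul (hwc2 z hz)
  have hψUnn : ∀ z, 0 ≤ ψ (U z) * U z := fun z => by
    by_cases hz : z ∈ K
    · exact mul_nonneg (hψ0 _) (hpos z hz).le
    · simp [hψK z hz]
  set A := ∫ z, ψ (U z) * U z * ‖G z‖ ^ 2 with hA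
  set B := ∫ z, ψ (U z) * U z * ((1 - ‖z‖ ^ 2) ^ 2)⁻¹ with hB
  set R := ∫ z, ψ (U z) * U z * (‖G z‖ * (1 - ‖z‖ ^ 2)⁻¹) with hR
  have hCS : R ^ 2 ≤ A * B := by
    have hquad : ∀ x : ℝ, 0 ≤ A * (x * x) + (-2 * R) * x + B := by
      intro x
      have : A * (x * x) + (-2 * R) * x + B
          = ∫ z, ψ (U z) * U z * (x * ‖G z‖ - (1 - ‖z‖ ^ 2)⁻¹) ^ 2 := by
        rw [hA, hB, hR, ← integral_mul_const, ← integral_const_mul, ← integral_mul_const,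
          ← integral_add (iA.mul_const _) ((iR.const_mul _).mul_const _),
          ← integral_add (f := fun z => ψ (U z) * U z * ‖G z‖ ^ 2 * (x * x) +
            -2 * (ψ (U z) * U z * (‖G z‖ * (1 - ‖z‖ ^ 2)⁻¹)) * x)
            ((iA.mul_const _).add ((iR.const_mul _).mul_const _)) iB]
        congr 1
        ext z
        rw [← inv_pow]
        ring
      rw [this]
      exact integral_nonneg fun z => mul_nonneg (hψUnn z) (sq_nonneg _)
    have := discrim_le_zero hquad
    rw [discrim] at this
    nlinarith
  have hAX : A = 4 * ∫ z, χ (U z) * ((1 - ‖z‖ ^ 2) ^ 2)⁻¹ :=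
    integral_wmod_identity hf hκ ht hχ hψc hχa hψa
  have hX : ∫ z, χ (U z) * ((1 - ‖z‖ ^ 2) ^ 2)⁻¹ ≤ Real.pi * (c * ν) :=
    integral_le_mul_hypMeasure (hEm t) (fun z hz => hKb (hKlt z hz)) (hEt ht) hc.le
      (fun z => hχ0 _) (fun z _ => hχc _) (fun z hz => hχa _ (not_lt.1 hz)) iX
  have hBν : B ≤ Real.pi * (t' * (ν - ν')) := by
    rw [← hdiff]
    refine integral_le_mul_hypMeasure ((hEm t).diff (hEm t')) (fun z hz => hKb (hKlt z hz.1))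
      (ne_top_of_le_ne_top (hEt ht) (measure_mono sdiff_subset)) ht'.le hψUnn (fun z hz => ?_)
      (fun z hz => ?_) iB
    · have h1 : U z ≤ t' := not_lt.1 hz.2
      have h2 := hpos z (hKlt z hz.1)
      calc ψ (U z) * U z ≤ 1 * t' := mul_le_mul (hψ1 _) h1 h2.le zero_le_one
        _ = t' := one_mul _
    · by_cases h1 : t < U z
      · have h2 : t' < U z := by
          by_contra h3
          exact hz ⟨h1, h3⟩
        rw [hψb _ h2.le, zero_mul]
      · rw [hψa _ (not_lt.1 h1), zero_mul]
  -- isoperimetry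
  set φ : ℂ → ℝ := fun z => c⁻¹ * χ (U z) with hφ
  have hφK : ∀ z ∉ K, φ z = 0 := fun z hz => by simp [hφ, hχK z hz]
  have hφ1 : ContDiff ℝ 1 φ := by
    refine contDiff_of_contDiffAt_of_isCompact hK hφK fun z hz => ?_
    exact contDiffAt_const.mul (hχ1.contDiffAt.comp z (contDiffAt_wmod hf hκ (hpos z hz)))
  have hφt := tsupport_subset_of_isCompact hK hφK
  have hφc : HasCompactSupport φ := hK.of_isClosed_subset (isClosed_tsupport φ) hφt
  have hiso := hyperbolic_isoperimetric hφ1 hφc (hφt.trans hKb)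
    (fun z => mul_nonneg (inv_nonneg.2 hc.le) (hχ0 _)) (hEm t')
    (fun z hz => by simp [hφ, hχb _ (mem_ofPred.1 hz).le, hc.ne'])
  have hDφ : ∀ z, ‖fderiv ℝ φ z‖ / (1 - ‖z‖ ^ 2)
      = c⁻¹ * (ψ (U z) * U z * (‖G z‖ * (1 - ‖z‖ ^ 2)⁻¹)) := by
    intro z
    by_cases hz : z ∈ K
    · have h1 := ((hχ (U z)).comp_hasFDerivAt z (hasFDerivAt_wmod hf hκ (hpos z hz))).const_mul c⁻¹
      have h3 : fderiv ℝ φ z = _ := h1.fderiv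
      rw [h3, norm_smul, norm_smul, norm_smul, innerSL_apply_norm, Real.norm_of_nonneg (hψ0 _),
        Real.norm_of_nonneg (inv_nonneg.2 hc.le), Real.norm_of_nonneg (hpos z hz).le]
      simp only [← hG]
      ring
    · have h5 : φ =ᶠ[nhds z] fun _ => 0 := by
        filter_upwards [hK.isClosed.isOpen_compl.mem_nhds hz] with v hv using hφK v hv
      simp [h5.fderiv_eq, hψK z hz]
  simp_rw [hDφ] at hiso
  rw [integral_const_mul, ← hR] at hiso
  change 2 * √(ν' * (1 + ν')) ≤ _ at hiso
  set s := √(ν' * (1 + ν')) with hs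
  have hs0 : 0 ≤ s := Real.sqrt_nonneg _
  have hs2 : s ^ 2 = ν' * (1 + ν') := Real.sq_sqrt (by positivity)
  have h1 : 2 * s * (c * Real.pi) ≤ R := by
    rw [le_div_iff₀ hpi] at hiso
    calc 2 * s * (c * Real.pi) = c * (2 * s * Real.pi) := by ring
      _ ≤ c * (c⁻¹ * R) := by gcongr
      _ = R := by field_simp
  have h2 : (2 * s * (c * Real.pi)) ^ 2 ≤ R ^ 2 := by gcongr
  have hA0 : 0 ≤ A := integral_nonneg fun z => mul_nonneg (hψUnn z) (sq_nonneg _)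
  have h3 : A * B ≤ (4 * (Real.pi * (c * ν))) * (Real.pi * (t' * (ν - ν'))) := by
    apply mul_le_mul (by rw [hAX]; linarith) hBν
    · exact integral_nonneg fun z => mul_nonneg (hψUnn z) (by positivity)
    · positivity
  have h4 : (4 * Real.pi ^ 2 * c) * (c * (ν' * (1 + ν'))) ≤ (4 * Real.pi ^ 2 * c) * (t' * (ν * (ν - ν'))) := by
    rw [← hs2]
    calc _ = (2 * s * (c * Real.pi)) ^ 2 := by ring
      _ ≤ _ := h2.trans (hCS.trans h3)
      _ = _ := by ring
  exact le_of_mul_le_mul_left h4 (by positivity)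
end

lemma le_of_increment_le_mul {F ν : ℝ → ℝ} {a b C : ℝ} (hab : a ≤ b)
    (h : ∀ s t, a ≤ s → s ≤ t → t ≤ b → F t - F s ≤ C * ((t - s) * (ν s - ν t))) : F b ≤ F a := by
  have hN : ∀ N : ℕ, F b - F a ≤ C * (b - a) * (ν a - ν b) / ((N : ℝ) + 1) := by
    intro N
    set x : ℕ → ℝ := fun i => a + i * ((b - a) / (N + 1)) with hx
    have hd : 0 ≤ (b - a) / ((N : ℝ) + 1) := div_nonneg (by linarith) (by positivity)
    have hx0 : x 0 = a := by simp [hx]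
    have hxN : x (N + 1) = b := by
      simp only [hx]; push_cast; field_simp; ring
    have hstep : ∀ i, x (i + 1) - x i = (b - a) / (N + 1) := fun i => by
      simp only [hx]; push_cast; ring
    have hmono : Monotone x := monotone_nat_of_le_succ fun i => by linarith [hstep i]
    have e1 := Finset.sum_range_sub (fun i => F (x i)) (N + 1)
    have e2 := Finset.sum_range_sub' (fun i => ν (x i)) (N + 1)
    simp only [hx0, hxN] at e1 e2
    rw [← e1]
    calc ∑ i ∈ Finset.range (N + 1), (F (x (i + 1)) - F (x i))
        ≤ ∑ i ∈ Finset.range (N + 1), C * ((b - a) / (N + 1) * (ν (x i) - ν (x (i + 1)))) := by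
          refine Finset.sum_le_sum fun i hi => ?_
          rw [← hstep i]
          refine h _ _ ?_ (hmono (Nat.le_succ i)) ?_
          · rw [← hx0]; exact hmono (Nat.zero_le i)
          · rw [← hxN]; exact hmono (Finset.mem_range.1 hi)
      _ = _ := by
          rw [← Finset.mul_sum, ← Finset.mul_sum, e2]
          ring
  have hlim : Filter.Tendsto (fun N : ℕ => C * (b - a) * (ν a - ν b) / ((N : ℝ) + 1)) Filter.atTop (nhds 0) :=
    tendsto_const_div_atTop_nhds_zero_nat (C * (b - a) * (ν a - ν b)) |>.comp (Filter.tendsto_add_atTop_nat 1) |>.congr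
      fun N => by simp
  have := ge_of_tendsto' hlim hN
  linarith

section
variable {f : ℂ → ℂ} {κ : ℝ}

lemma wdist_nonneg (t : ℝ) : 0 ≤ wdist f κ t := ENNReal.toReal_nonneg

lemma wdist_anti (hf : Differentiable ℂ f) (hκ : 0 < κ) {s t : ℝ} (hs : 0 < s) (hst : s ≤ t) :
    wdist f κ t ≤ wdist f κ s :=
  ENNReal.toReal_mono (hypMeasure_wmod_gt_ne_top hf hκ hs)
    (measure_mono fun _ hz => hst.trans_lt (mem_ofPred.1 hz))

lemma wdist_mul_anti (hf : Differentiable ℂ f) (hκ : 0 < κ) {a b : ℝ} (ha : 0 < a) (hab : a ≤ b)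
    (hb : 0 < wdist f κ b) : b * (1 + wdist f κ b) ≤ a * (1 + wdist f κ a) := by
  set ν := wdist f κ with hν
  refine le_of_increment_le_mul (F := fun t => t * (1 + ν t)) (ν := ν)
    (C := (1 + 2 * ν a) / ν b) hab ?_
  intro s t has hst htb
  have hs0 : 0 < s := ha.trans_le has
  have h1 : ν b ≤ ν t := wdist_anti hf hκ (hs0.trans_le hst) htb
  have h2 : ν t ≤ ν s := wdist_anti hf hκ hs0 hst
  have h3 : ν s ≤ ν a := wdist_anti hf hκ ha has
  rcases hst.eq_or_lt with rfl | hlt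
  · simp
  have key := wdist_level_ineq hf hκ hs0 hlt
  rw [← hν] at key
  have hC : 0 ≤ (1 + 2 * ν a) / ν b := div_nonneg (by linarith) hb.le
  by_cases hcase : (t - s) * (1 + ν t) ≤ s * (ν s - ν t)
  · have : 0 ≤ (1 + 2 * ν a) / ν b * ((t - s) * (ν s - ν t)) :=
      mul_nonneg hC (mul_nonneg (by linarith) (by linarith))
    nlinarith
  · push Not at hcase
    have ht : 0 < ν t := hb.trans_le h1
    have hd : 0 ≤ ν s - ν t := by linarith
    have hδ : 0 < t - s := by linarith
    -- multiply the claim by `ν t`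
    have e : ν t * (t * (1 + ν t) - s * (1 + ν s)) ≤ (1 + 2 * ν a) * ((t - s) * (ν s - ν t)) := by
      have e1 : ν t * (t * (1 + ν t) - s * (1 + ν s))
          = (t - s) * (ν t * (1 + ν t)) - s * (ν t * (ν s - ν t)) := by ring
      have e2 : t * (ν s * (ν s - ν t)) - s * (ν t * (ν s - ν t))
          = (t - s) * ν s * (ν s - ν t) + s * (ν s - ν t) * (ν s - ν t) := by ring
      have e3 : s * (ν s - ν t) * (ν s - ν t) ≤ (t - s) * (1 + ν t) * (ν s - ν t) :=
        mul_le_mul_of_nonneg_right hcase.le hd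
      have e4 : (t - s) * ν s * (ν s - ν t) + (t - s) * (1 + ν t) * (ν s - ν t)
          ≤ (1 + 2 * ν a) * ((t - s) * (ν s - ν t)) := by
        have : 0 ≤ (t - s) * (ν s - ν t) := mul_nonneg hδ.le hd
        nlinarith
      linarith
    have h5 : 0 ≤ (1 + 2 * ν a) * ((t - s) * (ν s - ν t)) :=
      mul_nonneg (by linarith) (mul_nonneg hδ.le hd)
    rw [div_mul_eq_mul_div, le_div_iff₀ hb]
    by_cases hneg : t * (1 + ν t) - s * (1 + ν s) ≤ 0
    · nlinarith
    · push Not at hneg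
      nlinarith

lemma lintegral_comparison {r lam : ℝ} (hr : 1 < r) (hl : 0 < lam) :
    ∫⁻ t in Ioi (0 : ℝ), ENNReal.ofReal (max (lam / t - 1) 0) * ENNReal.ofReal (t ^ (r - 1))
      = ENNReal.ofReal (lam ^ r / (r * (r - 1))) := by
  have i1 : IntervalIntegrable (fun t : ℝ => lam * t ^ (r - 2) - t ^ (r - 1)) volume 0 lam :=
    ((intervalIntegral.intervalIntegrable_rpow' (by linarith)).const_mul _).sub
      (intervalIntegral.intervalIntegrable_rpow' (by linarith))
  have e0 : ∫ t in (0 : ℝ)..lam, (lam * t ^ (r - 2) - t ^ (r - 1)) = lam ^ r / (r * (r - 1)) := by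
    rw [intervalIntegral.integral_sub
      ((intervalIntegral.intervalIntegrable_rpow' (by linarith)).const_mul _)
      (intervalIntegral.intervalIntegrable_rpow' (by linarith)), intervalIntegral.integral_const_mul,
      integral_rpow (Or.inl (by linarith)), integral_rpow (Or.inl (by linarith))]
    have e1 : r - 2 + 1 = r - 1 := by ring
    have e2 : r - 1 + 1 = r := by ring
    rw [e1, e2, Real.zero_rpow (by linarith), Real.zero_rpow (by linarith), sub_zero, sub_zero,
      mul_div_assoc', mul_comm lam, ← Real.rpow_add_one hl.ne', e2]
    have : r - 1 ≠ 0 := by linarith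
    have : r ≠ 0 := by linarith
    field_simp
    ring
  have hnn : ∀ t ∈ Ioc 0 lam, 0 ≤ lam * t ^ (r - 2) - t ^ (r - 1) := by
    intro t ht
    have : t ^ (r - 1) = t * t ^ (r - 2) := by
      rw [mul_comm, ← Real.rpow_add_one ht.1.ne']; congr 1; ring
    rw [this, ← sub_mul]
    exact mul_nonneg (by linarith [ht.2]) (Real.rpow_nonneg ht.1.le _)
  rw [← e0, intervalIntegral.integral_of_le hl.le,
    ofReal_integral_eq_lintegral_ofReal i1.1
      ((ae_restrict_iff' measurableSet_Ioc).2 (Filter.Eventually.of_forall hnn)),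
    ← lintegral_indicator measurableSet_Ioi, ← lintegral_indicator measurableSet_Ioc]
  congr 1
  ext t
  by_cases ht : t ∈ Ioc 0 lam
  · have h1 : 0 ≤ lam / t - 1 := by
      rw [sub_nonneg, one_le_div ht.1]; exact ht.2
    rw [indicator_of_mem ht, indicator_of_mem (show t ∈ Ioi (0:ℝ) from ht.1), max_eq_left h1, ← ENNReal.ofReal_mul h1]
    congr 1
    have : t ^ (r - 1) = t * t ^ (r - 2) := by
      rw [mul_comm, ← Real.rpow_add_one ht.1.ne']; congr 1; ring
    rw [this]
    have := ht.1.ne'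
    field_simp
  · rw [indicator_of_notMem ht]
    by_cases h0 : t ∈ Ioi (0 : ℝ)
    · rw [indicator_of_mem h0]
      have h1 : lam < t := by
        by_contra h; exact ht ⟨h0, not_lt.1 h⟩
      have h2 : lam / t - 1 ≤ 0 := by
        rw [sub_nonpos, div_le_one h0]; exact h1.le
      simp [max_eq_right h2]
    · rw [indicator_of_notMem h0]
end

section
variable {f : ℂ → ℂ} {κ : ℝ}

lemma ae_hypMeasure_mem_ball : ∀ᵐ z ∂hypMeasure, z ∈ ball (0 : ℂ) 1 := by
  rw [hypMeasure]
  refine (withDensity_absolutelyContinuous _ _).ae_le ?_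
  exact ae_restrict_mem measurableSet_ball

lemma wmod_nonneg_ae : 0 ≤ᵐ[hypMeasure] wmod f κ := by
  filter_upwards [ae_hypMeasure_mem_ball] with z hz
  exact mul_nonneg (by positivity) (one_sub_normSq_pos hz).le

lemma exists_wmod_le (hf : Differentiable ℂ f) (hκ : 0 < κ) : ∃ B, ∀ z, wmod f κ z ≤ B := by
  obtain ⟨B, hB⟩ := (isCompact_closedBall (0 : ℂ) 1).bddAbove_image
    (continuous_wmod hf hκ).continuousOn
  refine ⟨max B 0, fun z => ?_⟩
  by_cases h : 0 < wmod f κ z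
  · exact (hB ⟨z, ball_subset_closedBall (mem_ball_of_wmod_pos h), rfl⟩).trans (le_max_left _ _)
  · exact (not_lt.1 h).trans (le_max_right _ _)

lemma exists_wdist_crossing (hf : Differentiable ℂ f) (hκ : 0 < κ) {lam : ℝ} :
    ∃ T, 0 ≤ T ∧ (∀ t, T < t → wdist f κ t ≤ max (lam / t - 1) 0) ∧
      ∀ s, 0 < s → s < T → max (lam / s - 1) 0 ≤ wdist f κ s := by
  set S : Set ℝ := {t | 0 < t ∧ max (lam / t - 1) 0 < wdist f κ t} with hS
  obtain ⟨B, hB⟩ := exists_wmod_le hf hκ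
  have hbdd : BddAbove S := by
    refine ⟨B, fun t ht => ?_⟩
    by_contra h
    have h0 : {z | t < wmod f κ z} = ∅ := by
      ext z; simpa using (hB z).trans (not_le.1 h).le
    have := (le_max_right _ _).trans_lt ht.2
    simp [wdist, h0] at this
  have hT0 : 0 ≤ sSup S := Real.sSup_nonneg fun t ht => ht.1.le
  refine ⟨sSup S, hT0, fun t ht => ?_, fun s hs hsT => ?_⟩
  · by_contra h
    exact absurd (le_csSup hbdd ⟨hT0.trans_lt ht, not_le.1 h⟩) (not_le.2 ht)
  · have hne : S.Nonempty := by
      by_contra h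
      rw [not_nonempty_iff_eq_empty.1 h, Real.sSup_empty] at hsT
      exact absurd hs hsT.not_gt
    obtain ⟨t, ht, hst⟩ := exists_lt_of_lt_csSup hne hsT
    have h1 := wdist_mul_anti hf hκ hs hst.le ((le_max_right _ _).trans_lt ht.2)
    have h2 := (le_max_left _ _).trans_lt ht.2
    rw [sub_lt_iff_lt_add', div_lt_iff₀ ht.1] at h2
    refine max_le ?_ (wdist_nonneg s)
    rw [sub_le_iff_le_add', div_le_iff₀ hs]
    linarith

/-- Contractive inclusion of weighted spaces, expressed through moments of `wmod`. -/
theorem lintegral_wmod_rpow_le (hf : Differentiable ℂ f) (hκ : 0 < κ) {a b lam : ℝ} (ha : 1 < a)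
    (hab : a ≤ b) (hl : 0 < lam)
    (h : ∫⁻ z, ENNReal.ofReal (wmod f κ z ^ a) ∂hypMeasure ≤ ENNReal.ofReal (lam ^ a / (a - 1))) :
    ∫⁻ z, ENNReal.ofReal (wmod f κ z ^ b) ∂hypMeasure ≤ ENNReal.ofReal (lam ^ b / (b - 1)) := by
  have hb : 1 < b := ha.trans_le hab
  obtain ⟨T, hT0, hT1, hT2⟩ := exists_wdist_crossing hf hκ (lam := lam)
  have hm : ∀ r : ℝ, 1 < r → ∫⁻ z, ENNReal.ofReal (wmod f κ z ^ r) ∂hypMeasure = ENNReal.ofReal r *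
      ∫⁻ t in Ioi (0 : ℝ), ENNReal.ofReal (wdist f κ t) * ENNReal.ofReal (t ^ (r - 1)) := by
    intro r hr
    rw [lintegral_rpow_eq_lintegral_meas_lt_mul _ wmod_nonneg_ae
      (continuous_wmod hf hκ).measurable.aemeasurable (by linarith)]
    congr 1
    refine setLIntegral_congr_fun measurableSet_Ioi fun t ht => ?_
    simp only [wdist]
    rw [ENNReal.ofReal_toReal (hypMeasure_wmod_gt_ne_top hf hκ ht)]
  have hc : ∀ r : ℝ, 1 < r → ENNReal.ofReal (lam ^ r / (r - 1)) = ENNReal.ofReal r *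
      ENNReal.ofReal (lam ^ r / (r * (r - 1))) := by
    intro r hr
    rw [← ENNReal.ofReal_mul (by linarith)]
    congr 1
    have : r - 1 ≠ 0 := by linarith
    field_simp
  rw [hm a ha, hc a ha] at h
  rw [hm b hb, hc b hb]
  have h' := (ENNReal.mul_le_mul_iff_right (by simpa using by linarith) ENNReal.ofReal_ne_top).1 h
  refine mul_le_mul_right ?_ _
  rw [← lintegral_comparison ha hl] at h'
  have hfin := lintegral_comparison ha hl
  rw [← lintegral_comparison hb hl]
  set c := ENNReal.ofReal (T ^ (b - a)) with hcdef
  have hmeas : ∀ r : ℝ, Measurable fun t : ℝ =>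
      ENNReal.ofReal (max (lam / t - 1) 0) * ENNReal.ofReal (t ^ (r - 1)) := fun r => by fun_prop
  have key : (∫⁻ t in Ioi (0 : ℝ), ENNReal.ofReal (wdist f κ t) * ENNReal.ofReal (t ^ (b - 1)))
      + c * ∫⁻ t in Ioi (0 : ℝ), ENNReal.ofReal (max (lam / t - 1) 0) * ENNReal.ofReal (t ^ (a - 1))
      ≤ (∫⁻ t in Ioi (0 : ℝ), ENNReal.ofReal (max (lam / t - 1) 0) * ENNReal.ofReal (t ^ (b - 1)))
      + c * ∫⁻ t in Ioi (0 : ℝ), ENNReal.ofReal (wdist f κ t) * ENNReal.ofReal (t ^ (a - 1)) := by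
    rw [← lintegral_const_mul' _ _ ENNReal.ofReal_ne_top,
      ← lintegral_const_mul' _ _ ENNReal.ofReal_ne_top, ← lintegral_add_left (hmeas b),
      ← lintegral_add_right _ ((hmeas a).const_mul _)]
    refine setLIntegral_mono' measurableSet_Ioi fun t ht => ?_
    have ht : 0 < t := ht
    have n1 : 0 ≤ max (lam / t - 1) 0 := le_max_right _ _
    have n2 := wdist_nonneg (f := f) (κ := κ) t
    have n3 : 0 ≤ t ^ (a - 1) := Real.rpow_nonneg ht.le _
    have n4 : 0 ≤ t ^ (b - 1) := Real.rpow_nonneg ht.le _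
    have n5 : 0 ≤ T ^ (b - a) := Real.rpow_nonneg hT0 _
    rw [← ENNReal.ofReal_mul n2, ← ENNReal.ofReal_mul n1, ← ENNReal.ofReal_mul n1,
      ← ENNReal.ofReal_mul n2, ← ENNReal.ofReal_mul n5, ← ENNReal.ofReal_mul n5,
      ← ENNReal.ofReal_add (by positivity) (by positivity),
      ← ENNReal.ofReal_add (by positivity) (by positivity)]
    refine ENNReal.ofReal_le_ofReal ?_
    have e : t ^ (b - 1) = t ^ (b - a) * t ^ (a - 1) := by
      rw [← Real.rpow_add ht]; congr 1; ring
    rw [e]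
    have : 0 ≤ (max (lam / t - 1) 0 - wdist f κ t) * (t ^ (b - a) - T ^ (b - a)) := by
      rcases lt_trichotomy t T with hlt | heq | hgt
      · exact mul_nonneg_of_nonpos_of_nonpos (by linarith [hT2 t ht hlt])
          (by linarith [Real.rpow_le_rpow ht.le hlt.le (sub_nonneg.2 hab)])
      · simp [heq]
      · exact mul_nonneg (by linarith [hT1 t hgt])
          (by linarith [Real.rpow_le_rpow hT0 hgt.le (sub_nonneg.2 hab)])
    nlinarith [mul_nonneg this n3]
  have key2 := key.trans (add_le_add_right (mul_le_mul_right h' c) _)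
  exact (ENNReal.add_le_add_iff_right
    (ENNReal.mul_ne_top ENNReal.ofReal_ne_top (by rw [hfin]; exact ENNReal.ofReal_ne_top))).1 key2
end

lemma lintegral_bergmanMeasure (α : ℝ) (g : ℂ → ENNReal) :
    ∫⁻ z, g z ∂bergmanMeasure α = ∫⁻ z in ball (0 : ℂ) 1,
      ENNReal.ofReal ((α - 1) * (1 - ‖z‖ ^ 2) ^ (α - 2) / Real.pi) * g z := by
  rw [bergmanMeasure, lintegral_withDensity_eq_lintegral_mul_non_measurable₀ _ (by fun_prop)
    (Filter.Eventually.of_forall fun _ => ENNReal.ofReal_lt_top)]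
  rfl

lemma enorm_rpow_eq_ofReal {E : Type*} [SeminormedAddCommGroup E] (x : E) {p : ℝ} (hp : 0 ≤ p) :
    ‖x‖ₑ ^ p = ENNReal.ofReal (‖x‖ ^ p) := by
  rw [← ofReal_norm, ENNReal.ofReal_rpow_of_nonneg (norm_nonneg _) hp]

lemma lintegral_enorm_rpow_bergmanMeasure (f : ℂ → ℂ) {α p : ℝ} (hα : 1 < α) (hp : 0 < p) :
    ∫⁻ z, ‖f z‖ₑ ^ p ∂bergmanMeasure α
      = ENNReal.ofReal (α - 1) * ∫⁻ z, ENNReal.ofReal (wmod f (p / α) z ^ α) ∂hypMeasure := by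
  rw [lintegral_bergmanMeasure, lintegral_hypMeasure, ← lintegral_const_mul' _ _ ENNReal.ofReal_ne_top]
  refine setLIntegral_congr_fun measurableSet_ball fun z hz => ?_
  have h1 := one_sub_normSq_pos hz
  have h2 : 0 ≤ α - 1 := by linarith
  have h3 : 0 ≤ (1 - ‖z‖ ^ 2) ^ (α - 2) := Real.rpow_nonneg h1.le _
  rw [enorm_rpow_eq_ofReal _ hp.le, ← ENNReal.ofReal_mul (by positivity), ← ENNReal.ofReal_mul (by positivity),
    ← ENNReal.ofReal_mul h2]
  congr 1
  rw [wmod, Real.mul_rpow (by positivity) h1.le, ← Real.rpow_mul (norm_nonneg _),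
    div_mul_cancel₀ _ (by linarith), Real.rpow_sub h1, Real.rpow_two]
  ring

theorem lintegral_bergmanMeasure_contractive {f : ℂ → ℂ} (hf : Differentiable ℂ f) {α p q : ℝ}
    (hα : 1 < α) (hp : 0 < p) (hpq : p ≤ q) :
    ∫⁻ z, ‖f z‖ₑ ^ q ∂bergmanMeasure (α * q / p)
      ≤ (∫⁻ z, ‖f z‖ₑ ^ p ∂bergmanMeasure α) ^ (q / p) := by
  have hq : 0 < q := hp.trans_le hpq
  have hqp : 1 ≤ q / p := (one_le_div hp).2 hpq
  set b := α * q / p with hb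
  have hb' : b = α * (q / p) := by rw [hb, mul_div_assoc]
  have hab : α ≤ b := by rw [hb']; nlinarith
  have hκ : q / b = p / α := by rw [hb]; field_simp
  by_cases htop : ∫⁻ z, ‖f z‖ₑ ^ p ∂bergmanMeasure α = ⊤
  · rw [htop, ENNReal.top_rpow_of_pos (by positivity)]; exact le_top
  have key : ∀ x : ℝ, (∫⁻ z, ‖f z‖ₑ ^ p ∂bergmanMeasure α).toReal < x →
      ∫⁻ z, ‖f z‖ₑ ^ q ∂bergmanMeasure b ≤ ENNReal.ofReal x ^ (q / p) := by
    intro x hx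
    have hx0 : 0 < x := ENNReal.toReal_nonneg.trans_lt hx
    have h1 : ∫⁻ z, ‖f z‖ₑ ^ p ∂bergmanMeasure α ≤ ENNReal.ofReal x :=
      (ENNReal.le_ofReal_iff_toReal_le htop hx0.le).2 hx.le
    rw [lintegral_enorm_rpow_bergmanMeasure f (by linarith) hq, hκ]
    rw [lintegral_enorm_rpow_bergmanMeasure f hα hp] at h1
    have hα1 : 0 < α - 1 := by linarith
    have hb1 : 0 < b - 1 := by linarith
    have h2 := lintegral_wmod_rpow_le hf (κ := p / α) (by positivity) hα hab
      (lam := x ^ (1 / α)) (by positivity) (by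
        rw [ENNReal.ofReal_div_of_pos hα1, ENNReal.le_div_iff_mul_le (Or.inl (by simpa using hα1))
          (Or.inl ENNReal.ofReal_ne_top), mul_comm, ← Real.rpow_mul hx0.le,
          one_div_mul_cancel (by linarith), Real.rpow_one]
        exact h1)
    rw [ENNReal.ofReal_div_of_pos hb1, ENNReal.le_div_iff_mul_le (Or.inl (by simpa using hb1))
          (Or.inl ENNReal.ofReal_ne_top), mul_comm, ← Real.rpow_mul hx0.le] at h2
    refine h2.trans (le_of_eq ?_)
    rw [ENNReal.ofReal_rpow_of_pos hx0, hb']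
    congr 2
    field_simp
  set I := ∫⁻ z, ‖f z‖ₑ ^ p ∂bergmanMeasure α
  have hlim : Filter.Tendsto (fun x : ℝ => ENNReal.ofReal x ^ (q / p)) (nhdsWithin I.toReal (Ioi I.toReal))
      (nhds (I ^ (q / p))) := by
    have : Continuous (fun x : ℝ => ENNReal.ofReal x ^ (q / p)) := ENNReal.continuous_rpow_const.comp ENNReal.continuous_ofReal
    have h := this.tendsto I.toReal
    rw [ENNReal.ofReal_toReal htop] at h
    exact h.mono_left nhdsWithin_le_nhds
  exact ge_of_tendsto hlim (Filter.eventually_of_mem self_mem_nhdsWithin fun x hx => key x hx)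

/-- First derivative of `|G|²` in the direction `e`. -/
noncomputable def sqD (G : ℂ → ℂ) (e w : ℂ) : ℝ := 2 * (e * deriv G w * starRingEnd ℂ (G w)).re

/-- Second derivative of `|G|²` in the direction `e`. -/
noncomputable def sqDD (G : ℂ → ℂ) (e w : ℂ) : ℝ :=
  2 * ‖e * deriv G w‖ ^ 2 + 2 * (e * (e * deriv (deriv G) w) * starRingEnd ℂ (G w)).re

/-- The weight `|G|² (|g|² + ε)^c`. -/
noncomputable def wt (G g : ℂ → ℂ) (ε c : ℝ) (w : ℂ) : ℝ := ‖G w‖ ^ 2 * (‖g w‖ ^ 2 + ε) ^ c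

/-- First derivative of `wt` in the direction `e`. -/
noncomputable def wtD (G g : ℂ → ℂ) (ε c : ℝ) (e w : ℂ) : ℝ :=
  sqD G e w * (‖g w‖ ^ 2 + ε) ^ c + ‖G w‖ ^ 2 * (sqD g e w * c * (‖g w‖ ^ 2 + ε) ^ (c - 1))

/-- Second derivative of `wt` in the direction `e`. -/
noncomputable def wtDD (G g : ℂ → ℂ) (ε c : ℝ) (e w : ℂ) : ℝ :=
  sqDD G e w * (‖g w‖ ^ 2 + ε) ^ c + sqD G e w * (sqD g e w * c * (‖g w‖ ^ 2 + ε) ^ (c - 1))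
  + (sqD G e w * (sqD g e w * c * (‖g w‖ ^ 2 + ε) ^ (c - 1))
    + ‖G w‖ ^ 2 * (sqDD g e w * c * (‖g w‖ ^ 2 + ε) ^ (c - 1)
      + sqD g e w * c * (sqD g e w * (c - 1) * (‖g w‖ ^ 2 + ε) ^ (c - 1 - 1))))

/-- The Laplacian of `wt`. -/
noncomputable def wtLap (G g : ℂ → ℂ) (ε c : ℝ) (w : ℂ) : ℝ :=
  4 * (‖g w‖ ^ 2 + ε) ^ (c - 2) *
    (‖deriv G w * (‖g w‖ ^ 2 + ε : ℝ) + c * G w * deriv g w * starRingEnd ℂ (g w)‖ ^ 2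
      + c * ε * ‖G w‖ ^ 2 * ‖deriv g w‖ ^ 2)

section
variable {G g : ℂ → ℂ} {ε c : ℝ}

lemma hasDerivAt_line (hG : Differentiable ℂ G) (w e : ℂ) (s : ℝ) :
    HasDerivAt (fun s : ℝ => G (w + s * e)) (e * deriv G (w + s * e)) s := by
  have h1 : HasDerivAt (fun z : ℂ => w + z * e) e (s : ℂ) := by
    simpa using ((hasDerivAt_id (s : ℂ)).mul_const e).const_add w
  have h2 := ((hG _).hasDerivAt.comp (s : ℂ) h1).comp_ofReal
  exact h2.congr_deriv (mul_comm _ _)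

lemma hasDerivAt_normSq_line (hG : Differentiable ℂ G) (w e : ℂ) (s : ℝ) :
    HasDerivAt (fun s : ℝ => ‖G (w + s * e)‖ ^ 2) (sqD G e (w + s * e)) s := by
  refine (hasDerivAt_line hG w e s).norm_sq.congr_deriv ?_
  simp [sqD, Complex.inner]

lemma hasDerivAt_sqD_line (hG : Differentiable ℂ G) (w e : ℂ) (s : ℝ) :
    HasDerivAt (fun s : ℝ => sqD G e (w + s * e)) (sqDD G e (w + s * e)) s := by
  have h1 := hasDerivAt_line hG w e s
  have h2 := (hasDerivAt_line hG.deriv w e s).const_mul e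
  have h3 := (h1.inner ℝ h2).const_mul 2
  have e0 : (fun s : ℝ => sqD G e (w + s * e))
      = fun s : ℝ => 2 * inner ℝ (G (w + s * e)) (e * deriv G (w + s * e)) := by
    ext s; simp only [sqD, Complex.inner]
  rw [e0]
  refine h3.congr_deriv ?_
  simp only [sqDD]
  rw [real_inner_self_eq_norm_sq, Complex.inner]
  ring

lemma hasDerivAt_rpow_line (hg : Differentiable ℂ g) (hε : 0 < ε) (c : ℝ) (w e : ℂ) (s : ℝ) :
    HasDerivAt (fun s : ℝ => (‖g (w + s * e)‖ ^ 2 + ε) ^ c)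
      (sqD g e (w + s * e) * c * (‖g (w + s * e)‖ ^ 2 + ε) ^ (c - 1)) s :=
  ((hasDerivAt_normSq_line hg w e s).add_const ε).rpow_const (Or.inl (by positivity))

lemma hasDerivAt_wt (hG : Differentiable ℂ G) (hg : Differentiable ℂ g) (hε : 0 < ε) (w e : ℂ) (s : ℝ) :
    HasDerivAt (fun s : ℝ => wt G g ε c (w + s * e)) (wtD G g ε c e (w + s * e)) s :=
  (hasDerivAt_normSq_line hG w e s).mul (hasDerivAt_rpow_line hg hε c w e s)

lemma hasDerivAt_wtD (hG : Differentiable ℂ G) (hg : Differentiable ℂ g) (hε : 0 < ε) (w e : ℂ) (s : ℝ) :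
    HasDerivAt (fun s : ℝ => wtD G g ε c e (w + s * e)) (wtDD G g ε c e (w + s * e)) s :=
  ((hasDerivAt_sqD_line hG w e s).mul (hasDerivAt_rpow_line hg hε c w e s)).add
    ((hasDerivAt_normSq_line hG w e s).mul
      (((hasDerivAt_sqD_line hg w e s).mul_const c).mul (hasDerivAt_rpow_line hg hε (c - 1) w e s)))

lemma wtDD_one_add_wtDD_I (hε : 0 < ε) (w : ℂ) :
    wtDD G g ε c 1 w + wtDD G g ε c Complex.I w = wtLap G g ε c w := by
  have hP : 0 < ‖g w‖ ^ 2 + ε := by positivity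
  unfold wtDD wtLap
  have e1 : (‖g w‖ ^ 2 + ε) ^ (c - 1) = (‖g w‖ ^ 2 + ε) ^ (c - 2) * (‖g w‖ ^ 2 + ε) := by
    rw [← Real.rpow_add_one hP.ne']; congr 1; ring
  have e2 : (‖g w‖ ^ 2 + ε) ^ c = (‖g w‖ ^ 2 + ε) ^ (c - 2) * (‖g w‖ ^ 2 + ε) ^ 2 := by
    have := Real.rpow_add hP (c - 2) 2
    rwa [sub_add_cancel, Real.rpow_two] at this
  have e3 : c - 1 - 1 = c - 2 := by ring
  rw [e3, e1, e2]
  simp only [sqD, sqDD, ← Complex.normSq_eq_norm_sq, Complex.normSq_apply]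
  simp
  ring

lemma continuous_wt (hG : Differentiable ℂ G) (hg : Differentiable ℂ g) (hε : 0 < ε) :
    Continuous (wt G g ε c) := by
  have h1 := hG.continuous
  have h2 := hg.continuous
  unfold wt
  exact (by fun_prop : Continuous fun w => ‖G w‖ ^ 2).mul
    ((by fun_prop : Continuous fun w => ‖g w‖ ^ 2 + ε).rpow_const fun w => Or.inl (by positivity))

lemma continuous_wtD (hG : Differentiable ℂ G) (hg : Differentiable ℂ g) (hε : 0 < ε) (e : ℂ) :
    Continuous (wtD G g ε c e) := by
  have h1 := hG.continuous
  have h2 := hg.continuous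
  have h3 := hG.deriv.continuous
  have h4 := hg.deriv.continuous
  have hr : ∀ c : ℝ, Continuous fun w => (‖g w‖ ^ 2 + ε) ^ c := fun c =>
    (by fun_prop : Continuous fun w => ‖g w‖ ^ 2 + ε).rpow_const fun w => Or.inl (by positivity)
  have := hr c
  have := hr (c - 1)
  unfold wtD sqD
  fun_prop

lemma continuous_wtDD (hG : Differentiable ℂ G) (hg : Differentiable ℂ g) (hε : 0 < ε) (e : ℂ) :
    Continuous (wtDD G g ε c e) := by
  have h1 := hG.continuous
  have h2 := hg.continuous
  have h3 := hG.deriv.continuous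
  have h4 := hg.deriv.continuous
  have h5 := hG.deriv.deriv.continuous
  have h6 := hg.deriv.deriv.continuous
  have hr : ∀ c : ℝ, Continuous fun w => (‖g w‖ ^ 2 + ε) ^ c := fun c =>
    (by fun_prop : Continuous fun w => ‖g w‖ ^ 2 + ε).rpow_const fun w => Or.inl (by positivity)
  have := hr c
  have := hr (c - 1)
  have := hr (c - 1 - 1)
  unfold wtDD sqD sqDD
  fun_prop

lemma wtLap_nonneg (hε : 0 < ε) (hc : 0 ≤ c) (w : ℂ) : 0 ≤ wtLap G g ε c w := by
  unfold wtLap; positivity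
end

/-- The integral of `h` over the vertical segment at abscissa `x`, of length `2π`. -/
noncomputable def vint (h : ℂ → ℝ) (x : ℝ) : ℝ := ∫ θ in (-Real.pi)..Real.pi, h (x + θ * Complex.I)

lemma intervalIntegrable_vert {h : ℂ → ℝ} (hh : Continuous h) (x : ℝ) :
    IntervalIntegrable (fun θ : ℝ => h (x + θ * Complex.I)) volume (-Real.pi) Real.pi :=
  (by fun_prop : Continuous fun θ : ℝ => h (x + θ * Complex.I)).intervalIntegrable _ _

lemma vint_mono {h k : ℂ → ℝ} (hh : Continuous h) (hk : Continuous k) {x : ℝ}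
    (hle : ∀ θ : ℝ, h (x + θ * Complex.I) ≤ k (x + θ * Complex.I)) : vint h x ≤ vint k x :=
  intervalIntegral.integral_mono (by linarith [Real.pi_pos]) (intervalIntegrable_vert hh x)
    (intervalIntegrable_vert hk x) hle

lemma vint_nonneg {h : ℂ → ℝ} (hle : ∀ w, 0 ≤ h w) (x : ℝ) : 0 ≤ vint h x :=
  intervalIntegral.integral_nonneg (by linarith [Real.pi_pos]) fun _ _ => hle _

lemma hasDerivAt_vint {h h1 : ℂ → ℝ} (hh : Continuous h) (hh1 : Continuous h1)
    (hd : ∀ (w : ℂ) (s : ℝ), HasDerivAt (fun s : ℝ => h (w + s * 1)) (h1 (w + s * 1)) s) (x : ℝ) :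
    HasDerivAt (vint h) (vint h1 x) x := by
  have hc1 : Continuous fun y : ℝ × ℝ => h1 (y.1 + y.2 * Complex.I) := by fun_prop
  obtain ⟨B, hB⟩ := ((isCompact_Icc (a := x - 1) (b := x + 1)).prod
    (isCompact_Icc (a := -Real.pi) (b := Real.pi))).exists_bound_of_continuousOn hc1.continuousOn
  refine (intervalIntegral.hasDerivAt_integral_of_dominated_loc_of_deriv_le
    (F := fun (x θ : ℝ) => h (x + θ * Complex.I)) (F' := fun (x θ : ℝ) => h1 (x + θ * Complex.I))
    (bound := fun _ => B) (s := Icc (x - 1) (x + 1))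
    (Icc_mem_nhds (by linarith) (by linarith)) ?_ (intervalIntegrable_vert hh x) ?_ ?_ ?_ ?_).2
  · exact Filter.Eventually.of_forall fun y => (intervalIntegrable_vert hh y).aestronglyMeasurable_restrict_uIoc
  · exact (intervalIntegrable_vert hh1 x).aestronglyMeasurable_restrict_uIoc
  · refine Filter.Eventually.of_forall fun θ hθ y hy => hB (y, θ) ⟨hy, ?_⟩
    rw [uIoc_of_le (by linarith [Real.pi_pos])] at hθ
    exact Ioc_subset_Icc_self hθ
  · exact intervalIntegrable_const
  · refine Filter.Eventually.of_forall fun θ _ y _ => ?_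
    have := hd (θ * Complex.I) y
    simpa only [mul_one, add_comm] using this

section
variable {G g : ℂ → ℂ} {ε c : ℝ}

lemma deriv_periodic (hGp : ∀ w, G (w + 2 * Real.pi * Complex.I) = G w) (w : ℂ) :
    deriv G (w + 2 * Real.pi * Complex.I) = deriv G w := by
  rw [← deriv_comp_add_const]
  congr 1
  ext w
  exact hGp w

lemma vint_wtDD_I (hG : Differentiable ℂ G) (hg : Differentiable ℂ g) (hε : 0 < ε)
    (hGp : ∀ w, G (w + 2 * Real.pi * Complex.I) = G w)
    (hgp : ∀ w, g (w + 2 * Real.pi * Complex.I) = g w) (x : ℝ) :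
    vint (wtDD G g ε c Complex.I) x = 0 := by
  rw [vint, intervalIntegral.integral_eq_sub_of_hasDerivAt
    (f := fun θ : ℝ => wtD G g ε c Complex.I (x + θ * Complex.I))
    (fun θ _ => hasDerivAt_wtD hG hg hε x Complex.I θ)
    (intervalIntegrable_vert (continuous_wtDD hG hg hε _) x)]
  have e : (x : ℂ) + (Real.pi : ℝ) * Complex.I
      = (x + ((-Real.pi : ℝ) : ℂ) * Complex.I) + 2 * Real.pi * Complex.I := by push_cast; ring
  rw [e]
  simp only [wtD, sqD, hGp, hgp, deriv_periodic hGp, deriv_periodic hgp, sub_self]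

lemma hasDerivAt_vint_wt (hG : Differentiable ℂ G) (hg : Differentiable ℂ g) (hε : 0 < ε) (x : ℝ) :
    HasDerivAt (vint (wt G g ε c)) (vint (wtD G g ε c 1) x) x :=
  hasDerivAt_vint (continuous_wt hG hg hε) (continuous_wtD hG hg hε 1)
    (fun w s => hasDerivAt_wt hG hg hε w 1 s) x

lemma hasDerivAt_vint_wtD (hG : Differentiable ℂ G) (hg : Differentiable ℂ g) (hε : 0 < ε)
    (hGp : ∀ w, G (w + 2 * Real.pi * Complex.I) = G w)
    (hgp : ∀ w, g (w + 2 * Real.pi * Complex.I) = g w) (x : ℝ) :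
    HasDerivAt (vint (wtD G g ε c 1)) (vint (wtLap G g ε c) x) x := by
  refine (hasDerivAt_vint (continuous_wtD hG hg hε 1) (continuous_wtDD hG hg hε 1)
    (fun w s => hasDerivAt_wtD hG hg hε w 1 s) x).congr_deriv ?_
  have h := vint_wtDD_I (c := c) hG hg hε hGp hgp x
  have hadd := intervalIntegral.integral_add
    (intervalIntegrable_vert (continuous_wtDD (c := c) hG hg hε 1) x)
    (intervalIntegrable_vert (continuous_wtDD (c := c) hG hg hε Complex.I) x)
  simp only [wtDD_one_add_wtDD_I hε] at hadd
  simp only [vint] at h ⊢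
  rw [hadd, h, add_zero]

end

/-- If `φ` is nondecreasing, `-φ ≤ U'` and `U` is nonnegative near `-∞`, then `φ` is nonnegative. -/
lemma nonneg_of_monotone_of_neg_le_deriv {U U' φ : ℝ → ℝ} (hφ : Monotone φ)
    (h1 : ∀ x, HasDerivAt U (U' x) x) (h2 : ∀ x, -φ x ≤ U' x) (h0 : ∀ x ≤ 0, 0 ≤ U x)
    (x : ℝ) : 0 ≤ φ x := by
  by_contra hneg
  push Not at hneg
  have hmono : MonotoneOn (fun y => U y + φ x * y) (Iic x) := by
    refine monotoneOn_of_hasDerivWithinAt_nonneg (f' := fun y => U' y + φ x) (convex_Iic x) ?_ ?_ ?_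
    · exact fun y _ => ((h1 y).continuousAt.add (by fun_prop)).continuousWithinAt
    · intro y _
      refine HasDerivAt.hasDerivWithinAt ?_
      refine ((h1 y).add ((hasDerivAt_id y).const_mul (φ x))).congr_deriv ?_
      simp
    · intro y hy
      rw [interior_Iic] at hy
      linarith [h2 y, hφ (le_of_lt hy)]
  set z := (U x + φ x * x + 1) / φ x with hz
  set y := min (min x 0) z with hy
  have hy1 : y ≤ x := (min_le_left _ _).trans (min_le_left _ _)
  have hy2 : y ≤ 0 := (min_le_left _ _).trans (min_le_right _ _)
  have h3 := hmono (mem_Iic.2 hy1) (mem_Iic.2 le_rfl) hy1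
  have h4 := h0 y hy2
  have h5 : U x + φ x * x + 1 ≤ φ x * y := by
    have := mul_le_mul_of_nonpos_left (min_le_right (min x 0) z) hneg.le
    rwa [hz, mul_div_cancel₀ _ hneg.ne] at this
  simp only at h3
  linarith

section
variable {a b f : ℂ → ℂ} {ε c k : ℝ}

lemma exp_periodic (a : ℂ → ℂ) (w : ℂ) :
    (a ∘ Complex.exp) (w + 2 * Real.pi * Complex.I) = (a ∘ Complex.exp) w := by
  simp [Complex.exp_periodic w]

lemma norm_exp_vert (x θ : ℝ) : ‖Complex.exp (x + θ * Complex.I)‖ = Real.exp x := by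
  rw [Complex.norm_exp]; simp

lemma exists_vint_exp_le {h : ℂ → ℝ} (hh : Continuous h) :
    ∃ B, ∀ x ≤ 0, vint (fun w => h (Complex.exp w)) x ≤ B := by
  obtain ⟨B, hB⟩ := (isCompact_closedBall (0 : ℂ) 1).exists_bound_of_continuousOn hh.continuousOn
  refine ⟨B * |Real.pi - -Real.pi|, fun x hx => (Real.le_norm_self _).trans
    (intervalIntegral.norm_integral_le_of_norm_le_const fun θ _ => hB _ ?_)⟩
  rw [mem_closedBall_zero_iff, norm_exp_vert]
  exact Real.exp_le_one_iff.2 hx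

lemma vint_wtD_nonneg (ha : Differentiable ℂ a) (hb : Differentiable ℂ b) (hε : 0 < ε) (hc : 0 ≤ c) (x : ℝ) :
    0 ≤ vint (wtD (a ∘ Complex.exp) (b ∘ Complex.exp) ε c 1) x := by
  have hG : Differentiable ℂ (a ∘ Complex.exp) := ha.comp Complex.differentiable_exp
  have hg : Differentiable ℂ (b ∘ Complex.exp) := hb.comp Complex.differentiable_exp
  obtain ⟨B, hB⟩ := exists_vint_exp_le (continuous_wt (c := c) ha hb hε)
  refine nonneg_of_monotone_of_neg_le_deriv (U := fun x => B - vint (wt (a ∘ Complex.exp) (b ∘ Complex.exp) ε c) x)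
    (monotone_of_hasDerivAt_nonneg (hasDerivAt_vint_wtD hG hg hε (exp_periodic a) (exp_periodic b))
      (fun x => vint_nonneg (wtLap_nonneg hε hc) x))
    (fun x => (hasDerivAt_vint_wt hG hg hε x).const_sub B) (fun x => le_rfl)
    (fun x hx => sub_nonneg.2 (hB x hx)) x

lemma wtLap_one_exp (hf : Differentiable ℂ f) (hε : 0 < ε) (x θ : ℝ) :
    wtLap (fun _ => 1) (f ∘ Complex.exp) ε k (x + θ * Complex.I)
      = Real.exp (2 * x) * (4 * k ^ 2 * wt (deriv f ∘ Complex.exp) (f ∘ Complex.exp) ε (k - 1) (x + θ * Complex.I)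
        - 4 * k * (k - 1) * (ε * wt (deriv f ∘ Complex.exp) (f ∘ Complex.exp) ε (k - 2) (x + θ * Complex.I))) := by
  set w : ℂ := x + θ * Complex.I with hw
  have hd : deriv (f ∘ Complex.exp) w = deriv f (Complex.exp w) * Complex.exp w :=
    ((hf _).hasDerivAt.comp w (Complex.hasDerivAt_exp w)).deriv
  have hP : 0 < ‖f (Complex.exp w)‖ ^ 2 + ε := by positivity
  have e1 : (‖f (Complex.exp w)‖ ^ 2 + ε) ^ (k - 1)
      = (‖f (Complex.exp w)‖ ^ 2 + ε) ^ (k - 2) * (‖f (Complex.exp w)‖ ^ 2 + ε) := by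
    rw [← Real.rpow_add_one hP.ne']; congr 1; ring
  simp only [wtLap, wt, hd, Function.comp, e1, deriv_const]
  simp only [zero_mul, zero_add, mul_one, norm_mul, Complex.norm_real, RCLike.norm_conj, mul_pow]
  rw [hw, norm_exp_vert, Real.norm_eq_abs, sq_abs, two_mul x, Real.exp_add]
  simp
  ring

lemma exists_err_le (hf : Differentiable ℂ f) (k : ℝ) :
    ∃ C, 0 ≤ C ∧ ∀ ε, 0 < ε → ε ≤ 1 → ∀ x ≤ 0,
      ε * vint (wt (deriv f ∘ Complex.exp) (f ∘ Complex.exp) ε (k - 2)) x ≤ C * ε ^ (min 1 (k - 1)) := by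
  set δ := min 1 (k - 1) with hδ
  have hδ0 : 0 ≤ k - 1 - δ := sub_nonneg.2 (min_le_right _ _)
  have hδ1 : δ - 1 ≤ 0 := sub_nonpos.2 (min_le_left _ _)
  obtain ⟨B, hB⟩ := exists_vint_exp_le (continuous_wt (c := k - 1 - δ) hf.deriv hf one_pos)
  refine ⟨max B 0, le_max_right _ _, fun ε h0 h1 x hx => ?_⟩
  have hG : Differentiable ℂ (deriv f ∘ Complex.exp) := hf.deriv.comp Complex.differentiable_exp
  have hg : Differentiable ℂ (f ∘ Complex.exp) := hf.comp Complex.differentiable_exp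
  have key : vint (wt (deriv f ∘ Complex.exp) (f ∘ Complex.exp) ε (k - 2)) x
      ≤ vint (fun w => wt (deriv f) f 1 (k - 1 - δ) (Complex.exp w) * ε ^ (δ - 1)) x := by
    have hcw := continuous_wt (c := k - 1 - δ) hf.deriv hf one_pos
    refine vint_mono (continuous_wt hG hg h0) (by fun_prop) fun θ => ?_
    set z := Complex.exp (x + θ * Complex.I) with hz
    simp only [wt, Function.comp, ← hz]
    rw [mul_assoc]
    refine mul_le_mul_of_nonneg_left ?_ (by positivity)
    have hP : 0 < ‖f z‖ ^ 2 + ε := by positivity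
    have e : (‖f z‖ ^ 2 + ε) ^ (k - 2) = (‖f z‖ ^ 2 + ε) ^ (k - 1 - δ) * (‖f z‖ ^ 2 + ε) ^ (δ - 1) := by
      rw [← Real.rpow_add hP]; congr 1; ring
    rw [e]
    exact mul_le_mul (Real.rpow_le_rpow hP.le (by linarith) hδ0)
      (Real.rpow_le_rpow_of_nonpos h0 (by nlinarith [sq_nonneg ‖f z‖]) hδ1)
      (by positivity) (by positivity)
  have e2 : vint (fun w => wt (deriv f) f 1 (k - 1 - δ) (Complex.exp w) * ε ^ (δ - 1)) x
      = vint (fun w => wt (deriv f) f 1 (k - 1 - δ) (Complex.exp w)) x * ε ^ (δ - 1) := by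
    simp only [vint, intervalIntegral.integral_mul_const]
  have e3 : ε ^ δ = ε * ε ^ (δ - 1) := by
    rw [mul_comm, ← Real.rpow_add_one h0.ne', sub_add_cancel]
  rw [e2] at key
  have hp : 0 ≤ ε ^ (δ - 1) := by positivity
  calc _ ≤ ε * (max B 0 * ε ^ (δ - 1)) := by
        refine mul_le_mul_of_nonneg_left (key.trans ?_) h0.le
        exact mul_le_mul_of_nonneg_right ((hB x hx).trans (le_max_left _ _)) hp
    _ = _ := by rw [e3]; ring

end

section
variable {f : ℂ → ℂ} {ε k : ℝ}

lemma vint_wtLap_one_exp (hf : Differentiable ℂ f) (hε : 0 < ε) (x : ℝ) :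
    vint (wtLap (fun _ => 1) (f ∘ Complex.exp) ε k) x
      = Real.exp (2 * x) * (4 * k ^ 2 * vint (wt (deriv f ∘ Complex.exp) (f ∘ Complex.exp) ε (k - 1)) x
        - 4 * k * (k - 1) * (ε * vint (wt (deriv f ∘ Complex.exp) (f ∘ Complex.exp) ε (k - 2)) x)) := by
  have hG : Differentiable ℂ (deriv f ∘ Complex.exp) := hf.deriv.comp Complex.differentiable_exp
  have hg : Differentiable ℂ (f ∘ Complex.exp) := hf.comp Complex.differentiable_exp
  simp only [vint, wtLap_one_exp hf hε]
  rw [intervalIntegral.integral_const_mul, intervalIntegral.integral_sub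
    ((intervalIntegrable_vert (continuous_wt hG hg hε) x).const_mul _)
    (((intervalIntegrable_vert (continuous_wt hG hg hε) x).const_mul _).const_mul _),
    intervalIntegral.integral_const_mul, intervalIntegral.integral_const_mul,
    intervalIntegral.integral_const_mul]

lemma wt_nonneg {G g : ℂ → ℂ} (hε : 0 < ε) (w : ℂ) : 0 ≤ wt G g ε k w := by
  unfold wt; positivity

/-- `u' ≤ 2 k² e^{2x} v`, where `v` is the mean of `|f'|² (|f|² + ε)^(k-1)`. -/
lemma vint_wtD_le (hf : Differentiable ℂ f) (hε : 0 < ε) (hk : 1 ≤ k) (x : ℝ) :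
    vint (wtD (fun _ => 1) (f ∘ Complex.exp) ε k 1) x
      ≤ 2 * k ^ 2 * (Real.exp (2 * x) * vint (wt (deriv f ∘ Complex.exp) (f ∘ Complex.exp) ε (k - 1)) x) := by
  have hG : Differentiable ℂ (deriv f ∘ Complex.exp) := hf.deriv.comp Complex.differentiable_exp
  have hg : Differentiable ℂ (f ∘ Complex.exp) := hf.comp Complex.differentiable_exp
  have h1 : Differentiable ℂ (fun _ : ℂ => (1 : ℂ)) := by fun_prop
  have hexp : ∀ x : ℝ, HasDerivAt (fun x : ℝ => Real.exp (2 * x)) (2 * Real.exp (2 * x)) x := fun x => by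
    have := ((hasDerivAt_id x).const_mul 2).exp
    refine this.congr_deriv ?_
    simp only [id]; ring
  set φ : ℝ → ℝ := fun x => 2 * k ^ 2 * (Real.exp (2 * x) *
      vint (wt (deriv f ∘ Complex.exp) (f ∘ Complex.exp) ε (k - 1)) x)
      - vint (wtD (fun _ => 1) (f ∘ Complex.exp) ε k 1) x with hφ
  have hmono : Monotone φ := by
    refine monotone_of_hasDerivAt_nonneg (f' := fun x => 2 * k ^ 2 * (2 * Real.exp (2 * x) *
      vint (wt (deriv f ∘ Complex.exp) (f ∘ Complex.exp) ε (k - 1)) x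
      + Real.exp (2 * x) * vint (wtD (deriv f ∘ Complex.exp) (f ∘ Complex.exp) ε (k - 1) 1) x)
      - vint (wtLap (fun _ => 1) (f ∘ Complex.exp) ε k) x) (fun x => ?_) (fun x => ?_)
    · exact (((hexp x).mul (hasDerivAt_vint_wt hG hg hε x)).const_mul _).sub
        (hasDerivAt_vint_wtD h1 hg hε (fun _ => rfl) (exp_periodic f) x)
    · have n1 := vint_wtD_nonneg hf.deriv hf hε (c := k - 1) (by linarith) x
      have n2 := vint_nonneg (wt_nonneg (G := deriv f ∘ Complex.exp) (g := f ∘ Complex.exp) (k := k - 2) hε) x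
      have n3 := Real.exp_pos (2 * x)
      have n4 : 0 ≤ k - 1 := by linarith
      have n5 : 0 ≤ 2 * k ^ 2 * (Real.exp (2 * x) * vint (wtD (deriv f ∘ Complex.exp) (f ∘ Complex.exp) ε (k - 1) 1) x) := by
        positivity
      have n6 : 0 ≤ Real.exp (2 * x) * (4 * k * (k - 1) * (ε * vint (wt (deriv f ∘ Complex.exp) (f ∘ Complex.exp) ε (k - 2)) x)) := by
        positivity
      simp only [Pi.zero_apply]
      rw [vint_wtLap_one_exp hf hε]
      linarith
  have := nonneg_of_monotone_of_neg_le_deriv hmono (hasDerivAt_vint_wt h1 hg hε (c := k)) (fun x => by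
    have n2 := vint_nonneg (wt_nonneg (G := deriv f ∘ Complex.exp) (g := f ∘ Complex.exp) (k := k - 1) hε) x
    have : 0 ≤ 2 * k ^ 2 * (Real.exp (2 * x) *
      vint (wt (deriv f ∘ Complex.exp) (f ∘ Complex.exp) ε (k - 1)) x) := by positivity
    simp only [hφ]
    linarith) (fun x _ => vint_nonneg (wt_nonneg hε) x) x
  simp only [hφ] at this
  linarith

/-- The mean of `(|f|² + ε)^k` over the circle of radius `√t`, up to the factor `2π`. -/
noncomputable def regMean (f : ℂ → ℂ) (ε k t : ℝ) : ℝ :=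
  vint (wt (fun _ => 1) (f ∘ Complex.exp) ε k) (Real.log t / 2)

lemma convexOn_regMean_add (hf : Differentiable ℂ f) (hε : 0 < ε) (hk : 1 ≤ k) {η : ℝ}
    (hη : ∀ x ≤ 0, 4 * k * (k - 1) * (ε * vint (wt (deriv f ∘ Complex.exp) (f ∘ Complex.exp) ε (k - 2)) x) ≤ η) :
    ConvexOn ℝ (Ioo 0 1) fun t => regMean f ε k t + η / 4 * (t * Real.log t - t) := by
  have hg : Differentiable ℂ (f ∘ Complex.exp) := hf.comp Complex.differentiable_exp
  have h1 : Differentiable ℂ (fun _ : ℂ => (1 : ℂ)) := by fun_prop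
  set u' := vint (wtD (fun _ => 1) (f ∘ Complex.exp) ε k 1) with hu'
  have hNmono : MonotoneOn (fun x => Real.exp (-(2 * x)) * u' x + η * x) (Iic 0) := by
    have hd : ∀ x : ℝ, HasDerivAt (fun x => Real.exp (-(2 * x)) * u' x + η * x)
        (-2 * Real.exp (-(2 * x)) * u' x + Real.exp (-(2 * x)) * vint (wtLap (fun _ => 1) (f ∘ Complex.exp) ε k) x + η) x := by
      intro x
      have e1 : HasDerivAt (fun x : ℝ => Real.exp (-(2 * x))) (-2 * Real.exp (-(2 * x))) x := by
        have := ((hasDerivAt_id x).const_mul (-2)).exp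
        simp only [id, neg_mul] at this
        refine this.congr_deriv ?_
        ring
      refine ((e1.mul (hasDerivAt_vint_wtD h1 hg hε (fun _ => rfl) (exp_periodic f) x)).add
        ((hasDerivAt_id x).const_mul η)).congr_deriv ?_
      simp [hu']
    refine monotoneOn_of_hasDerivWithinAt_nonneg (convex_Iic 0)
      (fun x _ => (hd x).continuousAt.continuousWithinAt) (fun x _ => (hd x).hasDerivWithinAt) ?_
    intro x hx
    rw [interior_Iic] at hx
    have n1 := vint_wtD_le hf hε hk x
    have n2 := hη x (le_of_lt hx)
    have n3 : Real.exp (-(2 * x)) * Real.exp (2 * x) = 1 := by rw [← Real.exp_add]; simp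
    have n4 := mul_le_mul_of_nonneg_left n1 (Real.exp_pos (-(2 * x))).le
    rw [← hu', mul_left_comm, ← mul_assoc (Real.exp (-(2 * x))), n3, one_mul] at n4
    rw [vint_wtLap_one_exp hf hε, ← mul_assoc (Real.exp (-(2 * x))), n3, one_mul]
    linarith
  have hderiv : ∀ t ∈ Ioo (0 : ℝ) 1, HasDerivAt (fun t => regMean f ε k t + η / 4 * (t * Real.log t - t))
      ((Real.exp (-(2 * (Real.log t / 2))) * u' (Real.log t / 2) + η * (Real.log t / 2)) / 2) t := by
    intro t ht
    have hlog := (Real.hasDerivAt_log ht.1.ne').div_const 2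
    have e1 := (hasDerivAt_vint_wt h1 hg hε (c := k) (Real.log t / 2)).comp t hlog
    have e2 := (((hasDerivAt_id t).mul (Real.hasDerivAt_log ht.1.ne')).sub (hasDerivAt_id t)).const_mul (η / 4)
    refine (e1.add e2).congr_deriv ?_
    have : Real.exp (-(2 * (Real.log t / 2))) = t⁻¹ := by
      rw [mul_div_cancel₀ _ two_ne_zero, Real.exp_neg, Real.exp_log ht.1]
    rw [this]
    have := ht.1.ne'
    simp only [id]
    field_simp
    ring
  refine MonotoneOn.convexOn_of_deriv (convex_Ioo 0 1)
    (fun t ht => (hderiv t ht).continuousAt.continuousWithinAt) ?_ ?_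
  · rw [interior_Ioo]
    exact fun t ht => (hderiv t ht).differentiableAt.differentiableWithinAt
  · rw [interior_Ioo]
    intro s hs t ht hst
    rw [(hderiv s hs).deriv, (hderiv t ht).deriv]
    refine div_le_div_of_nonneg_right (hNmono ?_ ?_ ?_) zero_le_two
    · exact div_nonpos_of_nonpos_of_nonneg (Real.log_nonpos hs.1.le hs.2.le) zero_le_two
    · exact div_nonpos_of_nonpos_of_nonneg (Real.log_nonpos ht.1.le ht.2.le) zero_le_two
    · exact div_le_div_of_nonneg_right (Real.log_le_log hs.1 hst) zero_le_two

lemma regMean_mono (hf : Differentiable ℂ f) (hε : 0 < ε) (hk : 0 ≤ k) {s t : ℝ} (hs : 0 < s)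
    (hst : s ≤ t) : regMean f ε k s ≤ regMean f ε k t := by
  have hg : Differentiable ℂ (f ∘ Complex.exp) := hf.comp Complex.differentiable_exp
  have h1 : Differentiable ℂ (fun _ : ℂ => (1 : ℂ)) := by fun_prop
  exact monotone_of_hasDerivAt_nonneg (fun x => hasDerivAt_vint_wt h1 hg hε (c := k) x)
    (fun x => vint_wtD_nonneg h1 hf hε hk x)
    (div_le_div_of_nonneg_right (Real.log_le_log hs hst) zero_le_two)

/-- The integral of `|f|^q` over the circle of radius `√t`. -/
noncomputable def circleMean (f : ℂ → ℂ) (q t : ℝ) : ℝ :=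
  ∫ θ in (-Real.pi)..Real.pi, ‖f (√t * Complex.exp (θ * Complex.I))‖ ^ q

lemma tendsto_regMean (hf : Differentiable ℂ f) (hk : 0 < k) {t : ℝ} (ht : 0 < t) :
    Filter.Tendsto (fun ε => regMean f ε k t) (nhdsWithin 0 (Ioi 0)) (nhds (circleMean f (2 * k) t)) := by
  have hfc := hf.continuous
  have hc : Continuous fun ε : ℝ => regMean f ε k t := by
    unfold regMean vint wt
    refine intervalIntegral.continuous_parametric_intervalIntegral_of_continuous' ?_ _ _
    simp only [Function.comp]
    refine continuous_const.mul (Continuous.rpow_const ?_ fun _ => Or.inr hk.le)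
    fun_prop
  have h0 : regMean f 0 k t = circleMean f (2 * k) t := by
    simp only [regMean, vint, wt, circleMean, Function.comp]
    congr 1
    ext θ
    have : Complex.exp ((Real.log t / 2 : ℝ) + θ * Complex.I) = √t * Complex.exp (θ * Complex.I) := by
      rw [Complex.exp_add, ← Complex.ofReal_exp, Real.exp_half, Real.exp_log ht]
    rw [this, Real.rpow_mul (norm_nonneg _), Real.rpow_two]
    simp
  rw [← h0]
  exact (hc.tendsto 0).mono_left nhdsWithin_le_nhds

lemma circleMean_mono (hf : Differentiable ℂ f) {q : ℝ} (hq : 0 < q) {s t : ℝ} (hs : 0 < s)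
    (hst : s ≤ t) : circleMean f q s ≤ circleMean f q t := by
  have e : 2 * (q / 2) = q := by ring
  have h1 := tendsto_regMean hf (half_pos hq) hs
  have h2 := tendsto_regMean hf (half_pos hq) (hs.trans_le hst)
  rw [e] at h1 h2
  exact le_of_tendsto_of_tendsto h1 h2 (Filter.eventually_of_mem self_mem_nhdsWithin
    fun ε hε => regMean_mono hf hε (by linarith) hs hst)

theorem convexOn_circleMean (hf : Differentiable ℂ f) {q : ℝ} (hq : 2 ≤ q) :
    ConvexOn ℝ (Ioo 0 1) (circleMean f q) := by
  obtain ⟨k, hk, rfl⟩ : ∃ k, 1 ≤ k ∧ q = 2 * k := ⟨q / 2, by linarith, by ring⟩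
  obtain ⟨C, hC0, hC⟩ := exists_err_le hf k
  set η : ℝ → ℝ := fun ε => 4 * k * (k - 1) * (C * ε ^ (min 1 (k - 1))) with hη
  have hηlim : Filter.Tendsto η (nhdsWithin 0 (Ioi 0)) (nhds 0) := by
    rcases hk.eq_or_lt with h | h
    · have : η = fun _ => 0 := by ext ε; simp [hη, ← h]
      rw [this]; exact tendsto_const_nhds
    · have hδ : 0 < min 1 (k - 1) := lt_min one_pos (by linarith)
      have : Continuous η := by
        have := Real.continuous_rpow_const hδ.le
        fun_prop
      have h2 := (this.tendsto 0).mono_left (nhdsWithin_le_nhds (s := Ioi 0))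
      simpa [hη, Real.zero_rpow hδ.ne'] using h2
  have hconv : ∀ᶠ ε in nhdsWithin (0 : ℝ) (Ioi 0),
      ConvexOn ℝ (Ioo 0 1) fun t => regMean f ε k t + η ε / 4 * (t * Real.log t - t) := by
    filter_upwards [Ioc_mem_nhdsGT (zero_lt_one (α := ℝ))] with ε hε
    refine convexOn_regMean_add hf hε.1 hk fun x hx => ?_
    exact mul_le_mul_of_nonneg_left (hC ε hε.1 hε.2 x hx)
      (mul_nonneg (by linarith) (by linarith))
  have hlim : ∀ t ∈ Ioo (0 : ℝ) 1, Filter.Tendsto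
      (fun ε => regMean f ε k t + η ε / 4 * (t * Real.log t - t)) (nhdsWithin 0 (Ioi 0))
      (nhds (circleMean f (2 * k) t)) := by
    intro t ht
    have := (tendsto_regMean hf (one_pos.trans_le hk) ht.1).add ((hηlim.div_const 4).mul_const (t * Real.log t - t))
    simpa using this
  refine ⟨convex_Ioo 0 1, fun s hs t ht a b ha hb hab => ?_⟩
  have hst : a • s + b • t ∈ Ioo (0 : ℝ) 1 := convex_Ioo (0 : ℝ) 1 hs ht ha hb hab
  refine le_of_tendsto_of_tendsto (hlim _ hst) (((hlim s hs).const_smul a).add ((hlim t ht).const_smul b)) ?_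
  filter_upwards [hconv] with ε hε
  exact hε.2 hs ht ha hb hab
end

lemma ConvexOn.exists_slope {S : Set ℝ} (hS : IsOpen S) {M : ℝ → ℝ} (hM : ConvexOn ℝ S M) {s : ℝ}
    (hs : s ∈ S) : ∃ g, (∀ x ∈ S, ∀ y ∈ S, s ≤ x → x ≤ y → g * (y - x) ≤ M y - M x) ∧
      ∀ x ∈ S, ∀ y ∈ S, x ≤ y → y ≤ s → M y - M x ≤ g * (y - x) := by
  have hi : ∀ x ∈ S, x ∈ interior S := fun x hx => by rwa [hS.interior_eq]
  refine ⟨derivWithin M (Ioi s) s, fun x hx y hy hsx hxy => ?_, fun x hx y hy hxy hys => ?_⟩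
  · rcases hxy.eq_or_lt with rfl | hlt
    · simp
    have h1 := hM.monotoneOn_rightDeriv (hi s hs) (hi x hx) hsx
    have h2 := hM.rightDeriv_le_slope_of_mem_interior (hi x hx) hy hlt
    have h3 := h1.trans h2
    rwa [slope_def_field, le_div_iff₀ (by linarith)] at h3
  · rcases hxy.eq_or_lt with rfl | hlt
    · simp
    have h1 := hM.monotoneOn_leftDeriv (hi y hy) (hi s hs) hys
    have h2 := hM.slope_le_leftDeriv_of_mem_interior hx (hi y hy) hlt
    have h3 := (h2.trans h1).trans (hM.leftDeriv_le_rightDeriv_of_mem_interior (hi s hs))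
    rwa [slope_def_field, div_le_iff₀ (by linarith)] at h3

lemma exists_sign_change {γ r : ℝ} (hγ : 1 ≤ γ) (hr0 : 0 < r) (hr1 : r < 1) {y₁ : ℝ} (h0 : 0 < y₁) (h1 : y₁ < 1)
    (hneg : 1 - y₁ - r * (1 - y₁ ^ γ) < 0) :
    ∃ y₀, 0 < y₀ ∧ y₀ < 1 ∧ 1 - y₀ = r * (1 - y₀ ^ γ) ∧
      (∀ y, 0 < y → y ≤ y₀ → r * (1 - y ^ γ) ≤ 1 - y) ∧
      ∀ y, y₀ ≤ y → y ≤ 1 → 1 - y ≤ r * (1 - y ^ γ) := by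
  set D : ℝ → ℝ := fun y => 1 - y - r * (1 - y ^ γ) with hD
  have hcont : Continuous D := by
    have := Real.continuous_rpow_const (show 0 ≤ γ by linarith)
    fun_prop
  have hconv : ConvexOn ℝ (Ici 0) D := by
    have h2 : ConvexOn ℝ (Ici 0) fun y : ℝ => r * y ^ γ := (convexOn_rpow hγ).smul hr0.le
    have h3 : ConvexOn ℝ (Ici 0) fun y : ℝ => (1 - r) + (-1) * y := by
      refine ⟨convex_Ici 0, fun x _ y _ a b _ _ hab => le_of_eq ?_⟩
      simp only [smul_eq_mul]
      linear_combination (-(1 - r)) * hab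
    have := h3.add h2
    refine this.congr fun y _ => ?_
    simp only [hD, Pi.add_apply]; ring
  have hD1 : D 1 = 0 := by simp [hD]
  have hD0 : 0 < D 0 := by simp [hD, Real.zero_rpow (show γ ≠ 0 by linarith)]; linarith
  obtain ⟨y₀, hy, hy0⟩ := intermediate_value_Ioo' h0.le hcont.continuousOn
    (show (0 : ℝ) ∈ Ioo (D y₁) (D 0) from ⟨hneg, hD0⟩)
  have hy1 : y₀ < 1 := hy.2.trans h1
  refine ⟨y₀, hy.1, hy1, by simp only [hD] at hy0; linarith, fun y hy' hle => ?_, fun y hle hle1 => ?_⟩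
  · rcases hle.eq_or_lt with rfl | hlt
    · simp only [hD] at hy0; linarith
    by_contra hcon
    have hDy : D y < 0 := by simp only [hD]; linarith
    have hs := hconv.secant_mono_aux1 (mem_Ici.2 hy'.le) (mem_Ici.2 zero_le_one) hlt hy1
    rw [hD1, hy0] at hs
    nlinarith
  · rcases hle.eq_or_lt with rfl | hlt
    · simp only [hD] at hy0; linarith
    rcases hle1.eq_or_lt with rfl | hlt1
    · simp
    have hs := hconv.secant_mono_aux1 (mem_Ici.2 hy.1.le) (mem_Ici.2 zero_le_one) hlt hlt1
    rw [hD1, hy0] at hs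
    have : D y ≤ 0 := by
      by_contra h
      nlinarith [mul_pos (sub_pos.2 hy1) (not_le.1 h)]
    simp only [hD] at this
    linarith

lemma setIntegral_one_sub_rpow {β : ℝ} (hβ : 1 < β) :
    ∫ v in Ioo (0 : ℝ) 1, (1 - v ^ (1 / (β - 1))) = 1 / β := by
  have h : 0 < 1 / (β - 1) := by rw [one_div_pos]; linarith
  rw [← integral_Ioc_eq_integral_Ioo, ← intervalIntegral.integral_of_le zero_le_one,
    intervalIntegral.integral_sub (by simp) (intervalIntegral.intervalIntegrable_rpow' (by linarith)),
    integral_rpow (Or.inl (by linarith)), Real.zero_rpow (by linarith)]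
  have h1 : β - 1 ≠ 0 := by linarith
  have h2 : β ≠ 0 := by linarith
  have h3 : 1 / (β - 1) + 1 = β / (β - 1) := by field_simp; ring
  rw [h3]
  simp only [intervalIntegral.integral_const, Real.one_rpow, sub_zero, smul_eq_mul, mul_one]
  field_simp
  ring

lemma integrableOn_one_sub_rpow {β : ℝ} (hβ : 1 < β) :
    IntegrableOn (fun v : ℝ => 1 - v ^ (1 / (β - 1))) (Ioo 0 1) := by
  have h : 0 < 1 / (β - 1) := by rw [one_div_pos]; linarith
  have : Continuous fun v : ℝ => 1 - v ^ (1 / (β - 1)) := by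
    have := Real.continuous_rpow_const h.le
    fun_prop
  exact (this.integrableOn_Icc (a := 0) (b := 1)).mono_set Ioo_subset_Icc_self

lemma one_sub_rpow_mem {β : ℝ} (hβ : 1 < β) {v : ℝ} (hv : v ∈ Ioo (0 : ℝ) 1) :
    1 - v ^ (1 / (β - 1)) ∈ Ioo (0 : ℝ) 1 := by
  have h : 0 < 1 / (β - 1) := by rw [one_div_pos]; linarith
  exact ⟨sub_pos.2 (Real.rpow_lt_one hv.1.le hv.2 h), by linarith [Real.rpow_pos_of_pos hv.1 (1 / (β - 1))]⟩

lemma setIntegral_dilation_le {M : ℝ → ℝ} (hM : ConvexOn ℝ (Ioo 0 1) M) (hmono : MonotoneOn M (Ioo 0 1))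
    {β β' : ℝ} (hβ : 1 < β) (hlt : β < β')
    (hi : IntegrableOn (fun v : ℝ => M (β / β' * (1 - v ^ (1 / (β - 1))))) (Ioo 0 1))
    (hi' : IntegrableOn (fun v : ℝ => M (1 - v ^ (1 / (β' - 1)))) (Ioo 0 1)) :
    ∫ v in Ioo (0 : ℝ) 1, M (β / β' * (1 - v ^ (1 / (β - 1))))
      ≤ ∫ v in Ioo (0 : ℝ) 1, M (1 - v ^ (1 / (β' - 1))) := by
  have hβ' : 1 < β' := hβ.trans hlt
  set r := β / β' with hr
  have hr0 : 0 < r := by positivity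
  have hr1 : r < 1 := (div_lt_one (by linarith)).2 hlt
  set a := 1 / (β - 1) with ha
  set a' := 1 / (β' - 1) with ha'
  have ha0 : 0 < a := by rw [ha, one_div_pos]; linarith
  have ha0' : 0 < a' := by rw [ha', one_div_pos]; linarith
  have haa : a' ≤ a := one_div_le_one_div_of_le (by linarith) (by linarith)
  have hγ : 1 ≤ a / a' := (one_le_div ha0').2 haa
  have hmem' : ∀ v ∈ Ioo (0 : ℝ) 1, 1 - v ^ a' ∈ Ioo (0 : ℝ) 1 := fun v hv => one_sub_rpow_mem hβ' hv
  have hmem : ∀ v ∈ Ioo (0 : ℝ) 1, r * (1 - v ^ a) ∈ Ioo (0 : ℝ) 1 := fun v hv => by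
    have h := one_sub_rpow_mem hβ hv
    exact ⟨mul_pos hr0 h.1, by nlinarith [h.1, h.2]⟩
  have hpow : ∀ v ∈ Ioo (0 : ℝ) 1, v ^ a = (v ^ a') ^ (a / a') := fun v hv => by
    rw [← Real.rpow_mul hv.1.le, mul_div_cancel₀ _ ha0'.ne']
  by_cases hcase : ∀ v ∈ Ioo (0 : ℝ) 1, r * (1 - v ^ a) ≤ 1 - v ^ a'
  · exact setIntegral_mono_on hi hi' measurableSet_Ioo fun v hv =>
      hmono (hmem v hv) (hmem' v hv) (hcase v hv)
  push Not at hcase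
  obtain ⟨v₁, hv₁, hneg⟩ := hcase
  obtain ⟨y₀, hy0, hy1, hyeq, hlow, hhigh⟩ := exists_sign_change hγ hr0 hr1
    (Real.rpow_pos_of_pos hv₁.1 a') (Real.rpow_lt_one hv₁.1.le hv₁.2 ha0')
    (by rw [← hpow v₁ hv₁]; linarith)
  have hs : 1 - y₀ ∈ Ioo (0 : ℝ) 1 := ⟨by linarith, by linarith⟩
  obtain ⟨g, hg1, hg2⟩ := hM.exists_slope isOpen_Ioo hs
  have hpt : ∀ v ∈ Ioo (0 : ℝ) 1, g * ((1 - v ^ a') - r * (1 - v ^ a))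
      ≤ M (1 - v ^ a') - M (r * (1 - v ^ a)) := by
    intro v hv
    have hva : 0 < v ^ a' := Real.rpow_pos_of_pos hv.1 a'
    rcases le_total (v ^ a') y₀ with hle | hle
    · refine hg1 _ (hmem v hv) _ (hmem' v hv) ?_ ?_
      · rw [hyeq, hpow v hv]
        refine mul_le_mul_of_nonneg_left ?_ hr0.le
        linarith [Real.rpow_le_rpow hva.le hle (zero_le_one.trans hγ)]
      · rw [hpow v hv]; exact hlow _ hva hle
    · have := hg2 _ (hmem' v hv) _ (hmem v hv) ?_ ?_
      · linarith
      · rw [hpow v hv]; exact hhigh _ hle (Real.rpow_lt_one hv.1.le hv.2 ha0').le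
      · rw [hyeq, hpow v hv]
        refine mul_le_mul_of_nonneg_left ?_ hr0.le
        linarith [Real.rpow_le_rpow hy0.le hle (zero_le_one.trans hγ)]
  have i1 := integrableOn_one_sub_rpow hβ'
  have i2 := (integrableOn_one_sub_rpow hβ).const_mul r
  have hmain := setIntegral_mono_on ((i1.sub i2).const_mul g) (hi'.sub hi) measurableSet_Ioo hpt
  have e1 : ∫ v in Ioo (0 : ℝ) 1, g * ((1 - v ^ a') - r * (1 - v ^ a)) = 0 := by
    rw [integral_const_mul, integral_sub i1 i2, integral_const_mul, setIntegral_one_sub_rpow hβ,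
      setIntegral_one_sub_rpow hβ', hr]
    field_simp
    simp
  have e2 : ∫ v in Ioo (0 : ℝ) 1, (M (1 - v ^ a') - M (r * (1 - v ^ a)))
      = (∫ v in Ioo (0 : ℝ) 1, M (1 - v ^ a')) - ∫ v in Ioo (0 : ℝ) 1, M (r * (1 - v ^ a)) :=
    integral_sub hi' hi
  have := e1.symm.le.trans (hmain.trans e2.le)
  linarith

lemma image_one_sub_sq_rpow {β : ℝ} (hβ : 1 < β) :
    (fun ρ : ℝ => (1 - ρ ^ 2) ^ (β - 1)) '' Ioo 0 1 = Ioo 0 1 := by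
  have h1 : 0 < β - 1 := by linarith
  ext v
  constructor
  · rintro ⟨ρ, hρ, rfl⟩
    have h2 : 0 < 1 - ρ ^ 2 := by nlinarith [hρ.1, hρ.2]
    exact ⟨Real.rpow_pos_of_pos h2 _, Real.rpow_lt_one h2.le (by nlinarith [hρ.1]) h1⟩
  · intro hv
    have h2 := one_sub_rpow_mem hβ hv
    refine ⟨√(1 - v ^ (1 / (β - 1))), ⟨Real.sqrt_pos.2 h2.1, ?_⟩, ?_⟩
    · rw [Real.sqrt_lt' one_pos]; simpa using h2.2
    · simp only
      rw [Real.sq_sqrt h2.1.le, sub_sub_cancel, ← Real.rpow_mul hv.1.le, one_div_mul_cancel h1.ne',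
        Real.rpow_one]

theorem lintegral_bergmanMeasure_polar {β : ℝ} (hβ : 1 < β) {Φ : ℂ → ENNReal} (hΦ : Measurable Φ) :
    ∫⁻ z, Φ z ∂bergmanMeasure β = ∫⁻ v in Ioo (0 : ℝ) 1, ENNReal.ofReal (1 / (2 * Real.pi)) *
      ∫⁻ θ in Ioo (-Real.pi) Real.pi, Φ (√(1 - v ^ (1 / (β - 1))) * Complex.exp (θ * Complex.I)) := by
  have hpi := Real.pi_pos
  have h1 : 0 < β - 1 := by linarith
  set W : ℝ → ENNReal := fun ρ => (Iio (1 : ℝ)).indicator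
    (fun ρ => ENNReal.ofReal (ρ * ((β - 1) * (1 - ρ ^ 2) ^ (β - 2) / Real.pi))) ρ with hW
  have hWm : Measurable W := Measurable.indicator (by fun_prop) measurableSet_Iio
  rw [lintegral_bergmanMeasure, ← lintegral_indicator measurableSet_ball,
    ← Complex.lintegral_comp_polarCoord_symm, polarCoord_target]
  have h2 : ∀ p ∈ Ioi (0 : ℝ) ×ˢ Ioo (-Real.pi) Real.pi, ENNReal.ofReal p.1 •
      (ball (0 : ℂ) 1).indicator (fun z => ENNReal.ofReal ((β - 1) * (1 - ‖z‖ ^ 2) ^ (β - 2) / Real.pi) * Φ z)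
        (Complex.polarCoord.symm p) = W p.1 * Φ (p.1 * Complex.exp (p.2 * Complex.I)) := by
    rintro ⟨ρ, θ⟩ ⟨hρ, -⟩
    simp only [mem_Ioi] at hρ
    have hn : ‖Complex.polarCoord.symm (ρ, θ)‖ = ρ := by
      rw [Complex.norm_polarCoord_symm, abs_of_pos hρ]
    have he : Complex.polarCoord.symm (ρ, θ) = ρ * Complex.exp (θ * Complex.I) := by
      rw [Complex.polarCoord_symm_apply, Complex.exp_mul_I]
      push_cast; rfl
    simp only [hW, indicator, mem_ball_zero_iff, hn, mem_Iio]
    split_ifs with h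
    · rw [he, smul_eq_mul, ← mul_assoc, ← ENNReal.ofReal_mul hρ.le]
    · simp
  rw [setLIntegral_congr_fun (measurableSet_Ioi.prod measurableSet_Ioo) h2,
    Measure.volume_eq_prod, setLIntegral_prod _ (by fun_prop)]
  have h3 : ∀ ρ : ℝ, ∫⁻ θ in Ioo (-Real.pi) Real.pi, W ρ * Φ (ρ * Complex.exp (θ * Complex.I))
      = (Iio (1 : ℝ)).indicator (fun ρ => ENNReal.ofReal (ρ * ((β - 1) * (1 - ρ ^ 2) ^ (β - 2) / Real.pi)) *
        ∫⁻ θ in Ioo (-Real.pi) Real.pi, Φ (ρ * Complex.exp (θ * Complex.I))) ρ := by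
    intro ρ
    rw [lintegral_const_mul _ (by fun_prop)]
    simp only [hW, indicator]
    split_ifs <;> simp
  simp only [h3]
  rw [setLIntegral_indicator measurableSet_Iio, inter_comm, Ioi_inter_Iio]
  conv_rhs => rw [← image_one_sub_sq_rpow hβ]
  rw [lintegral_image_eq_lintegral_abs_deriv_mul (f' := fun ρ => -(2 * ρ) * (β - 1) * (1 - ρ ^ 2) ^ (β - 1 - 1))
    measurableSet_Ioo]
  · refine setLIntegral_congr_fun measurableSet_Ioo fun ρ hρ => ?_
    have h4 : 0 < 1 - ρ ^ 2 := by nlinarith [hρ.1, hρ.2]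
    have h5 : ((1 - ρ ^ 2) ^ (β - 1)) ^ (1 / (β - 1)) = 1 - ρ ^ 2 := by
      rw [← Real.rpow_mul h4.le, mul_one_div_cancel h1.ne', Real.rpow_one]
    have h6 : 0 < (1 - ρ ^ 2) ^ (β - 2) := Real.rpow_pos_of_pos h4 _
    have h7 : β - 1 - 1 = β - 2 := by ring
    simp only [h5, sub_sub_cancel, Real.sqrt_sq hρ.1.le, h7]
    rw [← mul_assoc, ← ENNReal.ofReal_mul (abs_nonneg _)]
    congr 2
    have h8 : 0 < 2 * ρ * (β - 1) * (1 - ρ ^ 2) ^ (β - 2) := by have := hρ.1; positivity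
    rw [neg_mul, neg_mul, abs_neg, abs_of_pos h8]
    field_simp
  · intro ρ hρ
    have h4 : 0 < 1 - ρ ^ 2 := by nlinarith [hρ.1, hρ.2]
    have := (((hasDerivAt_id ρ).pow 2).const_sub 1).rpow_const (p := β - 1) (Or.inl h4.ne')
    refine (this.congr_deriv ?_).hasDerivWithinAt
    simp
  · intro x hx y hy hxy
    have h4 : 0 < 1 - x ^ 2 := by nlinarith [hx.1, hx.2]
    have h5 : 0 < 1 - y ^ 2 := by nlinarith [hy.1, hy.2]
    have := (Real.rpow_left_inj h4.le h5.le h1.ne').1 hxy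
    have h6 : x ^ 2 = y ^ 2 := by linarith
    exact (pow_left_inj₀ hx.1.le hy.1.le two_ne_zero).1 h6

theorem isProbabilityMeasure_bergmanMeasure {β : ℝ} (hβ : 1 < β) : IsProbabilityMeasure (bergmanMeasure β) := by
  constructor
  rw [← setLIntegral_one, Measure.restrict_univ, lintegral_bergmanMeasure_polar hβ measurable_const]
  have hpi := Real.pi_pos
  have : ENNReal.ofReal (1 / (2 * Real.pi)) * ENNReal.ofReal (Real.pi - -Real.pi) = 1 := by
    rw [← ENNReal.ofReal_mul (by positivity), ← ENNReal.ofReal_one]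
    congr 1
    field_simp
    ring
  simp only [setLIntegral_one, Real.volume_Ioo, this]
  simp

lemma circleMean_nonneg (f : ℂ → ℂ) (q t : ℝ) : 0 ≤ circleMean f q t :=
  intervalIntegral.integral_nonneg (by linarith [Real.pi_pos]) fun _ _ => by positivity

lemma continuous_circleMean {f : ℂ → ℂ} (hf : Continuous f) {q : ℝ} (hq : 0 < q) :
    Continuous (circleMean f q) := by
  refine intervalIntegral.continuous_parametric_intervalIntegral_of_continuous' ?_ _ _
  have h : Continuous fun x : ℝ × ℝ => f (√x.1 * Complex.exp (x.2 * Complex.I)) := by fun_prop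
  exact h.norm.rpow_const fun _ => Or.inr hq.le

lemma setLIntegral_enorm_circle {f : ℂ → ℂ} (hf : Continuous f) {q : ℝ} (hq : 0 < q) (t : ℝ) :
    ∫⁻ θ in Ioo (-Real.pi) Real.pi, ‖f (√t * Complex.exp (θ * Complex.I))‖ₑ ^ q
      = ENNReal.ofReal (circleMean f q t) := by
  have hpi := Real.pi_pos
  have h : Continuous fun θ : ℝ => ‖f (√t * Complex.exp (θ * Complex.I))‖ ^ q :=
    (Continuous.norm (by fun_prop)).rpow_const fun _ => Or.inr hq.le
  rw [circleMean, intervalIntegral.integral_of_le (by linarith), integral_Ioc_eq_integral_Ioo,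
    ofReal_integral_eq_lintegral_ofReal
      ((h.integrableOn_Icc (a := -Real.pi) (b := Real.pi)).mono_set Ioo_subset_Icc_self)
      (Filter.Eventually.of_forall fun _ => by positivity)]
  simp only [enorm_rpow_eq_ofReal _ hq.le]

lemma integrableOn_circleMean_comp {f : ℂ → ℂ} (hf : Continuous f) {q : ℝ} (hq : 0 < q) {β : ℝ}
    (hβ : 1 < β) (c : ℝ) :
    IntegrableOn (fun v : ℝ => circleMean f q (c * (1 - v ^ (1 / (β - 1))))) (Ioo 0 1) := by
  have h1 : (0 : ℝ) < 1 / (β - 1) := by rw [one_div_pos]; linarith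
  have h2 : Continuous fun v : ℝ => c * (1 - v ^ (1 / (β - 1))) :=
    continuous_const.mul (continuous_const.sub
      (continuous_id.rpow_const fun _ => Or.inr h1.le))
  exact (((continuous_circleMean hf hq).comp h2).integrableOn_Icc (a := 0) (b := 1)).mono_set
    Ioo_subset_Icc_self

lemma lintegral_bergmanMeasure_eq_circleMean {f : ℂ → ℂ} (hf : Continuous f) {q : ℝ} (hq : 0 < q)
    {β : ℝ} (hβ : 1 < β) {r : ℝ} (hr : 0 ≤ r) :
    ∫⁻ z, ‖f (r * z)‖ₑ ^ q ∂bergmanMeasure β = ENNReal.ofReal (1 / (2 * Real.pi)) *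
      ENNReal.ofReal (∫ v in Ioo (0 : ℝ) 1, circleMean f q (r ^ 2 * (1 - v ^ (1 / (β - 1))))) := by
  have hm : Measurable fun z : ℂ => ‖f (r * z)‖ₑ ^ q := by
    have h : Continuous fun z : ℂ => f (r * z) := by fun_prop
    exact h.measurable.enorm.pow_const q
  rw [lintegral_bergmanMeasure_polar hβ hm, lintegral_const_mul' _ _ ENNReal.ofReal_ne_top,
    ofReal_integral_eq_lintegral_ofReal (integrableOn_circleMean_comp hf hq hβ _)
      (Filter.Eventually.of_forall fun _ => circleMean_nonneg _ _ _)]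
  congr 1
  refine setLIntegral_congr_fun measurableSet_Ioo fun v hv => ?_
  rw [← setLIntegral_enorm_circle hf hq, Real.sqrt_mul (sq_nonneg r), Real.sqrt_sq hr]
  simp only [Complex.ofReal_mul, mul_assoc]

/-- Contractivity of the dilation by `√(β/β')` from `A^q_β'` to `A^q_β`. -/
theorem lintegral_bergmanMeasure_dilation_le {f : ℂ → ℂ} (hf : Differentiable ℂ f) {q : ℝ}
    (hq : 2 ≤ q) {β β' : ℝ} (hβ : 1 < β) (hle : β ≤ β') {r : ℝ} (hr : 0 ≤ r)
    (hr2 : r ^ 2 = β / β') :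
    ∫⁻ z, ‖f (r * z)‖ₑ ^ q ∂bergmanMeasure β ≤ ∫⁻ z, ‖f z‖ₑ ^ q ∂bergmanMeasure β' := by
  have hq0 : 0 < q := by linarith
  rcases hle.eq_or_lt with rfl | hlt
  · rw [div_self (by linarith), pow_eq_one_iff_of_nonneg hr two_ne_zero] at hr2
    simp [hr2]
  · have hβ' : 1 < β' := hβ.trans hlt
    have h1 := lintegral_bergmanMeasure_eq_circleMean hf.continuous hq0 hβ hr
    have h2 := lintegral_bergmanMeasure_eq_circleMean hf.continuous hq0 hβ' zero_le_one
    simp only [Complex.ofReal_one, one_mul, one_pow] at h2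
    rw [h1, h2, hr2]
    refine mul_le_mul_right (ENNReal.ofReal_le_ofReal ?_) _
    refine setIntegral_dilation_le (convexOn_circleMean hf hq)
      (fun s hs t _ hst => circleMean_mono hf hq0 hs.1 hst) hβ hlt
      (integrableOn_circleMean_comp hf.continuous hq0 hβ _) ?_
    simpa using integrableOn_circleMean_comp hf.continuous hq0 hβ' 1

/-- One-variable hypercontractive inequality between weighted Bergman spaces. -/
theorem lintegral_bergmanMeasure_hypercontractive {f : ℂ → ℂ} (hf : Differentiable ℂ f)
    {α β p q : ℝ} (hα : 1 < α) (hβ : 1 < β) (hp : 0 < p) (hpq : p ≤ q) (hq : 2 ≤ q)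
    (hle : β * p ≤ α * q) {r : ℝ} (hr : 0 ≤ r) (hr2 : r ^ 2 = β * p / (α * q)) :
    ∫⁻ z, ‖f (r * z)‖ₑ ^ q ∂bergmanMeasure β ≤ (∫⁻ z, ‖f z‖ₑ ^ p ∂bergmanMeasure α) ^ (q / p) := by
  have hq0 : 0 < q := by linarith
  refine (lintegral_bergmanMeasure_dilation_le hf hq hβ (β' := α * q / p) ?_ hr ?_).trans
    (lintegral_bergmanMeasure_contractive hf hα hp hpq)
  · rwa [le_div_iff₀ hp]
  · rw [hr2]; field_simp

/-- Minkowski's integral inequality, when the left-hand side is finite. -/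
theorem lintegral_lintegral_rpow_le {X Y : Type*} [MeasurableSpace X] [MeasurableSpace Y]
    {μ : Measure X} {ν : Measure Y} [SFinite μ] [SFinite ν] {F : X → Y → ENNReal}
    (hF : Measurable (Function.uncurry F)) {s : ℝ} (hs : 1 ≤ s)
    (hfin : ∫⁻ x, (∫⁻ y, F x y ∂ν) ^ s ∂μ ≠ ⊤) :
    ∫⁻ x, (∫⁻ y, F x y ∂ν) ^ s ∂μ ≤ (∫⁻ y, (∫⁻ x, F x y ^ s ∂μ) ^ (1 / s) ∂ν) ^ s := by
  rcases hs.eq_or_lt with rfl | hs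
  · simp [lintegral_lintegral_swap hF.aemeasurable]
  have hs0 : 0 < s := by linarith
  set H : X → ENNReal := fun x => ∫⁻ y, F x y ∂ν with hH
  have hHm : Measurable H := hF.lintegral_prod_right'
  set A := ∫⁻ x, H x ^ s ∂μ with hA
  set B := ∫⁻ y, (∫⁻ x, F x y ^ s ∂μ) ^ (1 / s) ∂ν with hB
  have hconj : (Real.conjExponent s).HolderConjugate s := (Real.HolderConjugate.conjExponent hs).symm
  have h1 : A ≤ A ^ (1 - 1 / s) * B := by
    calc A = ∫⁻ x, ∫⁻ y, H x ^ (s - 1) * F x y ∂ν ∂μ := by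
          refine lintegral_congr fun x => ?_
          rw [lintegral_const_mul _ (by fun_prop)]
          nth_rewrite 1 [show s = (s - 1) + 1 by ring]
          rw [ENNReal.rpow_add_of_nonneg _ _ (by linarith) zero_le_one, ENNReal.rpow_one]
      _ = ∫⁻ y, ∫⁻ x, H x ^ (s - 1) * F x y ∂μ ∂ν := by
          refine lintegral_lintegral_swap (Measurable.aemeasurable ?_)
          exact ((hHm.comp measurable_fst).pow_const _).mul hF
      _ ≤ ∫⁻ y, A ^ (1 - 1 / s) * (∫⁻ x, F x y ^ s ∂μ) ^ (1 / s) ∂ν := by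
          refine lintegral_mono fun y => ?_
          refine (ENNReal.lintegral_mul_le_Lp_mul_Lq μ hconj
            (hHm.pow_const _).aemeasurable (by fun_prop)).trans_eq ?_
          have h2 : s - 1 ≠ 0 := by linarith
          congr 2
          · refine lintegral_congr fun x => ?_
            rw [← ENNReal.rpow_mul, Real.conjExponent]
            congr 1
            field_simp
          · rw [Real.conjExponent]; field_simp
      _ = A ^ (1 - 1 / s) * B := by
          refine lintegral_const_mul _ (Measurable.pow_const ?_ _)
          exact (hF.pow_const s).lintegral_prod_left'
  rcases eq_or_ne A 0 with h0 | h0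
  · rw [h0]; exact bot_le
  have h3 : A ^ (1 - 1 / s) * A ^ (1 / s) = A := by
    rw [← ENNReal.rpow_add _ _ h0 hfin]; simp
  have h4 : A ^ (1 / s) ≤ B := by
    nth_rewrite 1 [← h3] at h1
    refine (ENNReal.mul_le_mul_iff_right ?_ ?_).1 h1
    · exact (ENNReal.rpow_pos (pos_iff_ne_zero.2 h0) hfin).ne'
    · refine (ENNReal.rpow_lt_top_of_nonneg ?_ hfin).ne
      rw [sub_nonneg, div_le_one hs0]; exact hs.le
  calc A = (A ^ (1 / s)) ^ s := by
        rw [← ENNReal.rpow_mul, one_div_mul_cancel hs0.ne', ENNReal.rpow_one]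
    _ ≤ B ^ s := ENNReal.rpow_le_rpow h4 hs0.le

lemma lintegral_bergmanMeasurePi_succ {β : ℝ} (hβ : 1 < β) (n : ℕ) {Φ : (Fin (n + 1) → ℂ) → ENNReal}
    (hΦ : Measurable Φ) : ∫⁻ z, Φ z ∂bergmanMeasurePi (n + 1) β
      = ∫⁻ a, (∫⁻ z, Φ (Fin.cons a z) ∂bergmanMeasurePi n β) ∂bergmanMeasure β := by
  have := isProbabilityMeasure_bergmanMeasure hβ
  have h := (measurePreserving_piFinSuccAbove (fun _ : Fin (n + 1) => bergmanMeasure β) 0).symm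
  rw [bergmanMeasurePi, ← h.lintegral_comp hΦ, lintegral_prod _ (by fun_prop)]
  refine lintegral_congr fun a => lintegral_congr fun z => congrArg Φ ?_
  exact Fin.insertNth_zero' a z

lemma isProbabilityMeasure_bergmanMeasurePi {β : ℝ} (hβ : 1 < β) (n : ℕ) :
    IsProbabilityMeasure (bergmanMeasurePi n β) := by
  have := isProbabilityMeasure_bergmanMeasure hβ
  rw [bergmanMeasurePi]; infer_instance

lemma ae_norm_le_one_bergmanMeasure (β : ℝ) : ∀ᵐ z ∂bergmanMeasure β, ‖z‖ ≤ 1 := by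
  refine (withDensity_absolutelyContinuous _ _).ae_le ?_
  filter_upwards [ae_restrict_mem measurableSet_ball] with z hz
  exact (mem_ball_zero_iff.1 hz).le

lemma ae_norm_le_one_bergmanMeasurePi {β : ℝ} (hβ : 1 < β) (n : ℕ) :
    ∀ᵐ z ∂bergmanMeasurePi n β, ‖z‖ ≤ 1 := by
  have := isProbabilityMeasure_bergmanMeasure hβ
  have h : ∀ᵐ z ∂bergmanMeasurePi n β, ∀ i, ‖z i‖ ≤ 1 := by
    rw [ae_all_iff]
    intro i
    exact (Measure.tendsto_eval_ae_ae (μ := fun _ : Fin n => bergmanMeasure β) (i := i)).eventually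
      (ae_norm_le_one_bergmanMeasure β)
  filter_upwards [h] with z hz
  exact (pi_norm_le_iff_of_nonneg zero_le_one).2 hz

lemma exists_norm_le_on_closedBall {n : ℕ} {f : (Fin n → ℂ) → ℂ} (hf : Continuous f) :
    ∃ C : ℝ, ∀ z, ‖z‖ ≤ 1 → ‖f z‖ ≤ C := by
  obtain ⟨C, hC⟩ := (isCompact_closedBall (0 : Fin n → ℂ) 1).exists_bound_of_continuousOn
    hf.continuousOn
  exact ⟨C, fun z hz => hC z (mem_closedBall_zero_iff.2 hz)⟩

/-- The `n`-variable hypercontractive inequality between weighted Bergman spaces. -/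
theorem lintegral_bergmanMeasurePi_hypercontractive
    {α β p q : ℝ} (hα : 1 < α) (hβ : 1 < β) (hp : 0 < p) (hpq : p ≤ q) (hq : 2 ≤ q)
    (hle : β * p ≤ α * q) {r : ℝ} (hr : 0 ≤ r) (hr1 : r ≤ 1) (hr2 : r ^ 2 = β * p / (α * q))
    (n : ℕ) {f : (Fin n → ℂ) → ℂ} (hf : Differentiable ℂ f) :
    ∫⁻ z, ‖f ((r : ℂ) • z)‖ₑ ^ q ∂bergmanMeasurePi n β
      ≤ (∫⁻ z, ‖f z‖ₑ ^ p ∂bergmanMeasurePi n α) ^ (q / p) := by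
  have hq0 : 0 < q := by linarith
  have := isProbabilityMeasure_bergmanMeasure hα
  have := isProbabilityMeasure_bergmanMeasure hβ
  have := isProbabilityMeasure_bergmanMeasurePi hα
  have := isProbabilityMeasure_bergmanMeasurePi hβ
  induction n with
  | zero =>
    have h : ∀ z : Fin 0 → ℂ, f z = f 0 := fun z => by rw [Subsingleton.elim z 0]
    simp only [h, lintegral_const, measure_univ, mul_one]
    rw [← ENNReal.rpow_mul, mul_div_cancel₀ _ hp.ne']
  | succ n ih =>
    have hfc := hf.continuous
    have hcons : Continuous fun x : (Fin n → ℂ) × ℂ => f (Fin.cons x.2 ((r : ℂ) • x.1)) := by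
      fun_prop
    set F : (Fin n → ℂ) → ℂ → ENNReal := fun z a => ‖f (Fin.cons a ((r : ℂ) • z))‖ₑ ^ p with hF
    have hFm : Measurable (Function.uncurry F) := hcons.measurable.enorm.pow_const p
    have hs : 1 ≤ q / p := (one_le_div hp).2 hpq
    have hfin : ∫⁻ z, (∫⁻ a, F z a ∂bergmanMeasure α) ^ (q / p) ∂bergmanMeasurePi n β ≠ ⊤ := by
      obtain ⟨C, hC⟩ := exists_norm_le_on_closedBall hfc
      have hle : ∀ᵐ z ∂bergmanMeasurePi n β, (∫⁻ a, F z a ∂bergmanMeasure α) ^ (q / p)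
          ≤ (ENNReal.ofReal C ^ p) ^ (q / p) := by
        filter_upwards [ae_norm_le_one_bergmanMeasurePi hβ n] with z hz
        refine ENNReal.rpow_le_rpow ?_ (by positivity)
        have h1 : ∀ᵐ a ∂bergmanMeasure α, F z a ≤ ENNReal.ofReal C ^ p := by
          filter_upwards [ae_norm_le_one_bergmanMeasure α] with a ha
          refine ENNReal.rpow_le_rpow ?_ hp.le
          rw [← ofReal_norm]
          refine ENNReal.ofReal_le_ofReal (hC _ ?_)
          rw [pi_norm_le_iff_of_nonneg zero_le_one]
          refine Fin.cases ha fun i => ?_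
          have h2 : ‖z i‖ ≤ 1 := (norm_le_pi_norm z i).trans hz
          simp only [Fin.cons_succ, Pi.smul_apply, smul_eq_mul, norm_mul, Complex.norm_real,
            Real.norm_eq_abs, abs_of_nonneg hr]
          exact mul_le_one₀ hr1 (norm_nonneg _) h2
        exact (lintegral_mono_ae h1).trans_eq (by simp)
      refine ((lintegral_mono_ae hle).trans_lt ?_).ne
      rw [lintegral_const, measure_univ, mul_one, ← ENNReal.rpow_mul]
      exact ENNReal.rpow_lt_top_of_nonneg (by positivity) ENNReal.ofReal_ne_top
    have hm1 : Measurable fun z : Fin (n + 1) → ℂ => ‖f ((r : ℂ) • z)‖ₑ ^ q :=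
      (hfc.comp (continuous_const_smul (r : ℂ))).measurable.enorm.pow_const q
    have hm2 : Measurable fun z : Fin (n + 1) → ℂ => ‖f z‖ₑ ^ p := hfc.measurable.enorm.pow_const p
    rw [lintegral_bergmanMeasurePi_succ hβ n hm1, lintegral_bergmanMeasurePi_succ hα n hm2,
      lintegral_lintegral_swap]
    swap
    · refine (hm1.comp ?_).aemeasurable
      have h : Continuous fun x : ℂ × (Fin n → ℂ) => (Fin.cons x.1 x.2 : Fin (n + 1) → ℂ) := by
        fun_prop
      exact h.measurable
    calc _ ≤ ∫⁻ z, (∫⁻ a, F z a ∂bergmanMeasure α) ^ (q / p) ∂bergmanMeasurePi n β := by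
          refine lintegral_mono fun z => ?_
          have h1 : Differentiable ℂ fun a : ℂ => f (Fin.cons a ((r : ℂ) • z)) := by
            refine hf.comp (differentiable_pi.2 (Fin.cases ?_ fun i => ?_))
            · exact differentiable_id
            · exact differentiable_const _
          refine le_trans (le_of_eq (lintegral_congr fun a => ?_))
            (lintegral_bergmanMeasure_hypercontractive h1 hα hβ hp hpq hq hle hr hr2)
          congr 3
          ext i
          refine Fin.cases ?_ (fun i => ?_) i <;> simp
      _ ≤ _ := lintegral_lintegral_rpow_le hFm hs hfin
      _ ≤ _ := by
          refine ENNReal.rpow_le_rpow (lintegral_mono fun a => ?_) (by positivity)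
          have h1 : Differentiable ℂ fun z : Fin n → ℂ => f (Fin.cons a z) := by
            refine hf.comp (differentiable_pi.2 (Fin.cases ?_ fun i => ?_))
            · exact differentiable_const _
            · exact differentiable_apply i
          have h2 : ∀ z, F z a ^ (q / p) = ‖f (Fin.cons a ((r : ℂ) • z))‖ₑ ^ q := fun z => by
            rw [hF, ← ENNReal.rpow_mul, mul_div_cancel₀ _ hp.ne']
          simp only [h2]
          refine (ENNReal.rpow_le_rpow (ih h1) (by positivity)).trans_eq ?_
          rw [← ENNReal.rpow_mul, mul_one_div_cancel (by positivity), ENNReal.rpow_one]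

lemma measurePreserving_mul_bergmanMeasure (β : ℝ) (c : Circle) :
    MeasurePreserving (fun z : ℂ => c * z) (bergmanMeasure β) (bergmanMeasure β) := by
  have hm : Measurable fun z : ℂ => c * z := by fun_prop
  refine ⟨hm, Measure.ext_of_lintegral _ fun g hg => ?_⟩
  rw [lintegral_map hg hm, lintegral_bergmanMeasure, lintegral_bergmanMeasure,
    ← lintegral_indicator measurableSet_ball, ← lintegral_indicator measurableSet_ball]
  have hM : Measurable ((ball (0 : ℂ) 1).indicator fun z =>
      ENNReal.ofReal ((β - 1) * (1 - ‖z‖ ^ 2) ^ (β - 2) / Real.pi) * g z) :=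
    Measurable.indicator (by fun_prop) measurableSet_ball
  rw [← (rotation c).measurePreserving.lintegral_comp hM]
  refine lintegral_congr fun z => ?_
  simp [indicator, rotation_apply, Circle.norm_coe]

lemma lintegral_bergmanMeasurePi_rotation {β : ℝ} (hβ : 1 < β) (n : ℕ)
    {Φ : (Fin n → ℂ) → ENNReal} (hΦ : Measurable Φ) (c : Circle) :
    ∫⁻ z, Φ ((c : ℂ) • z) ∂bergmanMeasurePi n β = ∫⁻ z, Φ z ∂bergmanMeasurePi n β := by
  have := isProbabilityMeasure_bergmanMeasure hβ
  exact (measurePreserving_pi (fun _ : Fin n => bergmanMeasure β) (fun _ => bergmanMeasure β)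
    fun _ => measurePreserving_mul_bergmanMeasure β c).lintegral_comp hΦ

lemma lintegral_bergmanMeasurePi_eq_circleMean {β : ℝ} (hβ : 1 < β) {n : ℕ}
    {f : (Fin n → ℂ) → ℂ} (hf : Continuous f) {q : ℝ} (hq : 0 < q) {r : ℝ} (hr : 0 ≤ r) :
    ENNReal.ofReal (2 * Real.pi) * ∫⁻ z, ‖f ((r : ℂ) • z)‖ₑ ^ q ∂bergmanMeasurePi n β
      = ∫⁻ z, ENNReal.ofReal (circleMean (fun w => f (w • z)) q (r ^ 2)) ∂bergmanMeasurePi n β := by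
  have := isProbabilityMeasure_bergmanMeasurePi hβ n
  have hm : Measurable fun z : Fin n → ℂ => ‖f ((r : ℂ) • z)‖ₑ ^ q :=
    (hf.comp (continuous_const_smul (r : ℂ))).measurable.enorm.pow_const q
  have h1 : ∀ z : Fin n → ℂ, ENNReal.ofReal (circleMean (fun w => f (w • z)) q (r ^ 2))
      = ∫⁻ θ in Ioo (-Real.pi) Real.pi, ‖f ((r : ℂ) • (Circle.exp θ : ℂ) • z)‖ₑ ^ q := fun z => by
    rw [← setLIntegral_enorm_circle (by fun_prop) hq, Real.sqrt_sq hr]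
    simp only [smul_smul, Circle.coe_exp]
  simp only [h1]
  rw [lintegral_lintegral_swap]
  · simp only [lintegral_bergmanMeasurePi_rotation hβ n hm, lintegral_const]
    rw [mul_comm, Measure.restrict_apply_univ, Real.volume_Ioo]
    congr 2; ring
  · have h2 : Continuous fun x : (Fin n → ℂ) × ℝ => f ((r : ℂ) • (Circle.exp x.2 : ℂ) • x.1) := by
      fun_prop
    exact (h2.measurable.enorm.pow_const q).aemeasurable

lemma circleMean_reflect {g : Polynomial ℂ} {m : ℕ} (hg : g.natDegree ≤ m) (q : ℝ) {r : ℝ}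
    (hr : 0 < r) : r ^ (m * q) * circleMean (fun w => (g.reflect m).eval w) q (1 / r ^ 2)
      = circleMean (fun w => g.eval w) q (r ^ 2) := by
  have h := intervalIntegral.integral_comp_neg (a := -Real.pi) (b := Real.pi)
    fun θ : ℝ => ‖g.eval (√(r ^ 2) * Complex.exp (θ * Complex.I))‖ ^ q
  rw [neg_neg] at h
  rw [circleMean, circleMean, ← h, ← intervalIntegral.integral_const_mul]
  congr 1
  ext θ
  have hx : (r : ℂ) * Complex.exp (-θ * Complex.I) ≠ 0 :=
    mul_ne_zero (by exact_mod_cast hr.ne') (Complex.exp_ne_zero _)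
  let := invertibleOfNonzero hx
  have h2 := Polynomial.eval₂_reflect_mul_pow (RingHom.id ℂ)
    ((r : ℂ) * Complex.exp (-θ * Complex.I)) m g hg
  rw [invOf_eq_inv, ← Polynomial.eval, ← Polynomial.eval] at h2
  rw [Real.sqrt_sq hr.le, Complex.ofReal_neg, ← h2, norm_mul, norm_pow, norm_mul,
    ← Complex.ofReal_neg, Complex.norm_exp_ofReal_mul_I, Complex.norm_real, Real.norm_of_nonneg hr.le,
    mul_one, Real.mul_rpow (norm_nonneg _) (by positivity), mul_comm, Real.rpow_mul hr.le,
    Real.rpow_natCast, one_div, Real.sqrt_inv, Real.sqrt_sq hr.le]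
  congr 4
  rw [mul_inv, ← Complex.exp_neg, Complex.ofReal_inv]
  push_cast
  ring_nf

lemma circleMean_polynomial_dilation {g : Polynomial ℂ} {m : ℕ} (hg : g.natDegree ≤ m) {q : ℝ}
    (hq : 0 < q) {r : ℝ} (hr : 0 < r) (hr1 : r ≤ 1) :
    r ^ (m * q) * circleMean (fun w => g.eval w) q 1 ≤ circleMean (fun w => g.eval w) q (r ^ 2) := by
  have h1 := circleMean_reflect hg q one_pos
  rw [Real.one_rpow, one_mul, one_pow, div_one] at h1
  rw [← h1, ← circleMean_reflect hg q hr]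
  refine mul_le_mul_of_nonneg_left (circleMean_mono (g.reflect m).differentiable hq one_pos ?_)
    (by positivity)
  rw [le_div_iff₀ (by positivity), one_mul]
  exact pow_le_one₀ hr.le hr1

lemma exists_polynomial_eval_smul {n : ℕ} (P : MvPolynomial (Fin n) ℂ) (z : Fin n → ℂ) :
    ∃ g : Polynomial ℂ, g.natDegree ≤ P.totalDegree ∧
      ∀ w, g.eval w = MvPolynomial.eval (w • z) P := by
  refine ⟨MvPolynomial.aeval (fun i => Polynomial.C (z i) * Polynomial.X) P, ?_, fun w => ?_⟩
  · simpa using MvPolynomial.aeval_natDegree_le P le_rfl _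
      fun i => (Polynomial.natDegree_C_mul_le _ _).trans Polynomial.natDegree_X_le
  · rw [← Polynomial.coe_aeval_eq_eval, MvPolynomial.comp_aeval_apply,
      ← MvPolynomial.coe_aeval_eq_eval]
    have h : (fun i => Polynomial.aeval w (Polynomial.C (z i) * Polynomial.X)) = w • z := by
      ext i
      rw [map_mul, Polynomial.aeval_C, Polynomial.aeval_X, mul_comm]
      rfl
    rw [h]
    rfl

lemma lintegral_bergmanMeasurePi_dilation_ge {β : ℝ} (hβ : 1 < β) {n : ℕ}
    (P : MvPolynomial (Fin n) ℂ) {q : ℝ} (hq : 0 < q) {r : ℝ} (hr : 0 < r) (hr1 : r ≤ 1) :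
    ENNReal.ofReal (r ^ (P.totalDegree * q)) *
        ∫⁻ z, ‖MvPolynomial.eval z P‖ₑ ^ q ∂bergmanMeasurePi n β
      ≤ ∫⁻ z, ‖MvPolynomial.eval ((r : ℂ) • z) P‖ₑ ^ q ∂bergmanMeasurePi n β := by
  have hc : Continuous fun z => MvPolynomial.eval z P := P.continuous_eval
  have h1 := lintegral_bergmanMeasurePi_eq_circleMean hβ hc hq zero_le_one
  have h2 := lintegral_bergmanMeasurePi_eq_circleMean hβ hc hq hr.le
  simp only [Complex.ofReal_one, one_smul, one_pow] at h1
  have hpi : ENNReal.ofReal (2 * Real.pi) ≠ 0 := by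
    simpa using Real.pi_pos
  refine (ENNReal.mul_le_mul_iff_right hpi ENNReal.ofReal_ne_top).1 ?_
  rw [mul_left_comm, h1, h2, ← lintegral_const_mul' _ _ ENNReal.ofReal_ne_top]
  refine lintegral_mono fun z => ?_
  rw [← ENNReal.ofReal_mul (by positivity)]
  obtain ⟨g, hg, hgz⟩ := exists_polynomial_eval_smul P z
  simp only [← hgz]
  exact ENNReal.ofReal_le_ofReal (circleMean_polynomial_dilation hg hq hr hr1)

lemma ofReal_integral_bergmanMeasurePi {β : ℝ} (hβ : 1 < β) {n : ℕ} {f : (Fin n → ℂ) → ℂ}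
    (hf : Continuous f) {q : ℝ} (hq : 0 < q) :
    ENNReal.ofReal (∫ z, ‖f z‖ ^ q ∂bergmanMeasurePi n β)
      = ∫⁻ z, ‖f z‖ₑ ^ q ∂bergmanMeasurePi n β := by
  have := isProbabilityMeasure_bergmanMeasurePi hβ n
  obtain ⟨C, hC⟩ := exists_norm_le_on_closedBall hf
  have hi : Integrable (fun z => ‖f z‖ ^ q) (bergmanMeasurePi n β) := by
    refine Integrable.of_bound
      (hf.norm.rpow_const fun _ => Or.inr hq.le).aestronglyMeasurable (C ^ q) ?_
    filter_upwards [ae_norm_le_one_bergmanMeasurePi hβ n] with z hz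
    rw [Real.norm_of_nonneg (by positivity)]
    exact Real.rpow_le_rpow (norm_nonneg _) (hC z hz) hq.le
  rw [ofReal_integral_eq_lintegral_ofReal hi (Filter.Eventually.of_forall fun _ => by positivity)]
  simp only [enorm_rpow_eq_ofReal _ hq.le]

end

/-- Theorem 1.3 (Nikol'skiĭ-type inequality for weighted Bergman spaces): for
`1 < α, β < ∞`, `0 < p ≤ q < ∞`, `q ≥ 2` and `βp ≤ αq`, every complex polynomial `P`
in `n` variables of degree `m` satisfies
`‖P‖_{A_β^q(𝔻ⁿ)} ≤ (√(αq/(βp)))^m ‖P‖_{A_α^p(𝔻ⁿ)}`. -/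
theorem nikolskii_bergman
    (α β p q : ℝ) (hα : 1 < α) (hβ : 1 < β) (hp : 0 < p) (hpq : p ≤ q)
    (hq2 : 2 ≤ q) (hβpαq : β * p ≤ α * q) :
    ∀ m n : ℕ, 0 < m → 0 < n → ∀ P : MvPolynomial (Fin n) ℂ, P.totalDegree = m →
      (∫ z, ‖MvPolynomial.eval z P‖ ^ q ∂(bergmanMeasurePi n β)) ^ (1 / q) ≤
        Real.sqrt (α * q / (β * p)) ^ m *
          (∫ z, ‖MvPolynomial.eval z P‖ ^ p ∂(bergmanMeasurePi n α)) ^ (1 / p) := by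
  rintro m n - - P rfl
  have hq : 0 < q := by linarith
  have hα0 : 0 < α := by linarith
  have hβ0 : 0 < β := by linarith
  set r : ℝ := √(β * p / (α * q)) with hr_def
  have hr : 0 < r := Real.sqrt_pos.2 (by positivity)
  have hr1 : r ≤ 1 := Real.sqrt_le_one.2 ((div_le_one (by positivity)).2 hβpαq)
  have hr2 : r ^ 2 = β * p / (α * q) := Real.sq_sqrt (by positivity)
  have hrinv : √(α * q / (β * p)) = r⁻¹ := by rw [hr_def, ← Real.sqrt_inv, inv_div]
  have hc : Continuous fun z => MvPolynomial.eval z P := P.continuous_eval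
  have hd : Differentiable ℂ fun z => MvPolynomial.eval z P := fun z =>
    (AnalyticOnNhd.eval_mvPolynomial P z (Set.mem_univ z)).differentiableAt
  have hle := (lintegral_bergmanMeasurePi_dilation_ge hβ P hq hr hr1).trans
    (lintegral_bergmanMeasurePi_hypercontractive hα hβ hp hpq hq2 hβpαq hr.le hr1 hr2 n hd)
  rw [← ofReal_integral_bergmanMeasurePi hβ hc hq, ← ofReal_integral_bergmanMeasurePi hα hc hp] at hle
  set a := ∫ z, ‖MvPolynomial.eval z P‖ ^ q ∂bergmanMeasurePi n β
  set b := ∫ z, ‖MvPolynomial.eval z P‖ ^ p ∂bergmanMeasurePi n α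
  have ha : 0 ≤ a := integral_nonneg fun _ => by positivity
  have hb : 0 ≤ b := integral_nonneg fun _ => by positivity
  rw [← ENNReal.ofReal_mul (by positivity), ENNReal.ofReal_rpow_of_nonneg hb (by positivity),
    ENNReal.ofReal_le_ofReal_iff (by positivity)] at hle
  have h := Real.rpow_le_rpow (by positivity) hle (z := 1 / q) (by positivity)
  rw [Real.mul_rpow (by positivity) ha, ← Real.rpow_mul hr.le, ← Real.rpow_mul hb,
    mul_assoc, mul_one_div_cancel hq.ne', mul_one, Real.rpow_natCast,
    show q / p * (1 / q) = 1 / p by field_simp] at h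
  rw [hrinv, inv_pow, ← div_eq_inv_mul, le_div_iff₀ (by positivity), mul_comm]
  exact h
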